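/- arXiv:math/9304212 — 2 statements merged into one kernel-verified Lean document; each statement's English description precedes it below -/
import Mathlib

section
/- Let K be an algebraically closed field and suppose each Cartesian power K^n carries a Noetherian topology τ_n such that the family (τ_n) is a Zariski geometry on K and every Zariski-closed subset of K^n is τ_n-closed. Then for every n, every τ_n-closed subset of K^n is Zariski-closed; that is, the topology τ_n coincides with the Zariski topology on K^n for every n. -/
open Topology

/-- A subset of `K^n` is *Zariski-closed* (an affine algebraic set) if it is the common
zero set of a set of polynomials in `n` variables. -/
def ZariskiClosedSet (K : Type*) [Field K] {n : ℕ} (C : Set (Fin n → K)) : Prop :=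
  ∃ S : Set (MvPolynomial (Fin n) K), C = {x | ∀ f ∈ S, MvPolynomial.eval x f = 0}

/-- The Zariski topology on `K^n`: the topology whose closed sets are the affine
algebraic sets. -/
def zariskiTopology (K : Type*) [Field K] (n : ℕ) : TopologicalSpace (Fin n → K) :=
  TopologicalSpace.generateFrom {U | ZariskiClosedSet K Uᶜ}

/-- The dimension of a subset `S` of a topological space: the topological Krull
dimension of `S` with the subspace topology (the maximal length of a chain of
irreducible closed subsets). -/
noncomputable def setKrullDim {X : Type*} (t : TopologicalSpace X) (S : Set X) : WithBot ℕ∞ :=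
  @topologicalKrullDim S (t.induced Subtype.val)

/-- `T` is an irreducible component of `S` (w.r.t. the topology `t`) if `T` is a maximal
irreducible subset of `S`. -/
def IsIrredComponentOf {X : Type*} (t : TopologicalSpace X) (T S : Set X) : Prop :=
  Maximal (fun T => T ⊆ S ∧ @IsIrreducible X t T) T

/-- A *Zariski geometry* on a set `X`: a Noetherian topology on each Cartesian power
`X^n` satisfying axioms (Z0)-(Z3). -/
structure ZariskiGeometry (X : Type*) where
  τ : ∀ n : ℕ, TopologicalSpace (Fin n → X)
  noetherian : ∀ n, @TopologicalSpace.NoetherianSpace (Fin n → X) (τ n)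
  /-- (Z0): every map `X^n → X^m` each of whose coordinates is a constant or a
  coordinate projection is continuous. -/
  Z0_cont : ∀ (n m : ℕ) (g : Fin m → (Fin n ⊕ X)),
    Continuous[τ n, τ m] (fun x i => Sum.elim (fun j => x j) id (g i))
  /-- (Z0): the diagonals are closed. -/
  Z0_diag : ∀ (n : ℕ) (i j : Fin n), IsClosed[τ n] {x | x i = x j}
  /-- (Z1): for a (nonempty) closed `C ⊆ X^n` and a coordinate projection
  `π : X^n → X^k`, there is a proper closed subset `F` of `cl(π C)` with
  `cl(π C) \ F ⊆ π C`. -/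
  Z1 : ∀ (n k : ℕ) (h : k ≤ n) (C : Set (Fin n → X)), IsClosed[τ n] C → C.Nonempty →
    ∃ F : Set (Fin k → X), IsClosed[τ k] F ∧
      F ⊂ closure[τ k] ((fun x => x ∘ Fin.castLE h) '' C) ∧
      closure[τ k] ((fun x => x ∘ Fin.castLE h) '' C) \ F ⊆ (fun x => x ∘ Fin.castLE h) '' C
  /-- (Z2): `X` is irreducible. -/
  Z2_irred : @IrreducibleSpace (Fin 1 → X) (τ 1)
  /-- (Z2): uniform one-dimensionality. -/
  Z2 : ∀ (n : ℕ) (C : Set (Fin (n + 1) → X)), IsClosed[τ (n + 1)] C →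
    ∃ m : ℕ, ∀ a : Fin n → X, {b : X | Fin.snoc a b ∈ C} = Set.univ ∨
      ({b : X | Fin.snoc a b ∈ C}.Finite ∧ {b : X | Fin.snoc a b ∈ C}.ncard ≤ m)
  /-- (Z3) (Dimension theorem): every irreducible component of the intersection of a
  closed irreducible `U ⊆ X^n` with a diagonal has dimension `≥ dim U - 1`. -/
  Z3 : ∀ (n : ℕ) (U : Set (Fin n → X)) (i j : Fin n), IsClosed[τ n] U →
    @IsIrreducible _ (τ n) U →
    ∀ T : Set (Fin n → X), IsIrredComponentOf (τ n) T (U ∩ {x | x i = x j}) →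
      setKrullDim (τ n) U ≤ setKrullDim (τ n) T + 1


open Topology
set_option linter.unusedSectionVars false
set_option linter.deprecated false
set_option linter.style.haveILetI false

namespace ZGeo

universe u

/-- Package of the hypotheses of the theorem. -/
class ZG (K : Type u) [Field K] where
  Z : ZariskiGeometry K
  hrefine : ∀ (n : ℕ) (C : Set (Fin n → K)), ZariskiClosedSet K C → IsClosed[Z.τ n] C
  hinf : Infinite K

/-- A type identified with a power of `K`. -/
class Var (K : outParam (Type u)) (X : Type u) where
  n : ℕ
  e : X ≃ (Fin n → K)

/-- dimension of the ambient power -/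
def dm {K : Type u} (X : Type u) [Var K X] : ℕ := Var.n X

variable {K : Type u} [Field K] [ZG K]

instance instVarK : Var K K where
  n := 1
  e := (Equiv.funUnique (Fin 1) K).symm

instance instVarProd {X Y : Type u} [Var K X] [Var K Y] : Var K (X × Y) where
  n := Var.n X + Var.n Y
  e := (Equiv.prodCongr Var.e Var.e).trans (Fin.appendEquiv (Var.n X) (Var.n Y))

noncomputable instance instVarPi {κ : Type} [Fintype κ] {X : Type u} [Var K X] : Var K (κ → X) where
  n := Fintype.card κ * Var.n X
  e := (Equiv.piCongrRight (fun _ : κ => (Var.e : X ≃ _))).trans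
    ((Equiv.curry κ (Fin (Var.n X)) K).symm.trans
    (Equiv.arrowCongr (((Fintype.equivFin κ).prodCongr (Equiv.refl _)).trans finProdFinEquiv)
      (Equiv.refl K)))

variable {X Y W V : Type u} [Var K X] [Var K Y] [Var K W] [Var K V]

/-- closed subsets -/
def Cl (S : Set X) : Prop :=
  IsClosed[(ZG.Z : ZariskiGeometry K).τ (Var.n X)] ((Var.e : X ≃ _).symm ⁻¹' S)

/-- coordinate-type maps -/
def IsCo (f : X → Y) : Prop :=
  ∃ g : Fin (Var.n Y) → (Fin (Var.n X) ⊕ K),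
    ∀ x i, Var.e (f x) i = Sum.elim (fun j => Var.e x j) id (g i)

theorem IsCo.preimage {f : X → Y} (hf : IsCo f) {C : Set Y} (hC : Cl C) : Cl (f ⁻¹' C) := by
  obtain ⟨g, hg⟩ := hf
  have := (ZG.Z : ZariskiGeometry K).Z0_cont (Var.n X) (Var.n Y) g
  have h2 := (@continuous_iff_isClosed _ _ (_) (_) _).1 this _ hC
  unfold Cl
  convert h2 using 1
  ext x
  simp only [Set.mem_preimage]
  have : f (Var.e.symm x) = (Var.e : Y ≃ _).symm (fun i => Sum.elim (fun j => x j) id (g i)) := by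
    rw [Equiv.eq_symm_apply]
    ext i
    rw [hg]
    simp
  rw [this]

theorem IsCo.mk' {f : X → Y} (h : ∀ i, (∃ j, ∀ x, Var.e (f x) i = Var.e x j) ∨
    ∃ c : K, ∀ x, Var.e (f x) i = c) : IsCo f := by
  have : ∀ i, ∃ g : Fin (Var.n X) ⊕ K, ∀ x, Var.e (f x) i = Sum.elim (fun j => Var.e x j) id g := by
    intro i
    rcases h i with ⟨j, hj⟩ | ⟨c, hc⟩
    · exact ⟨.inl j, hj⟩
    · exact ⟨.inr c, hc⟩
  choose g hg using this
  exact ⟨g, fun x i => hg i x⟩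

theorem IsCo.dest {f : X → Y} (h : IsCo f) (i) : (∃ j, ∀ x, Var.e (f x) i = Var.e x j) ∨
    ∃ c : K, ∀ x, Var.e (f x) i = c := by
  obtain ⟨g, hg⟩ := h
  rcases hgi : g i with j | c
  · left; exact ⟨j, fun x => by rw [hg, hgi]; rfl⟩
  · right; exact ⟨c, fun x => by rw [hg, hgi]; rfl⟩

theorem e_prod_left (p : X × Y) (i : Fin (Var.n X)) :
    Var.e p (Fin.castAdd (Var.n Y) i) = Var.e p.1 i := by
  show Fin.append _ _ _ = _
  rw [Fin.append_left]; rfl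

theorem e_prod_right (p : X × Y) (i : Fin (Var.n Y)) :
    Var.e p (Fin.natAdd (Var.n X) i) = Var.e p.2 i := by
  show Fin.append _ _ _ = _
  rw [Fin.append_right]; rfl

theorem e_pi {κ : Type} [Fintype κ] (p : κ → X) (i : κ) (j : Fin (Var.n X)) :
    Var.e p (finProdFinEquiv (Fintype.equivFin κ i, j)) = Var.e (p i) j := by
  simp [Var.e, Equiv.arrowCongr]

theorem IsCo.id : IsCo (fun x : X => x) := .mk' fun i => .inl ⟨i, fun _ => rfl⟩
theorem IsCo.const (c : Y) : IsCo (fun _ : X => c) := .mk' fun _ => .inr ⟨_, fun _ => rfl⟩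
theorem IsCo.fst : IsCo (Prod.fst : X × Y → X) :=
  .mk' fun i => .inl ⟨_, fun x => (e_prod_left x i).symm⟩
theorem IsCo.snd : IsCo (Prod.snd : X × Y → Y) :=
  .mk' fun i => .inl ⟨_, fun x => (e_prod_right x i).symm⟩
theorem IsCo.prodMk {f : X → Y} {g : X → W} (hf : IsCo f) (hg : IsCo g) :
    IsCo (fun x => (f x, g x)) := .mk' fun i => by
  refine Fin.addCases (motive := fun i => (∃ j, ∀ x, Var.e (f x, g x) i = Var.e x j) ∨
    ∃ c : K, ∀ x, Var.e (f x, g x) i = c) (fun i => ?_) (fun i => ?_) i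
  · simp only [e_prod_left]; exact hf.dest i
  · simp only [e_prod_right]; exact hg.dest i
theorem IsCo.comp {f : X → Y} {g : Y → W} (hg : IsCo g) (hf : IsCo f) :
    IsCo (fun x => g (f x)) := .mk' fun i => by
  rcases hg.dest i with ⟨j, hj⟩ | ⟨c, hc⟩
  · rcases hf.dest j with ⟨k, hk⟩ | ⟨c, hc⟩
    · exact .inl ⟨k, fun x => by rw [hj, hk]⟩
    · exact .inr ⟨c, fun x => by rw [hj, hc]⟩
  · exact .inr ⟨c, fun x => hc _⟩
theorem IsCo.apply {κ : Type} [Fintype κ] (i : κ) : IsCo (fun p : κ → X => p i) :=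
  .mk' fun j => .inl ⟨_, fun x => (e_pi x i j).symm⟩
theorem IsCo.pi {κ : Type} [Fintype κ] {f : X → κ → Y} (hf : ∀ i, IsCo (fun x => f x i)) :
    IsCo f := .mk' fun j => by
  obtain ⟨⟨i, j⟩, rfl⟩ := (((Fintype.equivFin κ).prodCongr (Equiv.refl _)).trans finProdFinEquiv).surjective j
  have : ∀ x, Var.e (f x) ((((Fintype.equivFin κ).prodCongr (Equiv.refl _)).trans finProdFinEquiv) (i, j)) = Var.e (f x i) j := by
    intro x; exact e_pi _ _ _
  simp only [this]
  exact (hf i).dest j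
theorem IsCo.comp_perm {κ κ' : Type} [Fintype κ] [Fintype κ'] (h : κ → κ') :
    IsCo (fun p : κ' → X => fun i => p (h i)) := .pi fun i => .apply (h i)

/-- strongly continuous maps -/
@[fun_prop]
def SC (f : X → Y) : Prop :=
  ∀ (V : Type u) [Var K V] (C : Set (V × Y)), Cl C → Cl {p : V × X | (p.1, f p.2) ∈ C}

theorem IsCo.sc {f : X → Y} (hf : IsCo f) : SC f := by
  intro V _ C hC
  exact IsCo.preimage (IsCo.prodMk IsCo.fst (hf.comp IsCo.snd)) hC

theorem Cl.preimage {f : X → Y} {C : Set Y} (hC : Cl C) (hf : SC f) : Cl {x | f x ∈ C} := by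
  have h1 : Cl {p : X × Y | p.2 ∈ C} := IsCo.preimage IsCo.snd hC
  have h2 := hf _ _ h1
  exact IsCo.preimage (IsCo.prodMk IsCo.id IsCo.id) h2

@[fun_prop] theorem SC.id : SC (fun x : X => x) := IsCo.id.sc
@[fun_prop] theorem SC.const (c : Y) : SC (fun _ : X => c) := (IsCo.const c).sc
@[fun_prop] theorem SC.comp {g : Y → W} {f : X → Y} (hg : SC g) (hf : SC f) :
    SC (fun x => g (f x)) := by
  intro V _ C hC
  exact hf _ _ (hg _ _ hC)
theorem SC.fst' : SC (Prod.fst : X × Y → X) := IsCo.fst.sc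
theorem SC.snd' : SC (Prod.snd : X × Y → Y) := IsCo.snd.sc
@[fun_prop] theorem SC.fst {f : X → Y × W} (hf : SC f) : SC (fun x => (f x).1) := SC.fst'.comp hf
@[fun_prop] theorem SC.snd {f : X → Y × W} (hf : SC f) : SC (fun x => (f x).2) := SC.snd'.comp hf
@[fun_prop] theorem SC.prodMk {f : X → Y} {g : X → W} (hf : SC f) (hg : SC g) :
    SC (fun x => (f x, g x)) := by
  intro V _ C hC
  have h1 : Cl {p : (V × Y) × W | (p.1.1, p.1.2, p.2) ∈ C} := IsCo.preimage (f := fun p : (V × Y) × W => (p.1.1, p.1.2, p.2))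
    (.prodMk (IsCo.fst.comp .fst) (.prodMk (IsCo.snd.comp .fst) .snd)) hC
  have h2 := hg _ _ h1
  have h3 : Cl {p : (V × X) × Y | ((p.1.1, p.2), p.1.2) ∈ _} := IsCo.preimage (f := fun p : (V × X) × Y => ((p.1.1, p.2), p.1.2))
    (.prodMk (.prodMk (IsCo.fst.comp .fst) .snd) (IsCo.snd.comp .fst)) h2
  have h4 := hf _ _ h3
  exact IsCo.preimage (f := fun p : V × X => ((p.1, p.2), p.2)) (.prodMk (.prodMk .fst .snd) .snd) h4

@[fun_prop] theorem SC.apply {κ : Type} [Fintype κ] (i : κ) : SC (fun p : κ → X => p i) := (IsCo.apply i).sc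

theorem Cl.inter {A B : Set X} (hA : Cl A) (hB : Cl B) : Cl (A ∩ B) :=
  @IsClosed.inter _ _ _ (_) hA hB
theorem Cl.union {A B : Set X} (hA : Cl A) (hB : Cl B) : Cl (A ∪ B) :=
  @IsClosed.union _ _ _ (_) hA hB
theorem Cl.univ : Cl (Set.univ : Set X) := @isClosed_univ _ (_)
theorem Cl.empty : Cl (∅ : Set X) := @isClosed_empty _ (_)
theorem Cl.sInter {A : Set (Set X)} (h : ∀ a ∈ A, Cl a) : Cl (⋂₀ A) := by
  unfold Cl
  rw [Set.preimage_sInter]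
  exact @isClosed_biInter _ _ (_) _ _ h
theorem Cl.iInter {ι : Sort*} {A : ι → Set X} (h : ∀ a, Cl (A a)) : Cl (⋂ i, A i) := by
  unfold Cl
  rw [Set.preimage_iInter]
  exact @isClosed_iInter _ _ (_) _ h
theorem Cl.all {ι : Sort*} {A : ι → X → Prop} (h : ∀ a, Cl {x | A a x}) : Cl {x | ∀ i, A i x} := by
  rw [Set.setOf_forall]; exact Cl.iInter h
theorem Cl.and {A B : X → Prop} (hA : Cl {x | A x}) (hB : Cl {x | B x}) : Cl {x | A x ∧ B x} :=
  hA.inter hB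
theorem Cl.or {A B : X → Prop} (hA : Cl {x | A x}) (hB : Cl {x | B x}) : Cl {x | A x ∨ B x} :=
  hA.union hB
theorem Cl.imp {A : Prop} {B : X → Prop} (hB : A → Cl {x | B x}) : Cl {x | A → B x} :=
  Cl.all hB
theorem Cl.biUnion {ι : Type*} {s : Set ι} (hs : s.Finite) {A : ι → Set X} (h : ∀ i ∈ s, Cl (A i)) :
    Cl (⋃ i ∈ s, A i) := by
  unfold Cl
  rw [Set.preimage_iUnion₂]
  exact @Set.Finite.isClosed_biUnion _ _ (_) _ _ hs h
theorem Cl.ex {ι : Type*} [Finite ι] {A : ι → X → Prop} (h : ∀ a, Cl {x | A a x}) :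
    Cl {x | ∃ i, A i x} := by
  have := Cl.biUnion (s := (Set.univ : Set ι)) Set.finite_univ (A := fun i => {x | A i x}) (fun i _ => h i)
  convert this using 1
  ext; simp

theorem Cl.coord (i j : Fin (Var.n X)) : Cl {x : X | Var.e x i = Var.e x j} := by
  have := (ZG.Z : ZariskiGeometry K).Z0_diag (Var.n X) i j
  unfold Cl
  convert this using 1
  ext; simp

theorem Cl.diag : Cl {p : X × X | p.1 = p.2} := by
  have : {p : X × X | p.1 = p.2} = {p | ∀ i, Var.e p (Fin.castAdd _ i) = Var.e p (Fin.natAdd _ i)} := by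
    ext p
    simp only [e_prod_left, e_prod_right, Set.mem_setOf_eq]
    rw [← funext_iff]; simp
  rw [this]
  exact Cl.all fun i => Cl.coord _ _

theorem Cl.eq {f g : X → Y} (hf : SC f) (hg : SC g) : Cl {x | f x = g x} :=
  Cl.preimage Cl.diag (hf.prodMk hg)

theorem Cl.singleton (c : X) : Cl {c} := Cl.eq .id (.const c)

@[fun_prop] theorem SC.pi {κ : Type} [Fintype κ] {f : X → κ → Y} (hf : ∀ i, SC (fun x => f x i)) :
    SC f := by
  classical
  have key : ∀ s : Finset κ, ∀ q : κ → Y, SC (fun x => fun i => if i ∈ s then f x i else q i) := by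
    intro s
    induction s using Finset.induction_on with
    | empty => intro q; simpa using SC.const q
    | insert a s ha ih =>
      intro q
      have h1 : SC (fun x => ((fun i => if i ∈ s then f x i else q i), f x a)) := (ih q).prodMk (hf a)
      have h2 : IsCo (fun p : (κ → Y) × Y => fun i => if i = a then p.2 else p.1 i) := by
        apply IsCo.pi; intro i
        by_cases h : i = a
        · simp only [h, if_true]; exact .snd
        · simp only [h, if_false]; exact (IsCo.apply i).comp .fst
      convert h2.sc.comp h1 using 1
      ext x i
      simp only [Finset.mem_insert]
      by_cases h : i = a
      · simp [h]
      · simp [h]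
  by_cases hX : Nonempty X
  · have := key Finset.univ (f hX.some)
    simpa using this
  · intro V _ C hC
    convert Cl.empty using 1
    ext p; exact (hX ⟨p.2⟩).elim

/-- closure -/
def cl (S : Set X) : Set X := ⋂₀ {C | Cl C ∧ S ⊆ C}

theorem cl_cl (S : Set X) : Cl (cl S) := Cl.sInter fun _ h => h.1
theorem sub_cl (S : Set X) : S ⊆ cl S := Set.subset_sInter fun _ h => h.2
theorem cl_sub {S C : Set X} (hC : Cl C) (h : S ⊆ C) : cl S ⊆ C := Set.sInter_subset_of_mem ⟨hC, h⟩
theorem cl_mono {S T : Set X} (h : S ⊆ T) : cl S ⊆ cl T := cl_sub (cl_cl T) (h.trans (sub_cl T))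
theorem Cl.cl_eq {C : Set X} (hC : Cl C) : cl C = C := (cl_sub hC subset_rfl).antisymm (sub_cl C)

/-- irreducible -/
def Irr (S : Set X) : Prop :=
  S.Nonempty ∧ ∀ A B : Set X, Cl A → Cl B → S ⊆ A ∪ B → S ⊆ A ∨ S ⊆ B

theorem Irr.singleton (c : X) : Irr {c} := by
  refine ⟨⟨c, rfl⟩, fun A B _ _ h => ?_⟩
  simpa using h

theorem Irr.image {S : Set X} (hS : Irr S) {f : X → Y} (hf : SC f) : Irr (f '' S) := by
  refine ⟨hS.1.image f, fun A B hA hB h => ?_⟩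
  rw [Set.image_subset_iff, Set.image_subset_iff]
  exact hS.2 _ _ (hA.preimage hf) (hB.preimage hf) (by rw [Set.image_subset_iff] at h; exact h)

theorem Irr.closure {S : Set X} (hS : Irr S) : Irr (cl S) := by
  refine ⟨hS.1.mono (sub_cl S), fun A B hA hB h => ?_⟩
  rcases hS.2 A B hA hB ((sub_cl S).trans h) with h | h
  · exact .inl (cl_sub hA h)
  · exact .inr (cl_sub hB h)

theorem Irr.biUnion {S : Set X} (hS : Irr S) {ι : Type*} {s : Set ι} (hs : s.Finite) {A : ι → Set X}
    (h : ∀ i ∈ s, Cl (A i)) (hSA : S ⊆ ⋃ i ∈ s, A i) : ∃ i ∈ s, S ⊆ A i := by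
  induction s, hs using Set.Finite.induction_on generalizing S with
  | empty => exfalso; simp at hSA; exact hS.1.ne_empty hSA
  | @insert a s ha hs ih =>
    rw [Set.biUnion_insert] at hSA
    rcases hS.2 _ _ (h a (by simp)) (Cl.biUnion hs fun i hi => h i (by simp [hi])) hSA with h1 | h1
    · exact ⟨a, by simp, h1⟩
    · obtain ⟨i, hi, h2⟩ := ih hS (fun i hi => h i (by simp [hi])) h1
      exact ⟨i, by simp [hi], h2⟩

/-- points off a proper closed subset are dense -/
theorem Irr.dense {S : Set X} (hS : Irr S) {F : Set X} (hF : Cl F) (hSF : ¬ S ⊆ F) {C : Set X} (hC : Cl C)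
    (h : ∀ x ∈ S, x ∉ F → x ∈ C) : S ⊆ C := by
  refine (hS.2 F C hF hC fun x hx => ?_).resolve_left hSF
  by_cases h' : x ∈ F
  · exact .inl h'
  · exact .inr (h x hx h')

theorem Cl.iff_top {S : Set X} : Cl S ↔ IsClosed[((ZG.Z : ZariskiGeometry K).τ (Var.n X)).induced (Var.e : X → _)] S := by
  rw [@isClosed_induced_iff]
  constructor
  · intro h; exact ⟨_, h, by ext; simp⟩
  · rintro ⟨t, ht, rfl⟩
    unfold Cl
    convert ht using 1
    ext; simp

/-- noetherian decomposition -/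
theorem exists_decomp {C : Set X} (hC : Cl C) : ∃ s : Set (Set X), s.Finite ∧
    (∀ T ∈ s, Cl T ∧ Irr T) ∧ C = ⋃₀ s := by
  letI t : TopologicalSpace X := ((ZG.Z : ZariskiGeometry K).τ (Var.n X)).induced (Var.e : X → _)
  letI := (ZG.Z : ZariskiGeometry K).τ (Var.n X)
  haveI := (ZG.Z : ZariskiGeometry K).noetherian (Var.n X)
  have hi : Topology.IsInducing (Var.e : X → _) := ⟨rfl⟩
  haveI : TopologicalSpace.NoetherianSpace X := hi.noetherianSpace
  obtain ⟨s, hs, h1, h2, h3⟩ := TopologicalSpace.NoetherianSpace.exists_finite_set_isClosed_irreducible (Cl.iff_top.1 hC)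
  refine ⟨s, hs, fun T hT => ⟨Cl.iff_top.2 (h1 T hT), (h2 T hT).1, fun A B hA hB h => ?_⟩, h3⟩
  exact isPreirreducible_iff_isClosed_union_isClosed.1 (h2 T hT).2 A B (Cl.iff_top.1 hA) (Cl.iff_top.1 hB) h

theorem irr_iff {S : Set X} : Irr S ↔ @IsIrreducible _ (((ZG.Z : ZariskiGeometry K).τ (Var.n X)).induced (Var.e : X → _)) S := by
  letI t : TopologicalSpace X := ((ZG.Z : ZariskiGeometry K).τ (Var.n X)).induced (Var.e : X → _)
  refine and_congr Iff.rfl ?_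
  rw [isPreirreducible_iff_isClosed_union_isClosed]
  simp only [Cl.iff_top]

/-- component of a closed set through an irreducible subset: maximal irreducible -/
theorem exists_comp {C S : Set X} (hC : Cl C) (hS : Irr S) (h : S ⊆ C) :
    ∃ T, Cl T ∧ Irr T ∧ S ⊆ T ∧ T ⊆ C ∧ ∀ T', Irr T' → T ⊆ T' → T' ⊆ C → T' = T := by
  obtain ⟨s, hs, h1, rfl⟩ := exists_decomp hC
  have hS' : ∃ T ∈ s, S ⊆ T := hS.biUnion hs (fun T hT => (h1 T hT).1) (by rwa [← Set.sUnion_eq_biUnion])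
  obtain ⟨T, hT⟩ := (hs.subset (Set.sep_subset s (fun T => S ⊆ T))).exists_maximal hS'
  refine ⟨T, (h1 T hT.1.1).1, (h1 T hT.1.1).2, hT.1.2, Set.subset_sUnion_of_mem hT.1.1, fun T' h2 h3 h4 => ?_⟩
  obtain ⟨T'', h5, h6⟩ : ∃ T'' ∈ s, T' ⊆ T'' := h2.biUnion hs (fun T hT => (h1 T hT).1) (by rwa [← Set.sUnion_eq_biUnion])
  have := hT.2 (y := T'') ⟨h5, hT.1.2.trans (h3.trans h6)⟩ (h3.trans h6)
  exact (h6.trans this).antisymm h3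

end ZGeo


open Topology
set_option linter.unusedSectionVars false
set_option linter.deprecated false
set_option linter.style.haveILetI false

namespace ZGeo

universe u
variable {K : Type u} [Field K] [ZG K]
variable {X Y W V : Type u} [Var K X] [Var K Y] [Var K W] [Var K V]

theorem cl_e_image {C : Set X} : Cl C ↔ IsClosed[(ZG.Z : ZariskiGeometry K).τ (Var.n X)] ((Var.e : X ≃ _) '' C) := by
  unfold Cl; rw [Equiv.image_eq_preimage_symm]

theorem closure_e (A : Set X) : closure[(ZG.Z : ZariskiGeometry K).τ (Var.n X)] ((Var.e : X ≃ _).symm ⁻¹' A) =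
    (Var.e : X ≃ _).symm ⁻¹' (cl A) := by
  apply Set.Subset.antisymm
  · exact @closure_minimal _ (_) _ _ (Set.preimage_mono (sub_cl A)) (cl_cl A)
  · have h : cl A ⊆ Var.e ⁻¹' closure[(ZG.Z : ZariskiGeometry K).τ (Var.n X)] ((Var.e : X ≃ _).symm ⁻¹' A) := by
      apply cl_sub
      · unfold Cl
        rw [← Set.preimage_comp]
        simpa using @isClosed_closure _ (_) _
      · intro x hx
        apply @subset_closure _ (_)
        simpa using hx
    intro y hy
    simpa using h hy

theorem Z1_proj {C : Set (X × Y)} (hC : Cl C) (hne : C.Nonempty) :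
    ∃ F : Set X, Cl F ∧ ¬ cl (Prod.fst '' C) ⊆ F ∧ ∀ x ∈ cl (Prod.fst '' C), x ∉ F → ∃ y, (x, y) ∈ C := by
  obtain ⟨F, hF, h1, h2⟩ := (ZG.Z : ZariskiGeometry K).Z1 _ _ (Nat.le_add_right (Var.n X) (Var.n Y)) _ hC
    (by obtain ⟨x, hx⟩ := hne; exact ⟨Var.e x, by simpa using hx⟩)
  have key : (fun x : Fin (Var.n X + Var.n Y) → K => x ∘ Fin.castLE (Nat.le_add_right (Var.n X) (Var.n Y))) '' ((Var.e : (X × Y) ≃ _).symm ⁻¹' C)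
      = (Var.e : X ≃ _).symm ⁻¹' (Prod.fst '' C) := by
    have h0 : ∀ p : X × Y, (Var.e p : Fin (Var.n X + Var.n Y) → K) ∘ Fin.castLE (Nat.le_add_right (Var.n X) (Var.n Y)) = Var.e p.1 := by
      intro p; ext i; exact e_prod_left p i
    ext z
    constructor
    · rintro ⟨y, hy, rfl⟩
      obtain ⟨p, rfl⟩ := (Var.e : (X × Y) ≃ _).surjective y
      refine ⟨p, by simpa using hy, ?_⟩
      rw [Equiv.eq_symm_apply]; exact (h0 p).symm
    · rintro ⟨p, hp, hpz⟩
      refine ⟨Var.e p, by simpa using hp, ?_⟩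
      rw [Equiv.eq_symm_apply] at hpz
      rw [← hpz]; exact h0 p
  rw [key, closure_e] at h1 h2
  have hF' : F = (Var.e : X ≃ _).symm ⁻¹' (Var.e ⁻¹' F) := by ext; simp
  refine ⟨Var.e ⁻¹' F, by unfold Cl; rwa [← hF'], fun h => h1.2 ?_, fun x hx hxF => ?_⟩
  · rw [hF']; exact Set.preimage_mono h
  · have := @h2 (Var.e x) ⟨by simpa using hx, hxF⟩
    simpa using this

theorem Z2_fib {C : Set (X × K)} (hC : Cl C) : ∃ m : ℕ, ∀ a : X, (∀ b, (a, b) ∈ C) ∨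
    ({b : K | (a, b) ∈ C}.Finite ∧ {b : K | (a, b) ∈ C}.ncard ≤ m) := by
  obtain ⟨m, hm⟩ := (ZG.Z : ZariskiGeometry K).Z2 _ _ hC
  refine ⟨m, fun a => ?_⟩
  have key : {b : K | (Fin.snoc (Var.e a) b : Fin (Var.n X + 1) → K) ∈ (Var.e : (X × K) ≃ _).symm ⁻¹' C} = {b : K | (a, b) ∈ C} := by
    ext b
    have : (Var.e : (X × K) ≃ _) (a, b) = (Fin.snoc (Var.e a) b : Fin (Var.n X + 1) → K) := by
      show Fin.append (Var.e a) (fun _ : Fin 1 => b) = _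
      rw [Fin.append_right_eq_snoc]
    simp only [Set.mem_setOf_eq, Set.mem_preimage]
    rw [← this, Equiv.symm_apply_apply]
  have := hm (Var.e a)
  erw [key] at this
  rcases this with h | h
  · left; intro b; have : b ∈ {b : K | (a, b) ∈ C} := by rw [h]; trivial
    exact this
  · exact .inr h

/-- dimension at least `n` -/
def dge : ℕ → Set X → Prop
  | 0, C => Cl C ∧ Irr C
  | n + 1, C => Cl C ∧ Irr C ∧ ∃ C', C' ⊂ C ∧ dge n C'

theorem dge.cl {n : ℕ} {C : Set X} (h : dge n C) : Cl C := by
  cases n <;> exact h.1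
theorem dge.irr {n : ℕ} {C : Set X} (h : dge n C) : Irr C := by
  cases n
  · exact h.2
  · exact h.2.1

theorem dge.mono_set {n : ℕ} {C D : Set X} (h : dge n C) (hD : Cl D) (hD' : Irr D) (hCD : C ⊆ D) : dge n D := by
  cases n with
  | zero => exact ⟨hD, hD'⟩
  | succ n =>
    obtain ⟨_, _, C', h1, h2⟩ := h
    exact ⟨hD, hD', C', h1.trans_subset hCD, h2⟩

theorem dge.pred {n : ℕ} {C : Set X} (h : dge (n+1) C) : dge n C := by
  obtain ⟨h0, h1, C', h2, h3⟩ := h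
  exact h3.mono_set h0 h1 h2.subset

theorem dge.mono {m n : ℕ} {C : Set X} (h : dge n C) (hmn : m ≤ n) : dge m C := by
  induction n, hmn using Nat.le_induction with
  | base => exact h
  | succ n _ ih => exact ih h.pred

theorem dge_image {f : X → Y} (hf : SC f) {U : Set X} (hinj : Set.InjOn f U)
    (hcl : ∀ C ⊆ U, Cl C → Cl (f '' C)) {n : ℕ} (h : dge n U) : dge n (f '' U) := by
  induction n generalizing U with
  | zero => exact ⟨hcl U subset_rfl h.1, h.2.image hf⟩
  | succ n ih =>
    obtain ⟨h0, h1, C', h2, h3⟩ := h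
    refine ⟨hcl U subset_rfl h0, h1.image hf, f '' C', ?_, ih (hinj.mono h2.subset) (fun C hC => hcl C (hC.trans h2.subset)) h3⟩
    refine ⟨Set.image_mono h2.subset, fun h => h2.2 fun x hx => ?_⟩
    obtain ⟨y, hy, hxy⟩ := h (Set.mem_image_of_mem f hx)
    rwa [← hinj (h2.subset hy) hx hxy]

theorem dge_zero {C : Set X} : dge 0 C ↔ Cl C ∧ Irr C := Iff.rfl

theorem not_dge_one_singleton (p : X) : ¬ dge 1 ({p} : Set X) := by
  rintro ⟨_, _, C', h2, h3⟩
  rw [Set.ssubset_singleton_iff] at h2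
  subst h2
  exact Set.not_nonempty_empty h3.irr.1

theorem dge_one {C : Set X} (hC : Cl C) (hC' : Irr C) {p q : X} (hp : p ∈ C) (hq : q ∈ C) (hpq : p ≠ q) : dge 1 C := by
  refine ⟨hC, hC', {p}, ?_, Cl.singleton p, Irr.singleton p⟩
  refine ⟨by simpa using hp, fun h => hpq.symm (h hq)⟩

theorem eq_singleton {C : Set X} (hC : Cl C) (hC' : Irr C) (h : ¬ dge 1 C) {p : X} (hp : p ∈ C) : C = {p} := by
  refine Set.Subset.antisymm (fun q hq => ?_) (by simpa using hp)
  by_contra hne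
  exact h (dge_one hC hC' hp hq (fun h => hne h.symm))

/-- an irreducible closed subset of a finite set is a singleton -/
theorem Irr.subsingleton_of_finite {C : Set X} (hC' : Irr C) (h : C.Finite) : ∃ p, C = {p} := by
  have : C ⊆ ⋃ i ∈ C, {i} := by intro x hx; simp [hx]
  obtain ⟨i, hi, h1⟩ := hC'.biUnion h (fun i _ => Cl.singleton i) this
  exact ⟨i, h1.antisymm (by simpa using hi)⟩

theorem not_dge_one_finite {C : Set X} (h : C.Finite) : ¬ dge 1 C := by
  intro h1
  obtain ⟨p, rfl⟩ := h1.irr.subsingleton_of_finite h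
  exact not_dge_one_singleton p h1

theorem dge.eq_of_subset {n : ℕ} {C D : Set X} (h : dge n C) (hCD : C ⊆ D) (hD : Cl D) (hD' : Irr D) (h' : ¬ dge (n+1) D) : C = D := by
  by_contra hne
  exact h' ⟨hD, hD', C, hCD.ssubset_of_ne hne, h⟩

/-! translation of (Z3) -/

theorem irr_symm {S : Set X} : Irr S ↔ @IsIrreducible _ ((ZG.Z : ZariskiGeometry K).τ (Var.n X)) ((Var.e : X ≃ _).symm ⁻¹' S) := by
  constructor
  · rintro ⟨⟨x, hx⟩, h⟩
    refine ⟨⟨Var.e x, by simpa using hx⟩, ?_⟩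
    rw [@isPreirreducible_iff_isClosed_union_isClosed]
    intro A B hA hB hAB
    have hA' : A = (Var.e : X ≃ _).symm ⁻¹' (Var.e ⁻¹' A) := by ext; simp
    have hB' : B = (Var.e : X ≃ _).symm ⁻¹' (Var.e ⁻¹' B) := by ext; simp
    rw [hA', hB'] at hAB ⊢
    rcases h (Var.e ⁻¹' A) (Var.e ⁻¹' B) (by unfold Cl; rwa [← hA']) (by unfold Cl; rwa [← hB'])
      (fun x hx => by simpa using @hAB (Var.e x) (by simpa using hx)) with h | h
    · exact .inl (Set.preimage_mono h)
    · exact .inr (Set.preimage_mono h)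
  · rintro ⟨⟨x, hx⟩, h⟩
    refine ⟨⟨_, hx⟩, fun A B hA hB hAB => ?_⟩
    rw [@isPreirreducible_iff_isClosed_union_isClosed] at h
    rcases h _ _ hA hB (Set.preimage_mono hAB) with h | h
    · left; intro x hx; simpa using @h (Var.e x) (by simpa using hx)
    · right; intro x hx; simpa using @h (Var.e x) (by simpa using hx)

theorem sk_of_dge {U : Set X} {n : ℕ} (hU : dge n U) :
    (n : WithBot ℕ∞) ≤ setKrullDim ((ZG.Z : ZariskiGeometry K).τ (Var.n X)) ((Var.e : X ≃ _).symm ⁻¹' U) := by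
  letI := (ZG.Z : ZariskiGeometry K).τ (Var.n X)
  unfold setKrullDim topologicalKrullDim
  rw [Order.le_krullDim_iff]
  have key : ∀ (n : ℕ) (D : Set X), D ⊆ U → dge n D →
      ∃ l : LTSeries (TopologicalSpace.IrreducibleCloseds ((Var.e : X ≃ _).symm ⁻¹' U)), l.length = n ∧ (l.last : Set ((Var.e : X ≃ _).symm ⁻¹' U)) = {y | (Var.e : X ≃ _).symm y.1 ∈ D} := by
    intro n
    have mk : ∀ D : Set X, D ⊆ U → Cl D → Irr D → ∃ I : TopologicalSpace.IrreducibleCloseds ((Var.e : X ≃ _).symm ⁻¹' U), (I : Set ((Var.e : X ≃ _).symm ⁻¹' U)) = {y | (Var.e : X ≃ _).symm y.1 ∈ D} := by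
      intro D hDU h1 h2
      refine ⟨⟨{y | (Var.e : X ≃ _).symm y.1 ∈ D}, ?_, ?_⟩, rfl⟩
      · have h3 := irr_symm.1 h2
        have h4 : IsIrreducible ((Subtype.val : ((Var.e : X ≃ _).symm ⁻¹' U) → _) '' {y | (Var.e : X ≃ _).symm y.1 ∈ D}) := by
          convert h3 using 1
          ext y
          constructor
          · rintro ⟨y, hy, rfl⟩; exact hy
          · intro hy; exact ⟨⟨y, hDU hy⟩, hy, rfl⟩
        refine ⟨Set.image_nonempty.1 h4.1, ?_⟩
        rintro u v ⟨u', hu, rfl⟩ ⟨v', hv, rfl⟩ ⟨a, ha, ha'⟩ ⟨b, hb, hb'⟩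
        obtain ⟨_, ⟨c, hc, rfl⟩, hc'⟩ := h4.2 u' v' hu hv ⟨a.1, ⟨a, ha, rfl⟩, ha'⟩ ⟨b.1, ⟨b, hb, rfl⟩, hb'⟩
        exact ⟨c, hc, hc'⟩
      · exact IsClosed.preimage continuous_subtype_val h1
    induction n with
    | zero =>
      intro D hDU hD
      obtain ⟨I, hI⟩ := mk D hDU hD.cl hD.irr
      exact ⟨RelSeries.singleton _ I, rfl, hI⟩
    | succ n ih =>
      intro D hDU hD
      obtain ⟨I, hI⟩ := mk D hDU hD.cl hD.irr
      obtain ⟨_, _, D', h1, h2⟩ := hD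
      obtain ⟨l, h3, h4⟩ := ih D' (h1.subset.trans hDU) h2
      have hlt : l.last < I := ?_
      · exact ⟨l.snoc I hlt, by simp [h3], by simpa using hI⟩
      rw [← SetLike.coe_ssubset_coe, hI, h4]
      refine ⟨fun y hy => h1.subset hy, fun h => h1.2 fun x hx => ?_⟩
      have := @h ⟨Var.e x, by simpa using hDU hx⟩ (by simpa using hx)
      simpa using this
  obtain ⟨l, h, _⟩ := key n U subset_rfl hU
  exact ⟨l, h⟩

theorem dge_of_sk {U : Set X} {n : ℕ} (hU : Cl U) (hU' : Irr U)
    (h : (n : WithBot ℕ∞) ≤ setKrullDim ((ZG.Z : ZariskiGeometry K).τ (Var.n X)) ((Var.e : X ≃ _).symm ⁻¹' U)) :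
    dge n U := by
  letI := (ZG.Z : ZariskiGeometry K).τ (Var.n X)
  unfold setKrullDim topologicalKrullDim at h
  rw [Order.le_krullDim_iff] at h
  obtain ⟨l, hl⟩ := h
  let b : Set ((Var.e : X ≃ _).symm ⁻¹' U) → Set X := fun T => (Var.e : X ≃ _) ⁻¹' (Subtype.val '' T)
  have hbU : ∀ T, b T ⊆ U := by
    rintro T x ⟨⟨y, hy⟩, h1, h2⟩
    simp only at h2; subst h2; simpa using hy
  have hb : ∀ T : TopologicalSpace.IrreducibleCloseds ((Var.e : X ≃ _).symm ⁻¹' U), Cl (b T) ∧ Irr (b T) := by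
    intro T
    have h0 : (Var.e : X ≃ _).symm ⁻¹' (b T) = Subtype.val '' (T : Set ((Var.e : X ≃ _).symm ⁻¹' U)) := by
      simp only [b]; ext; simp
    constructor
    · unfold Cl; rw [h0]
      exact (Topology.IsClosedEmbedding.isClosedMap (IsClosed.isClosedEmbedding_subtypeVal hU)) _ T.isClosed
    · rw [irr_symm, h0]
      exact T.isIrreducible.image _ continuous_subtype_val.continuousOn
  have key : ∀ i : ℕ, ∀ hi : i < l.length + 1, dge i (b (l ⟨i, hi⟩)) := by
    intro i
    induction i with
    | zero => intro hi; exact hb _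
    | succ i ih =>
      intro hi
      refine ⟨(hb _).1, (hb _).2, _, ?_, ih (by omega)⟩
      have : l ⟨i, by omega⟩ < l ⟨i+1, hi⟩ := l.strictMono (by simp)
      rw [← SetLike.coe_ssubset_coe] at this
      simp only [b]
      refine ⟨Set.preimage_mono (Set.image_mono this.subset), fun h => this.2 fun y hy => ?_⟩
      have := @h (Var.e.symm y.1) (by simp only [Set.mem_preimage, Equiv.apply_symm_apply]; exact ⟨y, hy, rfl⟩)
      simp at this; exact this.2
  have := key n (by omega)
  exact this.mono_set hU hU' (hbU _)

theorem Z3_coord {U : Set X} {n : ℕ} (hU : dge (n+1) U) (i j : Fin (Var.n X)) {T : Set X}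
    (hT : Irr T) (hTU : T ⊆ U ∩ {x | Var.e x i = Var.e x j})
    (hmax : ∀ T', Irr T' → T ⊆ T' → T' ⊆ U ∩ {x | Var.e x i = Var.e x j} → T' = T) (hT' : Cl T) : dge n T := by
  have := (ZG.Z : ZariskiGeometry K).Z3 _ _ i j hU.cl (irr_symm.1 hU.irr) ((Var.e : X ≃ _).symm ⁻¹' T) ?_
  · have h2 := (sk_of_dge hU).trans this
    apply dge_of_sk hT' hT
    have h3 : ((n : WithBot ℕ∞) + 1) ≤ setKrullDim ((ZG.Z : ZariskiGeometry K).τ (Var.n X)) ((Var.e : X ≃ _).symm ⁻¹' T) + 1 := by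
      exact_mod_cast h2
    exact ENat.WithBot.add_le_add_natCast_right_iff.mp h2
  · refine ⟨⟨fun y hy => ⟨(hTU hy).1, by simpa using (hTU hy).2⟩, irr_symm.1 hT⟩, ?_⟩
    rintro T' ⟨h1, h2⟩ h3
    have hA' : T' = (Var.e : X ≃ _).symm ⁻¹' (Var.e ⁻¹' T') := by ext; simp
    have : Var.e ⁻¹' T' = T := by
      apply hmax
      · rw [irr_symm, ← hA']; exact h2
      · intro x hx; exact h3 (by simpa using hx)
      · intro x hx; simpa using h1 hx
    rw [hA', this]

end ZGeo


open Topology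
set_option linter.unusedSectionVars false
set_option linter.deprecated false
set_option linter.style.haveILetI false

namespace ZGeo

universe u
variable {K : Type u} [Field K] [ZG K]
variable {X Y W V : Type u} [Var K X] [Var K Y] [Var K W] [Var K V]

theorem dm_K : dm K = 1 := rfl
theorem dm_prod : dm (X × Y) = dm X + dm Y := rfl
theorem dm_pi {κ : Type} [Fintype κ] : dm (κ → X) = Fintype.card κ * dm X := rfl

theorem Cl.graph {S : Set X} (hS : Cl S) {f : X → Y} (hf : SC f) : Cl ((fun x => (f x, x)) '' S) := by
  have : (fun x => (f x, x)) '' S = {p : Y × X | p.2 ∈ S ∧ p.1 = f p.2} := by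
    ext ⟨a, b⟩
    constructor
    · rintro ⟨x, hx, h⟩; cases h; exact ⟨hx, rfl⟩
    · rintro ⟨h1, h2⟩; exact ⟨b, h1, by simp_all⟩
  rw [this]
  exact Cl.and (hS.preimage (by fun_prop)) (Cl.eq (by fun_prop) (by fun_prop))

theorem Z1 {S : Set X} (hS : Cl S) (hS' : S.Nonempty) {f : X → Y} (hf : SC f) :
    ∃ F : Set Y, Cl F ∧ ¬ cl (f '' S) ⊆ F ∧ ∀ y ∈ cl (f '' S), y ∉ F → ∃ x ∈ S, f x = y := by
  obtain ⟨F, h1, h2, h3⟩ := Z1_proj (hS.graph hf) (hS'.image _)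
  have : Prod.fst '' ((fun x => (f x, x)) '' S) = f '' S := by
    rw [← Set.image_comp]; rfl
  rw [this] at h2 h3
  refine ⟨F, h1, h2, fun y hy hyF => ?_⟩
  obtain ⟨x, x', hx, h⟩ := h3 y hy hyF
  cases h
  exact ⟨_, hx, rfl⟩

theorem SC.coord (i : Fin (Var.n X)) : SC (fun x : X => Var.e x i) := by
  apply IsCo.sc
  apply IsCo.mk'
  intro j
  left
  exact ⟨i, fun x => rfl⟩

theorem cut1 {f g : X → K} (hf : SC f) (hg : SC g) {U : Set X} {n : ℕ} (hU : dge (n + 1) U) {p : X} (hp : p ∈ U)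
    (h : f p = g p) : ∃ T, dge n T ∧ p ∈ T ∧ T ⊆ U ∧ ∀ x ∈ T, f x = g x := by
  let γ : X → (K × K) × X := fun x => ((f x, g x), x)
  have hγ : SC γ := by fun_prop
  have hU2 : dge (n+1) (γ '' U) := dge_image hγ (fun x _ y _ h => congrArg Prod.snd h)
    (fun C _ hC => hC.graph (by fun_prop)) hU
  let i : Fin (Var.n ((K × K) × X)) := Fin.castAdd (Var.n X) (Fin.castAdd (Var.n K) 0)
  let j : Fin (Var.n ((K × K) × X)) := Fin.castAdd (Var.n X) (Fin.natAdd (Var.n K) 0)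
  have hi : ∀ x, Var.e x i = x.1.1 := fun x => by
    simp only [i]; rw [e_prod_left, e_prod_left]; rfl
  have hj : ∀ x, Var.e x j = x.1.2 := fun x => by
    simp only [j]; rw [e_prod_left, e_prod_right]; rfl
  obtain ⟨T, h1, h2, h3, h4, h5⟩ := exists_comp (hU2.cl.inter (Cl.coord i j)) (Irr.singleton (γ p))
    (by simp only [Set.singleton_subset_iff]; exact ⟨⟨p, hp, rfl⟩, by simp [hi, hj, γ, h]⟩)
  have h6 := Z3_coord hU2 i j h2 h4 h5 h1
  have hT : ∀ t ∈ T, γ t.2 = t := by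
    intro t ht
    obtain ⟨⟨x, hx, rfl⟩, _⟩ := h4 ht
    rfl
  refine ⟨Prod.snd '' T, dge_image SC.snd' (fun x hx y hy h => ?_) (fun C hC hC' => ?_) h6, ⟨γ p, by simpa using h3, rfl⟩, ?_, ?_⟩
  · rw [← hT x hx, ← hT y hy, h]
  · have : Prod.snd '' C = {x | γ x ∈ C} := by
      ext x
      constructor
      · rintro ⟨t, ht, rfl⟩; show γ t.2 ∈ C; rwa [hT t (hC ht)]
      · intro hx; exact ⟨_, hx, rfl⟩
    rw [this]; exact hC'.preimage hγ
  · rintro _ ⟨t, ht, rfl⟩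
    obtain ⟨⟨x, hx, rfl⟩, _⟩ := h4 ht
    exact hx
  · rintro _ ⟨t, ht, rfl⟩
    obtain ⟨⟨x, hx, rfl⟩, h7⟩ := h4 ht
    simpa [hi, hj] using h7

theorem cut {f g : X → Y} (hf : SC f) (hg : SC g) {U : Set X} {n : ℕ} (hU : dge (n + dm Y) U) {p : X} (hp : p ∈ U)
    (h : f p = g p) : ∃ T, dge n T ∧ p ∈ T ∧ T ⊆ U ∧ ∀ x ∈ T, f x = g x := by
  have key : ∀ s : Finset (Fin (Var.n Y)), ∀ n, dge (n + s.card) U → ∃ T, dge n T ∧ p ∈ T ∧ T ⊆ U ∧ ∀ x ∈ T, ∀ i ∈ s, Var.e (f x) i = Var.e (g x) i := by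
    intro s
    induction s using Finset.induction_on with
    | empty => intro n hn; exact ⟨U, hn, hp, subset_rfl, by simp⟩
    | insert a s ha ih =>
      intro n hn
      rw [Finset.card_insert_of_notMem ha] at hn
      obtain ⟨T, h1, h2, h3, h4⟩ := ih (n+1) (by convert hn using 1; ring)
      obtain ⟨T', h5, h6, h7, h8⟩ := cut1 ((SC.coord a).comp hf) ((SC.coord a).comp hg) h1 h2 (by rw [h])
      refine ⟨T', h5, h6, h7.trans h3, fun x hx i hi => ?_⟩
      rcases Finset.mem_insert.1 hi with rfl | hi
      · exact h8 x hx
      · exact h4 x (h7 hx) i hi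
  obtain ⟨T, h1, h2, h3, h4⟩ := key Finset.univ n (by rw [Finset.card_univ, Fintype.card_fin]; exact hU)
  exact ⟨T, h1, h2, h3, fun x hx => (Var.e : Y ≃ _).injective (funext fun i => h4 x hx i (Finset.mem_univ i))⟩

/-- ambient dimension bound -/
theorem not_dge_amb {U : Set X} : ¬ dge (dm X + 1) U := by
  intro h
  obtain ⟨p, hp⟩ := h.irr.1
  obtain ⟨T, h1, h2, h3, h4⟩ := cut (n := 1) SC.id (SC.const p) (by rwa [add_comm]) hp rfl
  have : T = {p} := Set.Subset.antisymm (fun x hx => h4 x hx) (by simpa using h2)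
  subst this
  exact not_dge_one_singleton p h1

theorem dge.le_dm {U : Set X} {n : ℕ} (h : dge n U) : n ≤ dm X := by
  by_contra hn
  exact not_dge_amb (h.mono (show dm X + 1 ≤ n by omega))

theorem exists_dim {U : Set X} (h : Cl U) (h' : Irr U) : ∃ r, dge r U ∧ ¬ dge (r+1) U := by
  by_contra hc
  push Not at hc
  have : ∀ n, dge n U := fun n => by
    induction n with
    | zero => exact ⟨h, h'⟩
    | succ n ih => exact hc n ih
  exact not_dge_amb (this _)

/-! products -/
theorem Cl.prod {A : Set X} {B : Set Y} (hA : Cl A) (hB : Cl B) : Cl (A ×ˢ B) :=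
  Cl.and (hA.preimage SC.fst') (hB.preimage SC.snd')

theorem Irr.prod {A : Set X} {B : Set Y} (hA : Irr A) (hB : Irr B) : Irr (A ×ˢ B) := by
  refine ⟨hA.1.prod hB.1, fun C D hC hD h => ?_⟩
  have hcl : ∀ C : Set (X × Y), Cl C → Cl {a : X | ∀ b ∈ B, (a, b) ∈ C} := fun C hC =>
    Cl.all fun b => Cl.imp fun _ => hC.preimage (f := fun a => (a, b)) (by fun_prop)
  have hsub : A ⊆ {a : X | ∀ b ∈ B, (a, b) ∈ C} ∪ {a : X | ∀ b ∈ B, (a, b) ∈ D} := by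
    intro a ha
    have h2 : Irr ((fun b => (a, b)) '' B) := hB.image (by fun_prop)
    rcases h2.2 C D hC hD (by rintro _ ⟨b, hb, rfl⟩; exact h ⟨ha, hb⟩) with h3 | h3
    · left; intro b hb; exact h3 ⟨b, hb, rfl⟩
    · right; intro b hb; exact h3 ⟨b, hb, rfl⟩
  rcases hA.2 _ _ (hcl C hC) (hcl D hD) hsub with h1 | h1
  · left; rintro ⟨a, b⟩ ⟨ha, hb⟩; exact h1 ha b hb
  · right; rintro ⟨a, b⟩ ⟨ha, hb⟩; exact h1 ha b hb

theorem dge.prod {A : Set X} {B : Set Y} {m n : ℕ} (hA : dge m A) (hB : dge n B) : dge (m + n) (A ×ˢ B) := by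
  induction n generalizing B with
  | zero =>
    induction m generalizing A with
    | zero => exact ⟨hA.cl.prod hB.cl, hA.irr.prod hB.irr⟩
    | succ m ih =>
      obtain ⟨h1, h2, A', h3, h4⟩ := hA
      have := ih h4
      rw [add_right_comm]
      refine ⟨h1.prod hB.cl, h2.prod hB.irr, _, ⟨Set.prod_mono h3.subset subset_rfl, fun h => h3.2 fun a ha => ?_⟩, this⟩
      obtain ⟨b, hb⟩ := hB.irr.1
      exact (@h (a, b) ⟨ha, hb⟩).1
  | succ n ih =>
    obtain ⟨h1, h2, B', h3, h4⟩ := hB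
    refine ⟨hA.cl.prod h1, hA.irr.prod h2, _, ⟨Set.prod_mono subset_rfl h3.subset, fun h => h3.2 fun b hb => ?_⟩, ih h4⟩
    obtain ⟨a, ha⟩ := hA.irr.1
    exact (@h (a, b) ⟨ha, hb⟩).2

theorem irr_K : Irr (Set.univ : Set K) := by
  rw [irr_symm]
  have := (ZG.Z : ZariskiGeometry K).Z2_irred
  exact @IrreducibleSpace.isIrreducible_univ _ (_) this

theorem dge_K : dge 1 (Set.univ : Set K) :=
  dge_one Cl.univ irr_K (p := (0:K)) (q := 1) trivial trivial zero_ne_one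

theorem dge_univ_fin (n : ℕ) : dge n (Set.univ : Set (Fin n → K)) := by
  induction n with
  | zero =>
    refine ⟨Cl.univ, ?_⟩
    convert Irr.singleton (fun i : Fin 0 => i.elim0 : Fin 0 → K)
    ext x; simp [funext_iff]
  | succ n ih =>
    have h := dge.prod ih dge_K
    rw [Set.univ_prod_univ] at h
    let f : (Fin n → K) × K → (Fin (n+1) → K) := fun p => Fin.snoc p.1 p.2
    let g : (Fin (n+1) → K) → (Fin n → K) × K := fun q => (fun i => q i.castSucc, q (Fin.last n))
    have hg : SC g := by fun_prop
    have hf : SC f := by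
      apply SC.pi
      intro i
      refine Fin.lastCases ?_ (fun j => ?_) i
      · simp only [f, Fin.snoc_last]; fun_prop
      · simp only [f, Fin.snoc_castSucc]; fun_prop
    have hfg : ∀ q, f (g q) = q := fun q => by
      ext i
      refine Fin.lastCases ?_ (fun j => ?_) i
      · simp [f, g]
      · simp [f, g]
    have hgf : ∀ q, g (f q) = q := fun q => by simp [f, g]
    have := dge_image hf (U := Set.univ) (fun x _ y _ h => by rw [← hgf x, h, hgf]) (fun C _ hC => ?_) h
    · rw [Set.image_univ_of_surjective (fun q => ⟨g q, hfg q⟩)] at this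
      exact this
    · have h2 : f '' C = {q | g q ∈ C} := by
        ext q; constructor
        · rintro ⟨x, hx, rfl⟩; show g (f x) ∈ C; rwa [hgf]
        · intro h; exact ⟨_, h, hfg q⟩
      rw [h2]; exact hC.preimage hg

theorem dge_univ : dge (dm X) (Set.univ : Set X) := by
  have h := dge_univ_fin (K := K) (Var.n X)
  have he : SC (fun x : X => (Var.e x : Fin (Var.n X) → K)) := SC.pi fun i => SC.coord i
  have hs : SC (fun x : Fin (Var.n X) → K => (Var.e.symm x : X)) := by
    apply IsCo.sc
    apply IsCo.mk'
    intro i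
    have := (IsCo.apply (X := K) i).dest 0
    simp only [Equiv.apply_symm_apply]
    exact this
  have := dge_image hs (U := Set.univ) (fun x _ y _ h => by simpa using h) (fun C _ hC => ?_) h
  · rwa [Set.image_univ_of_surjective (Equiv.surjective _)] at this
  · have h2 : (fun x : Fin (Var.n X) → K => (Var.e.symm x : X)) '' C = {q | Var.e q ∈ C} := by
      ext q; constructor
      · rintro ⟨x, hx, rfl⟩; simpa using hx
      · intro h; exact ⟨_, h, by simp⟩
    rw [h2]; exact hC.preimage he

theorem irr_univ : Irr (Set.univ : Set X) := dge_univ.irr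

theorem eq_univ_of_dge {C : Set X} (h : dge (dm X) C) : C = Set.univ :=
  h.eq_of_subset (Set.subset_univ C) Cl.univ irr_univ not_dge_amb

/-- choose a component dominating -/
theorem exists_dom_comp {S : Set X} (hS : Cl S) {f : X → Y} {T : Set Y} (hT : Cl T) (hT' : Irr T)
    {F : Set Y} (hF : Cl F) (hTF : ¬ T ⊆ F) (h : ∀ y ∈ T, y ∉ F → ∃ x ∈ S, f x = y) (hST : ∀ x ∈ S, f x ∈ T) :
    ∃ S' ⊆ S, Cl S' ∧ Irr S' ∧ cl (f '' S') = T := by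
  obtain ⟨s, hs, h1, rfl⟩ := exists_decomp hS
  have : T ⊆ ⋃ S' ∈ s, cl (f '' S') := by
    refine hT'.dense hF hTF (Cl.biUnion hs fun S' _ => cl_cl _) fun y hy hyF => ?_
    obtain ⟨x, ⟨S', hS', hx⟩, rfl⟩ := h y hy hyF
    simp only [Set.mem_iUnion]
    exact ⟨S', hS', sub_cl _ ⟨x, hx, rfl⟩⟩
  obtain ⟨S', hS', h2⟩ := hT'.biUnion hs (fun S' _ => cl_cl _) this
  refine ⟨S', Set.subset_sUnion_of_mem hS', (h1 S' hS').1, (h1 S' hS').2, Set.Subset.antisymm (cl_sub hT ?_) h2⟩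
  rintro _ ⟨x, hx, rfl⟩
  exact hST x ⟨S', hS', hx⟩

/-- domination: dimension of the source is at least the dimension of the closure of the image -/
theorem dom {S : Set X} (hS : Cl S) (hS' : Irr S) {f : X → Y} (hf : SC f) {n : ℕ} (h : dge n (cl (f '' S))) :
    dge n S := by
  induction n generalizing S with
  | zero => exact ⟨hS, hS'⟩
  | succ n ih =>
    obtain ⟨F, h1, h2, h3⟩ := Z1 hS hS'.1 hf
    obtain ⟨b, hb, hbF⟩ := Set.not_subset.1 h2
    have hne : ∃ c ∈ cl (f '' S), c ≠ b := by
      by_contra hc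
      push Not at hc
      have : cl (f '' S) = {b} := Set.Subset.antisymm hc (by simpa using hb)
      rw [this] at h
      exact not_dge_one_singleton b (h.mono (by omega))
    obtain ⟨c, hc, hcb⟩ := hne
    obtain ⟨i, hi⟩ : ∃ i, Var.e c i ≠ Var.e b i := by
      by_contra hi
      push Not at hi
      exact hcb ((Var.e : Y ≃ _).injective (funext hi))
    obtain ⟨T, h4, h5, h6, h7⟩ := cut1 (SC.coord i) (SC.const (Var.e b i)) h hb rfl
    obtain ⟨S', h8, h9, h10, h11⟩ := exists_dom_comp (hS.inter (h4.cl.preimage hf)) h4.cl h4.irr h1 (fun h => hbF (h h5))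
      (fun y hy hyF => by
        obtain ⟨x, hx, rfl⟩ := h3 y (h6 hy) hyF
        exact ⟨x, ⟨hx, hy⟩, rfl⟩) (fun x hx => hx.2)
    refine ⟨hS, hS', S', ⟨h8.trans Set.inter_subset_left, fun h => ?_⟩, ih h9 h10 (by rwa [h11])⟩
    have : cl (f '' S) ⊆ T := by rw [← h11]; exact cl_mono (Set.image_mono h)
    exact hi (h7 c (this hc))

/-- finite fibres preserve dimension -/
theorem fd_all {S : Set X} {f : X → Y} (hf : SC f) {n : ℕ} (h : dge n S)
    (hfin : ∀ p ∈ S, {x ∈ S | f x = f p}.Finite) : dge n (cl (f '' S)) := by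
  classical
  let φ : (I : Finset (Fin (Var.n Y))) → X → (I → K) := fun I x i => Var.e (f x) i.1
  have hφ : ∀ I, SC (φ I) := fun I => SC.pi fun i => (SC.coord i.1).comp hf
  have hex : ∃ I, cl (φ I '' S) = Set.univ := by
    refine ⟨∅, Set.eq_univ_of_forall fun y => ?_⟩
    obtain ⟨p, hp⟩ := h.irr.1
    exact sub_cl _ ⟨p, hp, Subsingleton.elim _ _⟩
  obtain ⟨I, hI⟩ := (Set.toFinite {I | cl (φ I '' S) = Set.univ}).exists_maximal hex
  have hIu : cl (φ I '' S) = Set.univ := hI.1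
  obtain ⟨F, h1, h2, h3⟩ := Z1 h.cl h.irr.1 (hφ I)
  rw [hIu] at h2 h3
  -- bad sets
  let ψ : Fin (Var.n Y) → X → (I → K) × K := fun j x => (φ I x, Var.e (f x) j)
  have hψ : ∀ j, SC (ψ j) := fun j => (hφ I).prodMk ((SC.coord j).comp hf)
  let B : Fin (Var.n Y) → Set (I → K) := fun j => {a | ∀ b, (a, b) ∈ cl (ψ j '' S)}
  have hB : ∀ j, Cl (B j) := fun j => Cl.all fun b => (cl_cl _).preimage (by fun_prop)
  have hBj : ∀ j, j ∉ I → B j ≠ Set.univ := by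
    intro j hj hBu
    have hsub : insert j I ∈ {I | cl (φ I '' S) = Set.univ} := by
      let θ : (I → K) × K → (↥(insert j I) → K) := fun p i => if hi : i.1 ∈ I then p.1 ⟨i.1, hi⟩ else p.2
      have hθ : SC θ := by
        apply SC.pi
        intro i
        by_cases hi : i.1 ∈ I
        · simp only [θ, hi, dite_true]; fun_prop
        · simp only [θ, hi, dite_false]; fun_prop
      have hθψ : ∀ x, θ (ψ j x) = φ (insert j I) x := by
        intro x
        ext i
        by_cases hi : i.1 ∈ I
        · simp only [θ, hi, dite_true]; rfl
        · simp only [θ, hi, dite_false]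
          have : i.1 = j := by have := i.2; rw [Finset.mem_insert] at this; tauto
          simp only [ψ, φ, this]
      have h4 : (Set.univ : Set ((I → K) × K)) ⊆ {p | θ p ∈ cl (φ (insert j I) '' S)} := by
        have : cl (ψ j '' S) ⊆ {p | θ p ∈ cl (φ (insert j I) '' S)} := by
          apply cl_sub ((cl_cl _).preimage hθ)
          rintro _ ⟨x, hx, rfl⟩
          refine sub_cl _ ⟨x, hx, (hθψ x).symm⟩
        rintro ⟨a, b⟩ _
        have ha : a ∈ B j := by rw [hBu]; trivial
        exact this (ha b)
      refine Set.eq_univ_of_forall fun y => ?_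
      have := @h4 (fun i => y ⟨i.1, Finset.mem_insert_of_mem i.2⟩, y ⟨j, Finset.mem_insert_self j I⟩) trivial
      convert (show _ ∈ cl _ from this) using 1
      ext i
      by_cases hi : i.1 ∈ I
      · simp only [θ, hi, dite_true]
      · simp only [θ, hi, dite_false]
        have : i.1 = j := by have := i.2; rw [Finset.mem_insert] at this; tauto
        congr 1
        exact Subtype.ext this
    exact hj (hI.2 hsub (Finset.subset_insert j I) (Finset.mem_insert_self j I))
  have hgen : ¬ (Set.univ : Set (I → K)) ⊆ F ∪ ⋃ j ∈ {j | j ∉ I}, B j := by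
    intro hc
    rcases irr_univ.2 _ _ h1 (Cl.biUnion (Set.toFinite _) fun j _ => hB j) hc with h4 | h4
    · exact h2 h4
    · obtain ⟨j, hj, h5⟩ := irr_univ.biUnion (Set.toFinite _) (fun j _ => hB j) h4
      exact hBj j hj (Set.univ_subset_iff.1 h5)
  obtain ⟨a, -, ha⟩ := Set.not_subset.1 hgen
  simp only [Set.mem_union, Set.mem_iUnion, not_or, not_exists] at ha
  obtain ⟨p, hp, rfl⟩ := h3 a trivial ha.1
  have hn : n ≤ I.card := by
    by_contra hn
    have hdm : dm (I → K) = I.card := by rw [dm_pi, dm_K]; simp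
    obtain ⟨T, t1, t2, t3, t4⟩ := cut (n := 1) (hφ I) (SC.const (φ I p)) (h.mono (by rw [hdm]; omega)) hp rfl
    have hconst : ∀ j, ∃ c, ∀ x ∈ T, Var.e (f x) j = c := by
      intro j
      by_cases hj : j ∈ I
      · exact ⟨_, fun x hx => congrFun (t4 x hx) ⟨j, hj⟩⟩
      · obtain ⟨m, hm⟩ := Z2_fib (cl_cl (ψ j '' S))
        have hfin2 := ((hm (φ I p)).resolve_left (fun h => ha.2 j hj h)).1
        have : T ⊆ ⋃ c ∈ {b : K | (φ I p, b) ∈ cl (ψ j '' S)}, {x | Var.e (f x) j = c} := by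
          intro x hx
          simp only [Set.mem_iUnion]
          refine ⟨Var.e (f x) j, ?_, rfl⟩
          show (φ I p, Var.e (f x) j) ∈ cl (ψ j '' S)
          rw [← t4 x hx]
          exact sub_cl _ ⟨x, t3 hx, rfl⟩
        obtain ⟨c, _, hc⟩ := t1.irr.biUnion hfin2 (fun c _ => Cl.eq ((SC.coord j).comp hf) (SC.const c)) this
        exact ⟨c, hc⟩
    have : T ⊆ {x ∈ S | f x = f p} := by
      intro x hx
      refine ⟨t3 hx, (Var.e : Y ≃ _).injective (funext fun j => ?_)⟩
      obtain ⟨c, hc⟩ := hconst j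
      rw [hc x hx, hc p t2]
    exact not_dge_one_finite ((hfin p hp).subset this) t1
  -- now project
  refine dge.mono (n := I.card) ?_ hn
  have hπ : SC (fun y : Y => (fun i : I => Var.e y i.1)) := SC.pi fun i => SC.coord i.1
  apply dom (cl_cl _) ((h.irr.image hf).closure) hπ
  have : cl ((fun y : Y => (fun i : I => Var.e y i.1)) '' cl (f '' S)) = Set.univ := by
    rw [Set.eq_univ_iff_forall]
    intro y
    have : y ∈ cl (φ I '' S) := by rw [hIu]; trivial
    refine cl_mono ?_ this
    rintro _ ⟨x, hx, rfl⟩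
    exact ⟨f x, sub_cl _ ⟨x, hx, rfl⟩, rfl⟩
  rw [this]
  have hd := dge_univ (X := I → K)
  rw [dm_pi, dm_K] at hd
  simpa using hd

theorem fd_inj {S : Set X} {f : X → Y} (hf : SC f) {n : ℕ} (h : dge n S)
    (hinj : Set.InjOn f S) : dge n (cl (f '' S)) :=
  fd_all hf h fun p hp => (Set.finite_singleton p).subset fun _ hx => hinj hx.1 hp hx.2

/-- uniqueness of the main component -/
theorem main_unique {R T₁ T₂ : Set X} {φ : X → Y} (hφ : SC φ) (hinj : Set.InjOn φ R) (h1 : T₁ ⊆ R) (h2 : T₂ ⊆ R)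
    (d1 : dge (dm Y) T₁) (d2 : dge (dm Y) T₂) : T₁ = T₂ := by
  have key : ∀ T₁ T₂ : Set X, T₁ ⊆ R → T₂ ⊆ R → dge (dm Y) T₁ → dge (dm Y) T₂ → T₁ ⊆ T₂ := by
    intro T₁ T₂ h1 h2 d1 d2
    have e1 : cl (φ '' T₁) = Set.univ := eq_univ_of_dge (fd_inj hφ d1 (hinj.mono h1))
    have e2 : cl (φ '' T₂) = Set.univ := eq_univ_of_dge (fd_inj hφ d2 (hinj.mono h2))
    obtain ⟨F, f1, f2, f3⟩ := Z1 d2.cl d2.irr.1 hφ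
    rw [e2] at f2 f3
    refine d1.irr.dense (f1.preimage hφ) (fun h => f2 ?_) d2.cl fun x hx hxF => ?_
    · rw [← e1]; apply cl_sub f1; rintro _ ⟨x, hx, rfl⟩; exact h hx
    · obtain ⟨y, hy, hyx⟩ := f3 (φ x) trivial hxF
      rwa [← hinj (h2 hy) (h1 hx) hyx]
  exact (key _ _ h1 h2 d1 d2).antisymm (key _ _ h2 h1 d2 d1)

theorem to_main {R R₁ : Set X} {φ : X → Y} (hφ : SC φ) (hinj : Set.InjOn φ R) (hR : Cl R) (h1 : R₁ ⊆ R)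
    (d1 : dge (dm Y) R₁) {T : Set W} (dT : dge (dm Y) T) {ψ : W → X} (hψ : SC ψ) (hinj' : Set.InjOn ψ T)
    (hTR : ∀ x ∈ T, ψ x ∈ R) : ∀ x ∈ T, ψ x ∈ R₁ := by
  have := fd_inj hψ dT hinj'
  have h2 := main_unique hφ hinj (T₁ := cl (ψ '' T)) (T₂ := R₁) (cl_sub hR (by rintro _ ⟨x, hx, rfl⟩; exact hTR x hx)) h1 this d1
  intro x hx
  rw [← h2]
  exact sub_cl _ ⟨x, hx, rfl⟩

/-- existence of the main component of the graph-like set -/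
theorem exists_main {R : Set X} {φ : X → Y} (hφ : SC φ) (hR : Cl R) (hsurj : ∀ y, ∃ x ∈ R, φ x = y) :
    ∃ R₁ ⊆ R, dge (dm Y) R₁ ∧ cl (φ '' R₁) = Set.univ := by
  obtain ⟨S', h1, h2, h3, h4⟩ := exists_dom_comp hR (f := φ) (T := Set.univ) Cl.univ irr_univ (F := ∅) Cl.empty
    (by rw [Set.subset_empty_iff]; exact irr_univ.1.ne_empty) (fun y _ _ => hsurj y) (fun _ _ => trivial)
  exact ⟨S', h1, dom h2 h3 hφ (by rw [h4]; exact dge_univ), h4⟩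

/-- closed graph theorem -/
theorem closed_graph {A : Set X} (hA : dge (dm Y) A) {l : X → Y} (hl : SC l) (hsurj : ∀ y, ∃ x ∈ A, l x = y)
    (hfin : ∀ y, {x ∈ A | l x = y}.Finite) {E : X → V} (hE : SC E) {s : Y → V} (hs : ∀ x ∈ A, s (l x) = E x) : SC s := by
  intro P _ C hC
  let G : Set (X × P) := {q | q.1 ∈ A ∧ (q.2, E q.1) ∈ C}
  have hG : Cl G := Cl.and (hA.cl.preimage SC.fst') (hC.preimage (f := fun q : X × P => (q.2, E q.1)) (by fun_prop))
  let π : X × P → P × Y := fun q => (q.2, l q.1)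
  have hπ : SC π := by fun_prop
  obtain ⟨c, hc, h1, h2⟩ := exists_decomp hG
  have hD : {p : P × Y | (p.1, s p.2) ∈ C} = ⋃ T ∈ c, cl (π '' T) := by
    apply Set.Subset.antisymm
    · rintro ⟨p, y⟩ hp
      obtain ⟨x, hx, rfl⟩ := hsurj y
      have : (x, p) ∈ G := ⟨hx, by show (p, E x) ∈ C; rw [← hs x hx]; exact hp⟩
      rw [h2] at this
      obtain ⟨T, hT, hxT⟩ := this
      simp only [Set.mem_iUnion]
      exact ⟨T, hT, sub_cl _ ⟨_, hxT, rfl⟩⟩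
    · intro e he
      simp only [Set.mem_iUnion] at he
      obtain ⟨T, hT, he⟩ := he
      have hTG : T ⊆ G := by rw [h2]; exact Set.subset_sUnion_of_mem hT
      have hirr : Irr (cl (π '' T)) := ((h1 T hT).2.image hπ).closure
      obtain ⟨d, hd1, hd2⟩ := exists_dim (cl_cl _) hirr
      obtain ⟨w0, hw0, hwe⟩ := hsurj e.2
      have hprod := hA.prod hd1
      rw [add_comm] at hprod
      obtain ⟨S, s1, s2, s3, s4⟩ := cut (f := fun q : X × (P × Y) => l q.1) (g := fun q => q.2.2) (by fun_prop) (by fun_prop) hprod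
        (p := (w0, e)) ⟨hw0, he⟩ hwe
      have hdS := fd_all (f := fun q : X × (P × Y) => q.2) (by fun_prop) s1 (by
        intro q hq
        refine ((hfin q.2.2).image (fun x => (x, q.2))).subset ?_
        rintro q' ⟨h3, h4⟩
        refine ⟨q'.1, ⟨(s3 h3).1, ?_⟩, ?_⟩
        · rw [← h4]; exact s4 _ h3
        · rw [← h4])
      have hEq := hdS.eq_of_subset (cl_sub (cl_cl _) (by rintro _ ⟨q, hq, rfl⟩; exact (s3 hq).2)) (cl_cl _) hirr hd2
      obtain ⟨F, f1, f2, f3⟩ := Z1 (h1 T hT).1 (h1 T hT).2.1 hπ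
      have hSC : S ⊆ {q | (q.2.1, E q.1) ∈ C} := by
        refine s1.irr.dense (f1.preimage (f := fun q : X × (P × Y) => q.2) (by fun_prop)) (fun h => f2 ?_)
          (hC.preimage (f := fun q : X × (P × Y) => (q.2.1, E q.1)) (by fun_prop)) ?_
        · rw [← hEq]; apply cl_sub f1; rintro _ ⟨q, hq, rfl⟩; exact h hq
        · intro q hq hqF
          obtain ⟨t, ht, htq⟩ := f3 q.2 (s3 hq).2 hqF
          have h3 := hTG ht
          have h4 : l q.1 = l t.1 := by rw [s4 q hq, ← htq]
          show (q.2.1, E q.1) ∈ C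
          rw [← hs q.1 (s3 hq).1, h4, hs t.1 h3.1, ← htq]
          exact h3.2
      have := hSC s2
      show (e.1, s e.2) ∈ C
      rw [← hwe, hs w0 hw0]
      exact this
  rw [hD]
  exact Cl.biUnion hc fun T _ => cl_cl _

end ZGeo


open Topology
set_option linter.unusedSectionVars false
set_option linter.deprecated false
set_option linter.style.haveILetI false

namespace ZGeo

universe u
variable {K : Type u} [Field K] [ZG K]
variable {X Y W V : Type u} [Var K X] [Var K Y] [Var K W] [Var K V]

theorem Cl.poly (P : MvPolynomial (Fin (Var.n X)) K) : Cl {x : X | MvPolynomial.eval (Var.e x) P = 0} := by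
  unfold Cl
  apply ZG.hrefine
  refine ⟨{P}, ?_⟩
  ext x
  simp

theorem cl_R : Cl {q : (K × K) × (K × K) | q.1.1 + q.1.2 = q.2.1 + q.2.2} := by
  let i1 : Fin (Var.n ((K × K) × (K × K))) := Fin.castAdd (Var.n (K × K)) (Fin.castAdd (Var.n K) 0)
  let i2 : Fin (Var.n ((K × K) × (K × K))) := Fin.castAdd (Var.n (K × K)) (Fin.natAdd (Var.n K) 0)
  let i3 : Fin (Var.n ((K × K) × (K × K))) := Fin.natAdd (Var.n (K × K)) (Fin.castAdd (Var.n K) 0)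
  let i4 : Fin (Var.n ((K × K) × (K × K))) := Fin.natAdd (Var.n (K × K)) (Fin.natAdd (Var.n K) 0)
  have h1 : ∀ q, Var.e q i1 = q.1.1 := fun q => by simp only [i1]; rw [e_prod_left, e_prod_left]; rfl
  have h2 : ∀ q, Var.e q i2 = q.1.2 := fun q => by simp only [i2]; rw [e_prod_left, e_prod_right]; rfl
  have h3 : ∀ q, Var.e q i3 = q.2.1 := fun q => by simp only [i3]; rw [e_prod_right, e_prod_left]; rfl
  have h4 : ∀ q, Var.e q i4 = q.2.2 := fun q => by simp only [i4]; rw [e_prod_right, e_prod_right]; rfl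
  convert Cl.poly (X := (K × K) × (K × K)) (MvPolynomial.X i1 + MvPolynomial.X i2 - MvPolynomial.X i3 - MvPolynomial.X i4) using 1
  ext q
  simp only [map_sub, map_add, MvPolynomial.eval_X, h1, h2, h3, h4, Set.mem_setOf_eq]
  rw [sub_sub, sub_eq_zero]

theorem cl_add : Cl {p : K × (K × K) | p.1 + p.2.1 = p.2.2} := by
  have := cl_R.preimage (f := fun p : K × (K × K) => (((p.1, p.2.1), (p.2.2, (0:K))) : (K × K) × (K × K))) (by fun_prop)
  simpa using this

theorem cl_mul : Cl {p : K × (K × K) | p.1 * p.2.1 = p.2.2} := by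
  let i1 : Fin (Var.n (K × (K × K))) := Fin.castAdd (Var.n (K × K)) 0
  let i2 : Fin (Var.n (K × (K × K))) := Fin.natAdd (Var.n K) (Fin.castAdd (Var.n K) 0)
  let i3 : Fin (Var.n (K × (K × K))) := Fin.natAdd (Var.n K) (Fin.natAdd (Var.n K) 0)
  have h1 : ∀ q, Var.e q i1 = q.1 := fun q => by simp only [i1]; rw [e_prod_left]; rfl
  have h2 : ∀ q, Var.e q i2 = q.2.1 := fun q => by simp only [i2]; rw [e_prod_right, e_prod_left]; rfl
  have h3 : ∀ q, Var.e q i3 = q.2.2 := fun q => by simp only [i3]; rw [e_prod_right, e_prod_right]; rfl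
  convert Cl.poly (X := K × (K × K)) (MvPolynomial.X i1 * MvPolynomial.X i2 - MvPolynomial.X i3) using 1
  ext q
  simp only [map_sub, map_mul, MvPolynomial.eval_X, h1, h2, h3, Set.mem_setOf_eq]
  rw [sub_eq_zero]

/-- an irreducible one-dimensional set mapping injectively to `K` hits all but a proper closed set -/
theorem cofinite_line {T : Set X} (hT : dge 1 T) {f : X → K} (hf : SC f) (hinj : Set.InjOn f T) :
    ∃ F : Set K, Cl F ∧ F ≠ Set.univ ∧ ∀ z, z ∉ F → ∃ x ∈ T, f x = z := by
  obtain ⟨F, h1, h2, h3⟩ := Z1 hT.cl hT.irr.1 hf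
  have : cl (f '' T) = Set.univ := eq_univ_of_dge (fd_inj hf hT hinj)
  rw [this] at h2 h3
  exact ⟨F, h1, fun h => h2 h.ge, fun z => h3 z trivial⟩

theorem avoid2 {F G : Set X} (hF : Cl F) (hG : Cl G) (hF' : F ≠ Set.univ) (hG' : G ≠ Set.univ) : ∃ x, x ∉ F ∧ x ∉ G := by
  by_contra hc
  push Not at hc
  rcases irr_univ.2 F G hF hG (fun x _ => by by_cases h : x ∈ F; exacts [.inl h, .inr (hc x h)]) with h | h
  · exact hF' (Set.univ_subset_iff.1 h)
  · exact hG' (Set.univ_subset_iff.1 h)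

theorem sc_addsub : SC (fun p : (K × K) × K => p.1.1 + p.1.2 - p.2) := by
  set R : Set ((K × K) × (K × K)) := {q | q.1.1 + q.1.2 = q.2.1 + q.2.2} with hRdef
  have hR : Cl R := cl_R
  set G : Set (K × (K × K)) := {p | p.1 + p.2.1 = p.2.2} with hGdef
  have hG : Cl G := cl_add
  obtain ⟨G1, hG1, dG1, eG1⟩ := exists_main (φ := fun p : K × (K × K) => (p.1, p.2.1)) (by fun_prop) hG
    (fun y => ⟨(y.1, y.2, y.1 + y.2), rfl, rfl⟩)
  obtain ⟨R1, hR1, dR1, -⟩ := exists_main (φ := fun q : (K × K) × (K × K) => (q.1, q.2.1)) (by fun_prop) hR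
    (fun y => ⟨(y.1, y.2, y.1.1 + y.1.2 - y.2), by simp [R], rfl⟩)
  have hinjR : Set.InjOn (fun q : (K × K) × (K × K) => (q.1, q.2.1)) R := by
    rintro ⟨⟨a, b⟩, c, d⟩ h1 ⟨⟨a', b'⟩, c', d'⟩ h2 h
    simp only [R, Set.mem_setOf_eq, Prod.mk.injEq] at h1 h2 h ⊢
    obtain ⟨⟨rfl, rfl⟩, rfl⟩ := h
    refine ⟨⟨rfl, rfl⟩, rfl, ?_⟩
    have := h1.symm.trans h2
    exact add_left_cancel this
  have s1 : ∀ p ∈ G1, ((p.1, p.2.1), (p.1, p.2.1)) ∈ R1 := by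
    intro p hp
    obtain ⟨T, t1, t2, t3, t4⟩ := cut1 (n := 3) (f := fun q : (K × K × K) × (K × K × K) => q.1.2.2) (g := fun q => q.2.2.2)
      (by fun_prop) (by fun_prop) (dG1.prod dG1) (p := (p, p)) ⟨hp, hp⟩ rfl
    refine to_main (by fun_prop) hinjR hR hR1 dR1 (T := T) t1 (ψ := fun q : (K × K × K) × (K × K × K) => ((q.1.1, q.1.2.1), (q.2.1, q.2.2.1)))
      (by fun_prop) ?_ ?_ _ t2
    · intro q hq q' hq' h
      have a1 := hG1 (t3 hq).1
      have a2 := hG1 (t3 hq).2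
      have a3 := hG1 (t3 hq').1
      have a4 := hG1 (t3 hq').2
      simp only [G, Set.mem_setOf_eq, Prod.mk.injEq] at a1 a2 a3 a4 h
      ext
      · exact h.1.1
      · exact h.1.2
      · rw [← a1, ← a3, h.1.1, h.1.2]
      · exact h.2.1
      · exact h.2.2
      · rw [← a2, ← a4, h.2.1, h.2.2]
    · intro q hq
      have a1 := hG1 (t3 hq).1
      have a2 := hG1 (t3 hq).2
      have a3 := t4 q hq
      simp only [G, R, Set.mem_setOf_eq] at a1 a2 a3 ⊢
      rw [a1, a2, a3]
  have s2 : ∀ v : K × K, (v, v) ∈ R1 := by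
    have : cl ((fun p : K × (K × K) => (p.1, p.2.1)) '' G1) ⊆ {v | (v, v) ∈ R1} :=
      cl_sub (dR1.cl.preimage (by fun_prop)) (by rintro _ ⟨p, hp, rfl⟩; exact s1 p hp)
    rw [eG1] at this
    exact fun v => this trivial
  have s3 : ∀ v : K × K, ∃ F : Set K, Cl F ∧ F ≠ Set.univ ∧ ∀ z, z ∉ F → (v, (z, v.1 + v.2 - z)) ∈ R1 := by
    intro v
    obtain ⟨T, t1, t2, t3, t4⟩ := cut (n := 1) (f := fun q : (K × K) × (K × K) => q.1) (g := fun _ => v)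
      (by fun_prop) (by fun_prop) dR1 (s2 v) rfl
    obtain ⟨F, f1, f2, f3⟩ := cofinite_line t1 (f := fun q : (K × K) × (K × K) => q.2.1) (by fun_prop) (by
      intro q hq q' hq' h
      exact hinjR (hR1 (t3 hq)) (hR1 (t3 hq')) (Prod.ext ((t4 q hq).trans (t4 q' hq').symm) h))
    refine ⟨F, f1, f2, fun z hz => ?_⟩
    obtain ⟨q, hq, rfl⟩ := f3 z hz
    have h5 := hR1 (t3 hq)
    have : q = (v, (q.2.1, v.1 + v.2 - q.2.1)) := by
      refine Prod.ext (t4 q hq) (Prod.ext rfl ?_)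
      have := t4 q hq
      simp only [R, Set.mem_setOf_eq] at h5
      simp only at this ⊢
      rw [← this, h5]; ring
    rw [← this]; exact t3 hq
  have s4 : R ⊆ R1 := by
    rintro ⟨v, v'⟩ hv
    obtain ⟨F, f1, f2, f3⟩ := s3 v
    obtain ⟨F', f1', f2', f3'⟩ := s3 v'
    obtain ⟨z, hz, hz'⟩ := avoid2 f1 f1' f2 f2'
    obtain ⟨T, t1, t2, t3, t4⟩ := cut (n := 3) (f := fun q : ((K × K) × (K × K)) × ((K × K) × (K × K)) => (q.1.2, q.1.2.1)) (g := fun q => (q.2.2, z))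
      (by fun_prop) (by fun_prop) (dR1.prod dR1) (p := ((v, (z, v.1 + v.2 - z)), (v', (z, v'.1 + v'.2 - z)))) ⟨f3 z hz, f3' z hz'⟩
      (by have : v.1 + v.2 = v'.1 + v'.2 := hv
          simp [this])
    refine to_main (by fun_prop) hinjR hR hR1 dR1 (T := T) t1 (ψ := fun q => (q.1.1, q.2.1))
      (by fun_prop) ?_ ?_ _ t2
    · intro q hq q' hq' h
      simp only [Prod.mk.injEq] at h
      have b1 := t4 q hq
      have b2 := t4 q' hq'
      simp only [Prod.mk.injEq] at b1 b2
      have c1 : q.1 = q'.1 := hinjR (hR1 (t3 hq).1) (hR1 (t3 hq').1) (Prod.ext h.1 (b1.2.trans b2.2.symm))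
      refine Prod.ext c1 (Prod.ext h.2 ?_)
      rw [← b1.1, ← b2.1, c1]
    · intro q hq
      have a1 := hR1 (t3 hq).1
      have a2 := hR1 (t3 hq).2
      have a3 := t4 q hq
      simp only [R, Set.mem_setOf_eq, Prod.mk.injEq] at a1 a2 a3 ⊢
      rw [a1, a2, a3.1]
  refine closed_graph (A := R1) dR1 (l := fun q : (K × K) × (K × K) => (q.1, q.2.1)) (E := fun q => q.2.2) (by fun_prop) ?_ ?_ (by fun_prop) ?_
  · intro y; exact ⟨(y.1, y.2, y.1.1 + y.1.2 - y.2), s4 (by simp [R]), rfl⟩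
  · intro y
    apply Set.Subsingleton.finite
    rintro q ⟨hq, rfl⟩ q' ⟨hq', h⟩
    exact (hinjR (hR1 hq') (hR1 hq) h).symm
  · intro q hq
    have := hR1 hq
    simp only [R, Set.mem_setOf_eq] at this ⊢
    rw [this]; ring

@[fun_prop] theorem SC.add {f g : X → K} (hf : SC f) (hg : SC g) : SC (fun x => f x + g x) := by
  have := sc_addsub.comp ((hf.prodMk hg).prodMk (SC.const (X := X) (0:K)))
  simpa using this
@[fun_prop] theorem SC.sub {f g : X → K} (hf : SC f) (hg : SC g) : SC (fun x => f x - g x) := by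
  have := sc_addsub.comp ((hf.prodMk (SC.const (X := X) (0:K))).prodMk hg)
  simpa using this
@[fun_prop] theorem SC.neg {f : X → K} (hf : SC f) : SC (fun x => - f x) := by
  simpa using (SC.const (X := X) (0:K)).sub hf

theorem sc_mul : SC (fun p : K × K => p.1 * p.2) := by
  set G : Set (K × (K × K)) := {p | p.1 * p.2.1 = p.2.2} with hGdef
  have hG : Cl G := cl_mul
  obtain ⟨G1, hG1, dG1, eG1⟩ := exists_main (φ := fun p : K × (K × K) => (p.1, p.2.1)) (by fun_prop) hG
    (fun y => ⟨(y.1, y.2, y.1 * y.2), rfl, rfl⟩)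
  have hinj : Set.InjOn (fun p : K × (K × K) => (p.1, p.2.1)) G := by
    rintro ⟨a, b, c⟩ h1 ⟨a', b', c'⟩ h2 h
    simp only [G, Set.mem_setOf_eq, Prod.mk.injEq] at h1 h2 h ⊢
    obtain ⟨rfl, rfl⟩ := h
    exact ⟨rfl, rfl, h1.symm.trans h2⟩
  have s1 : ∀ x y z y' z', (x, (y, z)) ∈ G1 → (x, (y', z')) ∈ G1 → (x, (y - y', z - z')) ∈ G1 := by
    intro x y z y' z' h1 h2
    obtain ⟨T, t1, t2, t3, t4⟩ := cut (n := 2) (f := fun q : (K × K × K) × (K × K × K) => (q.1.1, q.2.2.1)) (g := fun q => (q.2.1, y'))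
      (by fun_prop) (by fun_prop) (dG1.prod dG1) (p := ((x, (y, z)), (x, (y', z')))) ⟨h1, h2⟩ rfl
    refine to_main (by fun_prop) hinj hG hG1 dG1 (T := T) t1 (ψ := fun q : (K × K × K) × (K × K × K) => (q.1.1, (q.1.2.1 - q.2.2.1, q.1.2.2 - q.2.2.2)))
      (by fun_prop) ?_ ?_ _ t2
    · intro q hq q' hq' h
      have b1 := t4 q hq
      have b2 := t4 q' hq'
      simp only [Prod.mk.injEq] at b1 b2 h
      have hy : q.1.2.1 = q'.1.2.1 := by
        have := h.2.1; rw [b1.2, b2.2] at this; exact sub_left_injective this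
      refine Prod.ext (hinj (hG1 (t3 hq).1) (hG1 (t3 hq').1) (Prod.ext h.1 hy)) (hinj (hG1 (t3 hq).2) (hG1 (t3 hq').2) (Prod.ext ?_ ?_))
      · show q.2.1 = q'.2.1
        rw [← b1.1, ← b2.1, h.1]
      · exact b1.2.trans b2.2.symm
    · intro q hq
      have a1 := hG1 (t3 hq).1
      have a2 := hG1 (t3 hq).2
      have a3 := t4 q hq
      simp only [G, Set.mem_setOf_eq, Prod.mk.injEq] at a1 a2 a3 ⊢
      rw [← a1, ← a2, a3.1]; ring
  have s2 : ∀ x : K, (x, ((0:K), (0:K))) ∈ G1 := by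
    have : cl ((fun p : K × (K × K) => (p.1, p.2.1)) '' G1) ⊆ {v | (v.1, ((0:K), (0:K))) ∈ G1} :=
      cl_sub (dG1.cl.preimage (by fun_prop)) (by
        rintro _ ⟨p, hp, rfl⟩
        have := s1 p.1 p.2.1 p.2.2 p.2.1 p.2.2 hp hp
        simpa using this)
    rw [eG1] at this
    exact fun x => @this (x, 0) trivial
  have s3 : G ⊆ G1 := by
    rintro ⟨a, b, c⟩ hc
    obtain ⟨T, t1, t2, t3, t4⟩ := cut (n := 1) (f := fun q : K × (K × K) => q.1) (g := fun _ => a)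
      (by fun_prop) (by fun_prop) dG1 (s2 a) rfl
    obtain ⟨F, f1, f2, f3⟩ := cofinite_line t1 (f := fun q : K × (K × K) => q.2.1) (by fun_prop) (by
      intro q hq q' hq' h
      exact hinj (hG1 (t3 hq)) (hG1 (t3 hq')) (Prod.ext ((t4 q hq).trans (t4 q' hq').symm) h))
    have f3' : ∀ z ∉ F, (a, (z, a * z)) ∈ G1 := by
      intro z hz
      obtain ⟨q, hq, rfl⟩ := f3 z hz
      have h5 := hG1 (t3 hq)
      have h6 := t4 q hq
      simp only [G, Set.mem_setOf_eq] at h5 h6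
      have : q = (a, (q.2.1, a * q.2.1)) := by
        refine Prod.ext h6 (Prod.ext rfl ?_)
        rw [← h6]; exact h5.symm
      rw [← this]; exact t3 hq
    obtain ⟨y, hy, hy'⟩ := avoid2 f1 (f1.preimage (f := fun y => y - b) (by fun_prop)) f2 (by
      intro h
      obtain ⟨z, hz⟩ := (Set.ne_univ_iff_exists_notMem F).1 f2
      have : z + b ∈ {x | x - b ∈ F} := by rw [h]; trivial
      exact hz (by simpa using this))
    have := s1 _ _ _ _ _ (f3' y hy) (f3' (y - b) hy')
    have hc' : a * b = c := hc
    convert this using 2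
    rw [← hc']; ext <;> simp; ring
  refine closed_graph (A := G1) dG1 (l := fun q : K × (K × K) => (q.1, q.2.1)) (E := fun q => q.2.2) (by fun_prop) ?_ ?_ (by fun_prop) ?_
  · intro y; exact ⟨(y.1, y.2, y.1 * y.2), s3 rfl, rfl⟩
  · intro y
    apply Set.Subsingleton.finite
    rintro q ⟨hq, rfl⟩ q' ⟨hq', h⟩
    exact (hinj (hG1 hq') (hG1 hq) h).symm
  · intro q hq
    exact hG1 hq

@[fun_prop] theorem SC.mul {f g : X → K} (hf : SC f) (hg : SC g) : SC (fun x => f x * g x) :=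
  sc_mul.comp (hf.prodMk hg)
@[fun_prop] theorem SC.pow {f : X → K} (hf : SC f) (n : ℕ) : SC (fun x => f x ^ n) := by
  induction n with
  | zero => simpa using SC.const (1:K)
  | succ n ih => simp only [pow_succ]; fun_prop
@[fun_prop] theorem SC.sum {ι : Type*} (s : Finset ι) {f : ι → X → K} (hf : ∀ i, SC (f i)) : SC (fun x => ∑ i ∈ s, f i x) := by
  classical
  induction s using Finset.induction_on with
  | empty => simpa using SC.const (0:K)
  | insert a s ha ih => simp only [Finset.sum_insert ha]; exact (hf a).add ih
@[fun_prop] theorem SC.prod {ι : Type*} (s : Finset ι) {f : ι → X → K} (hf : ∀ i, SC (f i)) : SC (fun x => ∏ i ∈ s, f i x) := by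
  classical
  induction s using Finset.induction_on with
  | empty => simpa using SC.const (1:K)
  | insert a s ha ih => simp only [Finset.prod_insert ha]; exact (hf a).mul ih

end ZGeo


open Topology
set_option linter.unusedSectionVars false
set_option linter.deprecated false
set_option linter.style.haveILetI false

namespace ZGeo

universe u
variable {K : Type u} [Field K] [ZG K]
variable {X Y W V : Type u} [Var K X] [Var K Y] [Var K W] [Var K V]

theorem const_of_finite {S : Set X} (hS : Irr S) {f : X → Y} (hf : SC f) (hfin : (f '' S).Finite) {p : X} (hp : p ∈ S) :
    ∀ x ∈ S, f x = f p := by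
  obtain ⟨c, hc⟩ := (hS.image hf).subsingleton_of_finite hfin
  have : ∀ x ∈ S, f x = c := fun x hx => by
    have : f x ∈ f '' S := ⟨x, hx, rfl⟩
    rw [hc] at this; exact this
  intro x hx
  rw [this x hx, this p hp]

theorem const_of_finite' {S : Set X} (hS : Irr S) {f : X → Y} (hf : SC f) {A : Set Y} (hA : A.Finite)
    (h : ∀ x ∈ S, f x ∈ A) {p : X} (hp : p ∈ S) : ∀ x ∈ S, f x = f p :=
  const_of_finite hS hf (hA.subset (by rintro _ ⟨x, hx, rfl⟩; exact h x hx)) hp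

/-- dimension bound by a function whose fibre through `p` is locally a point -/
theorem dim_bound {U : Set X} {f : X → Y} (hf : SC f) {p : X} (hp : p ∈ U)
    (h : ∀ T ⊆ U, Cl T → Irr T → p ∈ T → (∀ x ∈ T, f x = f p) → T ⊆ {p}) : ¬ dge (dm Y + 1) U := by
  intro hd
  obtain ⟨T, t1, t2, t3, t4⟩ := cut (n := 1) hf (SC.const (f p)) (by rwa [add_comm]) hp rfl
  exact not_dge_one_finite ((Set.finite_singleton p).subset (h T t3 t1.cl t1.irr t2 t4)) t1

theorem finite_of_not_dge {B : Set X} (hB : Cl B) (h : ∀ T ⊆ B, ¬ dge 1 T) : B.Finite := by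
  obtain ⟨s, hs, h1, rfl⟩ := exists_decomp hB
  refine hs.sUnion fun T hT => ?_
  obtain ⟨p, hp⟩ := (h1 T hT).2.1
  rw [eq_singleton (h1 T hT).1 (h1 T hT).2 (h T (Set.subset_sUnion_of_mem hT)) hp]
  exact Set.finite_singleton p

theorem exists_linear_ne {m : ℕ} {ι : Type*} [Finite ι] (v : ι → (Fin m → K)) (hv : ∀ i, v i ≠ 0) :
    ∃ c : Fin m → K, ∀ i, ∑ j, c j * v i j ≠ 0 := by
  haveI : Infinite K := ZG.hinf
  obtain ⟨f, hf⟩ := Module.exists_dual_forall_apply_ne_zero (K := K) v hv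
  refine ⟨fun j => f (fun j' => if j = j' then 1 else 0), fun i => ?_⟩
  have := hf i
  rw [LinearMap.pi_apply_eq_sum_univ f] at this
  simpa [mul_comm] using this

theorem param {r : ℕ} {B : Set X} (hB : Cl B) (h : ∀ T ⊆ B, ¬ dge (r+1) T) {b : X} (hb : b ∈ B) :
    ∃ g : X → (Fin r → K), SC g ∧ g b = 0 ∧ {x ∈ B | g x = 0}.Finite := by
  induction r generalizing B with
  | zero => exact ⟨fun _ _ => 0, by fun_prop, rfl, (finite_of_not_dge hB h).subset (Set.sep_subset _ _)⟩
  | succ r ih =>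
    obtain ⟨s, hs, h1, h2⟩ := exists_decomp hB
    let s' := {T ∈ s | T ≠ {b}}
    have hs' : s'.Finite := hs.subset (Set.sep_subset _ _)
    haveI := hs'.to_subtype
    have hch : ∀ T : s', ∃ t ∈ T.1, t ≠ b := by
      intro T
      by_contra hc
      push Not at hc
      obtain ⟨p, hp⟩ := (h1 T.1 T.2.1).2.1
      exact T.2.2 (Set.Subset.antisymm hc (by simpa using (hc p hp) ▸ hp))
    choose t ht htb using hch
    obtain ⟨c, hc⟩ := exists_linear_ne (fun T : s' => Var.e (t T) - Var.e b) (fun T h =>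
      htb T ((Var.e : X ≃ _).injective (sub_eq_zero.1 h)))
    let g0 : X → K := fun x => ∑ j, c j * (Var.e x j - Var.e b j)
    have hg0 : SC g0 := SC.sum _ fun j => (SC.const _).mul ((SC.coord j).sub (SC.const _))
    have hg0b : g0 b = 0 := by simp [g0]
    obtain ⟨g, g1, g2, g3⟩ := ih (B := B ∩ {x | g0 x = 0}) (hB.inter (Cl.eq hg0 (SC.const 0))) (by
      intro T hT hd
      have : T ⊆ ⋃ S ∈ s, S := by rw [← Set.sUnion_eq_biUnion, ← h2]; exact hT.trans Set.inter_subset_left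
      obtain ⟨S, hS, hTS⟩ := hd.irr.biUnion hs (fun S hS => (h1 S hS).1) this
      by_cases hSb : S = {b}
      · subst hSb
        exact not_dge_one_finite ((Set.finite_singleton b).subset hTS) (hd.mono (by omega))
      · refine h S (by rw [h2]; exact Set.subset_sUnion_of_mem hS) ⟨(h1 S hS).1, (h1 S hS).2, T, ⟨hTS, fun hST => ?_⟩, hd⟩
        exact hc ⟨S, hS, hSb⟩ (hT (hST (ht ⟨S, hS, hSb⟩))).2) ⟨hb, hg0b⟩
    refine ⟨fun x => Fin.cons (g0 x) (g x), ?_, ?_, g3.subset ?_⟩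
    · apply SC.pi
      intro i
      refine Fin.cases ?_ (fun j => ?_) i
      · simpa using hg0
      · simp only [Fin.cons_succ]; fun_prop
    · ext i
      refine Fin.cases ?_ (fun j => ?_) i
      · simpa using hg0b
      · simp [g2]
    · rintro x ⟨hx, hx'⟩
      refine ⟨⟨hx, ?_⟩, ?_⟩
      · simpa using congrFun hx' 0
      · ext j; simpa using congrFun hx' j.succ

theorem dm_fin (r : ℕ) : dm (Fin r → K) = r := by rw [dm_pi, dm_K]; simp

theorem fd_point {S : Set X} {f : X → Y} (hf : SC f) {n : ℕ} (h : dge n S) {p : X} (hp : p ∈ S)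
    (hfin : {x ∈ S | f x = f p}.Finite) : dge n (cl (f '' S)) := by
  obtain ⟨r, h1, h2⟩ := exists_dim (cl_cl (f '' S)) (h.irr.image hf).closure
  refine h1.mono ?_
  by_contra hn
  obtain ⟨g, g1, g2, g3⟩ := param (cl_cl (f '' S)) (r := r) (fun T hT hd => h2 (hd.mono_set (cl_cl _) (h.irr.image hf).closure hT))
    (b := f p) (sub_cl _ ⟨p, hp, rfl⟩)
  obtain ⟨T, t1, t2, t3, t4⟩ := cut (n := 1) (f := fun x => g (f x)) (g := fun _ => (0 : Fin r → K)) (by fun_prop) (by fun_prop)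
    (h.mono (by rw [dm_fin]; omega)) hp g2
  have := const_of_finite' t1.irr hf g3 (fun x hx => ⟨sub_cl _ ⟨x, t3 hx, rfl⟩, t4 x hx⟩) t2
  exact not_dge_one_finite (hfin.subset fun x hx => ⟨t3 hx, this x hx⟩) t1

/-- a one-parameter action preserves maximal irreducible subsets -/
theorem comp_action {Y0 Y1 : Set X} (hY : Irr Y1) (hsub : Y1 ⊆ Y0)
    (hmax : ∀ T', Irr T' → Y1 ⊆ T' → T' ⊆ Y0 → T' = Y1) {A : K → X → X} (hA : SC (fun q : K × X => A q.1 q.2))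
    (h1 : ∀ x, A 1 x = x) (hpres : ∀ c, ∀ x ∈ Y0, A c x ∈ Y0) : ∀ c, ∀ x ∈ Y1, A c x ∈ Y1 := by
  have h2 : Irr ((fun q : K × X => A q.1 q.2) '' (Set.univ ×ˢ Y1)) := (irr_K.prod hY).image hA
  have h3 := hmax _ h2 (fun x hx => ⟨(1, x), ⟨trivial, hx⟩, h1 x⟩) (by
    rintro _ ⟨⟨c, x⟩, ⟨_, hx⟩, rfl⟩
    exact hpres c x (hsub hx))
  intro c x hx
  rw [← h3]
  exact ⟨(c, x), ⟨trivial, hx⟩, rfl⟩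

theorem dge_pow {T : Set X} {r : ℕ} (hT : dge r T) (n : ℕ) : dge (n * r) {w : Fin n → X | ∀ c, w c ∈ T} := by
  induction n with
  | zero =>
    rw [zero_mul]
    convert dge_zero.2 ⟨Cl.singleton (fun i : Fin 0 => i.elim0 : Fin 0 → X), Irr.singleton _⟩ using 1
    ext x; simp [funext_iff]
  | succ n ih =>
    have h := dge.prod ih hT
    let f : (Fin n → X) × X → (Fin (n+1) → X) := fun p => Fin.snoc p.1 p.2
    let g : (Fin (n+1) → X) → (Fin n → X) × X := fun q => (fun i => q i.castSucc, q (Fin.last n))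
    have hg : SC g := by fun_prop
    have hf : SC f := by
      apply SC.pi
      intro i
      refine Fin.lastCases ?_ (fun j => ?_) i
      · simp only [f, Fin.snoc_last]; fun_prop
      · simp only [f, Fin.snoc_castSucc]; fun_prop
    have hfg : ∀ q, f (g q) = q := fun q => by
      ext i
      refine Fin.lastCases ?_ (fun j => ?_) i
      · simp [f, g]
      · simp [f, g]
    have hgf : ∀ q, g (f q) = q := fun q => by simp [f, g]
    have key : ∀ C, f '' C = {q | g q ∈ C} := by
      intro C
      ext q; constructor
      · rintro ⟨x, hx, rfl⟩; show g (f x) ∈ C; rwa [hgf]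
      · intro h; exact ⟨_, h, hfg q⟩
    have := dge_image hf (fun x _ y _ h => by rw [← hgf x, h, hgf]) (fun C _ hC => by rw [key]; exact hC.preimage hg) h
    rw [key] at this
    rw [add_mul, one_mul]
    convert this using 1
    ext q
    constructor
    · intro hq; exact ⟨fun c => hq _, hq _⟩
    · rintro ⟨h1, h2⟩ c
      refine Fin.lastCases h2 (fun j => h1 j) c

theorem finite_of_ne_univ {F : Set K} (hF : Cl F) (h : F ≠ Set.univ) : F.Finite := by
  apply finite_of_not_dge hF
  intro T hT hd
  have := eq_univ_of_dge (X := K) (C := T) hd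
  exact h (Set.univ_subset_iff.1 (this ▸ hT))

/-- if `f` dominates (closure is everything) on a closed set, some component dominates -/
theorem exists_comp_dom {S : Set X} (hS : Cl S) {f : X → Y} {T : Set Y} (hT' : Irr T)
    (h : T ⊆ cl (f '' S)) : ∃ S' ⊆ S, Cl S' ∧ Irr S' ∧ T ⊆ cl (f '' S') := by
  obtain ⟨s, hs, h1, rfl⟩ := exists_decomp hS
  have : T ⊆ ⋃ S' ∈ s, cl (f '' S') := by
    refine h.trans (cl_sub (Cl.biUnion hs fun S' _ => cl_cl _) ?_)
    rintro _ ⟨x, ⟨S', hS', hx⟩, rfl⟩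
    simp only [Set.mem_iUnion]
    exact ⟨S', hS', sub_cl _ ⟨x, hx, rfl⟩⟩
  obtain ⟨S', hS', h2⟩ := hT'.biUnion hs (fun S' _ => cl_cl _) this
  exact ⟨S', Set.subset_sUnion_of_mem hS', (h1 S' hS').1, (h1 S' hS').2, h2⟩

/-- the image of a proper closed subset of a set of dimension `dm Y` is not dense -/
theorem image_proper_ne_univ {S A : Set X} (hA : Cl A) (hA' : Irr A) (hAd : ¬ dge (dm Y + 1) A) (hS : Cl S) (hSA : S ⊆ A) (hne : ¬ A ⊆ S)
    {f : X → Y} (hf : SC f) : cl (f '' S) ≠ Set.univ := by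
  intro h
  obtain ⟨S', h1, h2, h3, h4⟩ := exists_comp_dom hS (T := Set.univ) irr_univ h.ge
  have h5 : dge (dm Y) S' := dom h2 h3 hf (by rw [Set.univ_subset_iff.1 h4]; exact dge_univ)
  exact hAd ⟨hA, hA', S', ⟨h1.trans hSA, fun h => hne (h.trans h1)⟩, h5⟩

theorem exists_avoid {ι : Type*} {s : Set ι} (hs : s.Finite) (F : ι → Set X) (hF : ∀ i ∈ s, Cl (F i)) (hne : ∀ i ∈ s, F i ≠ Set.univ) :
    ∃ x, ∀ i ∈ s, x ∉ F i := by
  by_contra hc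
  push Not at hc
  obtain ⟨i, hi, h⟩ := irr_univ.biUnion hs hF (fun x _ => by
    obtain ⟨i, hi, h⟩ := hc x
    simp only [Set.mem_iUnion]
    exact ⟨i, hi, h⟩)
  exact hne i hi (Set.univ_subset_iff.1 h)

end ZGeo

open Topology
set_option linter.unusedSectionVars false
set_option linter.deprecated false
set_option linter.style.haveILetI false
namespace ZGeo
universe u
variable {K : Type u} [Field K] [ZG K]
variable {X Y W V : Type u} [Var K X] [Var K Y] [Var K W] [Var K V]
@[fun_prop] theorem SC.addv {κ : Type} [Fintype κ] {f g : X → κ → K} (hf : SC f) (hg : SC g) :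
    SC (fun x => f x + g x) := SC.pi fun i => by simp only [Pi.add_apply]; fun_prop
@[fun_prop] theorem SC.subv {κ : Type} [Fintype κ] {f g : X → κ → K} (hf : SC f) (hg : SC g) :
    SC (fun x => f x - g x) := SC.pi fun i => by simp only [Pi.sub_apply]; fun_prop
@[fun_prop] theorem SC.smulv {κ : Type} [Fintype κ] {f : X → K} {g : X → κ → K} (hf : SC f) (hg : SC g) :
    SC (fun x => f x • g x) := SC.pi fun i => by simp only [Pi.smul_apply, smul_eq_mul]; fun_prop

section Phi
variable {κ : Type} [Fintype κ]

/-- closure of the set of difference quotients -/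
def Phi (s : (κ → K) → K) (e : κ → K) : Set ((κ → K) × (K × (K × K))) :=
  cl (Set.range (fun q : (κ → K) × (K × K) =>
    (q.1, q.2.1, q.2.2 * q.2.1, q.2.2 * (s (q.1 + q.2.1 • e) - s q.1))))

theorem Phi_cl (s : (κ → K) → K) (e : κ → K) : Cl (Phi s e) := cl_cl _

theorem Phi_irr {s : (κ → K) → K} (hs : SC s) (e : κ → K) : Irr (Phi s e) := by
  unfold Phi
  rw [← Set.image_univ]
  exact (irr_univ.image (by fun_prop)).closure

theorem Phi_gen {s : (κ → K) → K} {e : κ → K} {x : κ → K} {δ μ ν : K} (hδ : δ ≠ 0)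
    (h : ν * δ = μ * (s (x + δ • e) - s x)) : (x, δ, μ, ν) ∈ Phi s e := by
  refine sub_cl _ ⟨(x, δ, μ / δ), ?_⟩
  simp only [Prod.mk.injEq, true_and]
  constructor
  · field_simp
  · rw [div_mul_eq_mul_div, ← h]; field_simp

theorem Phi_sub {s : (κ → K) → K} (hs : SC s) {e : κ → K} {x : κ → K} {δ μ ν : K} 
    (h : (x, δ, μ, ν) ∈ Phi s e) : ν * δ = μ * (s (x + δ • e) - s x) := by
  have hc : Cl {q : (κ → K) × (K × (K × K)) | q.2.2.2 * q.2.1 = q.2.2.1 * (s (q.1 + q.2.1 • e) - s q.1)} :=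
    Cl.eq (by fun_prop) (by fun_prop)
  refine cl_sub hc ?_ h
  rintro _ ⟨q, rfl⟩
  simp only [Set.mem_setOf_eq]; ring

theorem Phi_cone {s : (κ → K) → K} {e : κ → K} {x : κ → K} {δ μ ν : K} (c : K)
    (h : (x, δ, μ, ν) ∈ Phi s e) : (x, δ, c * μ, c * ν) ∈ Phi s e := by
  have hc : Cl {q : (κ → K) × (K × (K × K)) | (q.1, q.2.1, c * q.2.2.1, c * q.2.2.2) ∈ Phi s e} :=
    (Phi_cl s e).preimage (by fun_prop)
  refine cl_sub hc ?_ h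
  rintro _ ⟨q, rfl⟩
  refine sub_cl _ ⟨(q.1, q.2.1, c * q.2.2), ?_⟩
  simp only [Prod.mk.injEq, true_and]; constructor <;> ring

theorem Phi_zero {s : (κ → K) → K} {e : κ → K} (x : κ → K) (δ : K) : (x, δ, 0, 0) ∈ Phi s e :=
  sub_cl _ ⟨(x, δ, 0), by simp⟩

theorem eq_univ_of_ne {C : Set X} (hC : Cl C) {f : X → K} (hf : SC f) {p : X} (hp : f p ≠ 0) (h : ∀ x, f x ≠ 0 → x ∈ C) :
    C = Set.univ :=
  Set.eq_univ_of_univ_subset (irr_univ.dense (F := {x | f x = 0}) (Cl.eq hf (SC.const _))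
    (fun h' => hp (h' (Set.mem_univ p))) hC fun x _ hx => h x hx)

theorem Phi_dge {s : (κ → K) → K} (hs : SC s) (e : κ → K) : dge (dm (κ → K) + 2) (Phi s e) := by
  refine dom (Phi_cl s e) (Phi_irr hs e) (f := fun q => (q.1, q.2.1, q.2.2.1)) (by fun_prop) ?_
  have : cl ((fun q : (κ → K) × (K × (K × K)) => (q.1, q.2.1, q.2.2.1)) '' Phi s e) = Set.univ := by
    refine eq_univ_of_ne (cl_cl _) (f := fun q => q.2.1) (by fun_prop) (p := (0,1,0)) (by simp) ?_
    rintro ⟨x, δ, μ⟩ h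
    refine sub_cl _ ⟨(x, δ, μ, (μ * (s (x + δ • e) - s x)) / δ), Phi_gen h ?_, rfl⟩
    simp only at h; field_simp
  rw [this]
  exact dge_univ.mono (by simp [dm_prod, dm_K])

theorem Phi_not_dge {s : (κ → K) → K} (hs : SC s) (e : κ → K) : ¬ dge (dm (κ → K) + 2 + 1) (Phi s e) := by
  intro h
  have := eq_univ_of_dge (h.mono (m := dm ((κ → K) × (K × (K × K)))) (by simp [dm_prod, dm_K]))
  have h2 : ((0 : κ → K), (1:K), (0:K), (1:K)) ∈ Phi s e := by rw [this]; trivial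
  have := Phi_sub hs h2
  simp at this

/-- points where the whole plane is limit of difference quotients -/
def Bad1 (s : (κ → K) → K) (e : κ → K) : Set (κ → K) := {x | ∀ μ ν, (x, 0, μ, ν) ∈ Phi s e}

theorem Bad1_cl (s : (κ → K) → K) (e : κ → K) : Cl (Bad1 s e) :=
  Cl.all fun μ => Cl.all fun ν => (Phi_cl s e).preimage (f := fun x => (x, 0, μ, ν)) (by fun_prop)

theorem Bad1_ne {s : (κ → K) → K} (hs : SC s) (e : κ → K) : Bad1 s e ≠ Set.univ := by
  intro h
  obtain ⟨T, t1, t2, t3, t4⟩ := cut (n := dm (κ → K) + 2) (f := fun q : (κ → K) × (K × (K × K)) => q.2.1) (g := fun _ => (0:K))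
    (by fun_prop) (by fun_prop) (U := Set.univ) (dge_univ.mono (by simp [dm_prod, dm_K])) (p := (0,0,0,0)) trivial rfl
  have hT : T ⊆ Phi s e := by
    rintro ⟨x, δ, μ, ν⟩ hq
    have h0 : δ = 0 := t4 _ hq
    subst h0
    have : x ∈ Bad1 s e := by rw [h]; trivial
    exact this μ ν
  have := t1.eq_of_subset hT (Phi_cl s e) (Phi_irr hs e) (Phi_not_dge hs e)
  have h1 : ((0 : κ → K), (1:K), (0:K), (0:K)) ∈ T := by rw [this]; exact Phi_zero _ _
  have := t4 _ h1
  simp at this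

theorem Phi_unique {s : (κ → K) → K} (hs : SC s) {e : κ → K} {x : κ → K} (hx : x ∉ Bad1 s e) {S : K}
    (hS : (x, 0, 1, S) ∈ Phi s e) : (x, 0, 0, 1) ∉ Phi s e := by
  intro hV
  have f1 : {μ : K | (x, 0, μ, 1) ∈ Phi s e}.Finite := by
    refine finite_of_ne_univ ((Phi_cl s e).preimage (f := fun μ => (x, 0, μ, 1)) (by fun_prop)) fun h => hx ?_
    intro μ ν
    have : {q : K × K | (x, 0, q.1, q.2) ∈ Phi s e} = Set.univ := by
      refine eq_univ_of_ne ((Phi_cl s e).preimage (f := fun q : K × K => (x, 0, q.1, q.2)) (by fun_prop)) (f := fun q => q.2) (by fun_prop) (p := (1,1)) (by simp) ?_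
      rintro ⟨a, b⟩ hb
      have : a / b ∈ {μ : K | (x, 0, μ, 1) ∈ Phi s e} := by rw [h]; trivial
      have := Phi_cone b this
      simp only at hb
      rwa [mul_one, mul_div_cancel₀ _ hb] at this
    have h3 : (μ, ν) ∈ {q : K × K | (x, 0, q.1, q.2) ∈ Phi s e} := by rw [this]; trivial
    exact h3
  have f2 : {ν : K | (x, 0, 1, ν) ∈ Phi s e}.Finite := by
    refine finite_of_ne_univ ((Phi_cl s e).preimage (f := fun ν => (x, 0, 1, ν)) (by fun_prop)) fun h => hx ?_
    intro μ ν
    have : {q : K × K | (x, 0, q.1, q.2) ∈ Phi s e} = Set.univ := by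
      refine eq_univ_of_ne ((Phi_cl s e).preimage (f := fun q : K × K => (x, 0, q.1, q.2)) (by fun_prop)) (f := fun q => q.1) (by fun_prop) (p := (1,1)) (by simp) ?_
      rintro ⟨a, b⟩ hb
      have : b / a ∈ {ν : K | (x, 0, 1, ν) ∈ Phi s e} := by rw [h]; trivial
      have := Phi_cone a this
      simp only at hb
      rwa [mul_one, mul_div_cancel₀ _ hb] at this
    have h3 : (μ, ν) ∈ {q : K × K | (x, 0, q.1, q.2) ∈ Phi s e} := by rw [this]; trivial
    exact h3
  obtain ⟨P, p1, p2, p3, p4⟩ := cut (n := dm (κ → K) + 3)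
    (f := fun q : ((κ → K) × (K × (K × K))) × ((κ → K) × (K × (K × K))) => (q.1.1, q.1.2.1))
    (g := fun q => (q.2.1, q.2.2.1)) (by fun_prop) (by fun_prop) (((Phi_dge hs e).prod (Phi_dge hs e)).mono (by simp [dm_prod, dm_K]; omega))
    (p := ((x,0,0,1),(x,0,1,S))) ⟨hV, hS⟩ rfl
  have hd := fd_point (f := fun q : ((κ → K) × (K × (K × K))) × ((κ → K) × (K × (K × K))) => (q.1.1, q.1.2.1, q.1.2.2.2, q.2.2.2.1))
    (by fun_prop) p1 p2 (by
      refine ((f1.prod f2).image (fun ab => ((x,0,ab.1,1),(x,0,1,ab.2)))).subset ?_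
      rintro ⟨⟨a,b,c,d⟩,a',b',c',d'⟩ ⟨h1, h2⟩
      have h3 := p4 _ h1
      have h4 := p3 h1
      simp only [Prod.mk.injEq] at h2 h3
      obtain ⟨rfl, rfl, rfl, rfl⟩ := h2
      obtain ⟨rfl, rfl⟩ := h3
      exact ⟨(c, d'), ⟨h4.1, h4.2⟩, rfl⟩)
  have hu := eq_univ_of_dge (hd.mono (by simp [dm_prod, dm_K]))
  have hne : ¬ P ⊆ {q | q.1.2.1 = 0} := by
    intro h
    have : cl ((fun q : ((κ → K) × (K × (K × K))) × ((κ → K) × (K × (K × K))) => (q.1.1, q.1.2.1, q.1.2.2.2, q.2.2.2.1)) '' P) ⊆ {q | q.2.1 = 0} := by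
      refine cl_sub (Cl.eq (by fun_prop) (by fun_prop)) ?_
      rintro _ ⟨q, hq, rfl⟩
      exact h hq
    rw [hu] at this
    have := this (Set.mem_univ ((0 : κ → K), (1:K), (0:K), (0:K)))
    simp at this
  have := p1.irr.dense (Cl.eq (by fun_prop) (by fun_prop)) hne (C := {q | q.1.2.2.2 * q.2.2.2.1 = q.1.2.2.1 * q.2.2.2.2})
    (Cl.eq (by fun_prop) (by fun_prop)) (by
      rintro ⟨⟨a,b,c,d⟩,a',b',c',d'⟩ h1 h2
      have h3 := p4 _ h1
      have h4 := p3 h1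
      simp only [Prod.mk.injEq] at h3
      obtain ⟨rfl, rfl⟩ := h3
      have h5 := Phi_sub hs h4.1
      have h6 := Phi_sub hs h4.2
      simp only [Set.mem_setOf_eq] at h2 ⊢
      apply mul_right_cancel₀ h2
      linear_combination c' * h5 - c * h6)
  have := this p2
  simp at this
end Phi
end ZGeo

open Topology
set_option linter.unusedSectionVars false
set_option linter.deprecated false
set_option linter.style.haveILetI false
namespace ZGeo
universe u
variable {K : Type u} [Field K] [ZG K]
variable {X Y W V : Type u} [Var K X] [Var K Y] [Var K W] [Var K V]
section Count
variable {κ : Type} [Fintype κ]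

/-- homogeneous form with given coefficients -/
def Qv {N : ℕ} (Q : Fin (N+1) → K) (t u : K) : K := ∑ i, Q i * (t ^ (i:ℕ) * u ^ (N - (i:ℕ)))

@[fun_prop] theorem SC.Qv {N : ℕ} {Q : X → Fin (N+1) → K} {t u : X → K} (hQ : SC Q) (ht : SC t) (hu : SC u) :
    SC (fun x => ZGeo.Qv (Q x) (t x) (u x)) := by unfold ZGeo.Qv; fun_prop

theorem Qv_smul {N : ℕ} (Q : Fin (N+1) → K) (c t u : K) : Qv Q (c * t) (c * u) = c ^ N * Qv Q t u := by
  unfold Qv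
  rw [Finset.mul_sum]
  refine Finset.sum_congr rfl fun i _ => ?_
  have : c ^ N = c ^ (i:ℕ) * c ^ (N - (i:ℕ)) := by rw [← pow_add]; congr 1; have := i.2; omega
  rw [this, mul_pow, mul_pow]; ring

theorem Qv_one {N : ℕ} (P : Polynomial K) (hP : P.natDegree < N + 1) (t : K) :
    Qv (fun i : Fin (N+1) => P.coeff i) t 1 = P.eval t := by
  rw [Polynomial.eval_eq_sum_range' hP, ← Fin.sum_univ_eq_sum_range (fun i => P.coeff i * t ^ i)]
  simp [Qv]

/-- divided difference -/
def Rv {N : ℕ} (Q : Fin (N+1) → K) (t t' u : K) : K :=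
  ∑ i, Q i * (u ^ (N - (i:ℕ)) * ∑ m ∈ Finset.range (i:ℕ), t ^ m * t' ^ ((i:ℕ) - 1 - m))

@[fun_prop] theorem SC.Rv {N : ℕ} {Q : X → Fin (N+1) → K} {t t' u : X → K} (hQ : SC Q) (ht : SC t) (ht' : SC t') (hu : SC u) :
    SC (fun x => ZGeo.Rv (Q x) (t x) (t' x) (u x)) := by unfold ZGeo.Rv; fun_prop

theorem Rv_mul {N : ℕ} (Q : Fin (N+1) → K) (t t' u : K) : Rv Q t t' u * (t - t') = Qv Q t u - Qv Q t' u := by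
  unfold Rv Qv
  rw [Finset.sum_mul, ← Finset.sum_sub_distrib]
  refine Finset.sum_congr rfl fun i _ => ?_
  rw [mul_assoc, mul_assoc, geom_sum₂_mul]; ring

theorem count_aux {s : (κ → K) → K} (hs : SC s) {N : ℕ} (hom : ∀ (c : K) y, s (c • y) = c ^ N * s y) {e : κ → K}
    {Bad : Set (κ → K)} (hB : Cl Bad) (hΦ : ∀ a ∉ Bad, (a, 0, 0, 1) ∉ Phi s e)
    {tt : Fin (N+1) → K} (htt : Function.Injective tt) {a : κ → K} (ha : a ∉ Bad) (t0 : K) :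
    s (a + t0 • e) = (Lagrange.interpolate Finset.univ tt (fun j => s (a + tt j • e))).eval t0 := by
  classical
  haveI : Infinite K := ZG.hinf
  set P := Lagrange.interpolate Finset.univ tt (fun j => s (a + tt j • e)) with hPdef
  have hPdeg : P.natDegree < N + 1 := by
    rcases eq_or_ne P 0 with h | h
    · rw [h]; simp
    · rw [Polynomial.natDegree_lt_iff_degree_lt h]
      have := Lagrange.degree_interpolate_lt (s := Finset.univ) (v := tt) (fun j => s (a + tt j • e)) htt.injOn
      rw [Finset.card_univ, Fintype.card_fin] at this
      exact this
  have hPtt : ∀ j, P.eval (tt j) = s (a + tt j • e) := fun j =>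
    Lagrange.eval_interpolate_at_node _ htt.injOn (Finset.mem_univ j)
  by_contra hne
  -- the nodes τ
  obtain ⟨τ, hτ, hτB⟩ : ∃ τ : Fin N → K, Function.Injective τ ∧ ∀ i, a + τ i • e ∉ Bad := by
    have hfin : {t : K | a + t • e ∈ Bad}.Finite := by
      refine finite_of_ne_univ (hB.preimage (f := fun t : K => a + t • e) (by fun_prop)) fun h => ha ?_
      have : (0:K) ∈ {t : K | a + t • e ∈ Bad} := by rw [h]; trivial
      simpa using this
    obtain ⟨A, hA, hA'⟩ := hfin.infinite_compl.exists_subset_card_eq N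
    refine ⟨fun i => (A.equivFinOfCardEq hA').symm i, fun i j h => ?_, fun i => hA ((A.equivFinOfCardEq hA').symm i).2⟩
    simpa using h
  set h : K → K → K := fun t u => s (u • a + t • e) with hh
  have hsc : SC (fun q : K × K => h q.1 q.2) := by fun_prop
  have hhom : ∀ c t u, h (c * t) (c * u) = c ^ N * h t u := by
    intro c t u
    simp only [hh]; rw [← hom]; congr 1; rw [smul_add, smul_smul, smul_smul]
  let Q0 : Fin (N+1) → K := fun i => P.coeff i
  let Y0 : Set (K × (Fin (N+1) → K) × (Fin (N+1) → K × K)) := {z | ∀ j, z.1 * h (z.2.2 j).1 (z.2.2 j).2 = Qv z.2.1 (z.2.2 j).1 (z.2.2 j).2}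
  have hY0 : Cl Y0 := Cl.all fun j => Cl.eq ((by fun_prop : SC _).mul (hsc.comp (f := fun z : K × (Fin (N+1) → K) × (Fin (N+1) → K × K) => z.2.2 j) (by fun_prop))) (by fun_prop)
  let p0 : K × (Fin (N+1) → K) × (Fin (N+1) → K × K) := (1, Q0, fun j => (tt j, 1))
  have hp0 : p0 ∈ Y0 := by
    intro j
    simp only [p0, Q0, hh]
    rw [Qv_one P hPdeg, hPtt]; simp
  obtain ⟨T, T1, T2, T3, T4⟩ := cut (n := 2 * N + 3) (f := fun z : K × (Fin (N+1) → K) × (Fin (N+1) → K × K) => fun j => z.1 * h (z.2.2 j).1 (z.2.2 j).2)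
    (g := fun z => fun j => Qv z.2.1 (z.2.2 j).1 (z.2.2 j).2) (SC.pi fun j => (by fun_prop : SC _).mul (hsc.comp (f := fun z : K × (Fin (N+1) → K) × (Fin (N+1) → K × K) => z.2.2 j) (by fun_prop)))
    (by fun_prop) (U := Set.univ) (dge_univ.mono (by simp [dm_prod, dm_K, dm_pi]; omega)) (p := p0) trivial (funext hp0)
  obtain ⟨Y1, y1, y2, y3, y4, y5⟩ := exists_comp hY0 T1.irr (fun z hz j => congrFun (T4 z hz) j)
  have hp1 := y3 T2
  have yd := T1.mono_set y1 y2 y3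
  -- density of (λ, Q, u)
  have hD : {t : K | h t 1 = P.eval t}.Finite := by
    refine finite_of_ne_univ (Cl.eq (hsc.comp (f := fun t => (t, 1)) (by fun_prop)) ?_) fun h' => hne ?_
    · simp only [Polynomial.eval_eq_sum_range]; fun_prop
    · have : t0 ∈ {t : K | h t 1 = P.eval t} := by rw [h']; trivial
      simpa [hh] using this
  have hdense := eq_univ_of_dge ((fd_point (f := fun z : K × (Fin (N+1) → K) × (Fin (N+1) → K × K) => (z.1, z.2.1, fun j => (z.2.2 j).2)) (by fun_prop) yd hp1 (by
    refine ((Set.Finite.pi' (fun _ : Fin (N+1) => hD)).image (fun w => ((1:K), Q0, fun j => (w j, (1:K))))).subset ?_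
    rintro ⟨l, Q, v⟩ ⟨h1, h2⟩
    simp only [p0, Prod.mk.injEq] at h2
    obtain ⟨rfl, rfl, h2⟩ := h2
    refine ⟨fun j => (v j).1, fun j => ?_, ?_⟩
    · have := y4 h1 j
      simp only [congrFun h2 j, Q0, Qv_one P hPdeg, one_mul] at this
      exact this
    · simp only [Prod.mk.injEq, true_and]
      funext j
      exact Prod.ext rfl (congrFun h2 j).symm)).mono (by simp [dm_prod, dm_K, dm_pi]; omega))
  have hz : ∀ l Q, (l, Q, (0 : Fin (N+1) → K × K)) ∈ Y1 := by
    have hA := comp_action y2 y4 y5 (A := fun c z => (z.1, z.2.1, fun j => (c * (z.2.2 j).1, c * (z.2.2 j).2))) (by fun_prop) (by simp) (by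
      intro c z hz j
      have := hz j
      simp only [hhom, Qv_smul]
      rw [← this]; ring) 0
    intro l Q
    have : cl ((fun z : K × (Fin (N+1) → K) × (Fin (N+1) → K × K) => (z.1, z.2.1, fun j => (z.2.2 j).2)) '' Y1) ⊆ {q | (q.1, q.2.1, (0 : Fin (N+1) → K × K)) ∈ Y1} := by
      refine cl_sub (y1.preimage (by fun_prop)) ?_
      rintro _ ⟨z, hz, rfl⟩
      have := hA z hz
      simp only [zero_mul] at this
      exact this
    rw [hdense] at this
    exact @this (l, Q, 0) trivial
  -- the split form
  let ℓ : Polynomial K := ∏ i : Fin N, (Polynomial.X - Polynomial.C (τ i))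
  let Q1 : Fin (N+1) → K := fun i => ℓ.coeff i
  have hℓdeg : ℓ.natDegree < N + 1 := by
    rw [Polynomial.natDegree_prod_of_monic _ _ fun i _ => Polynomial.monic_X_sub_C _]; simp
  have hℓ : ∀ t, ℓ.eval t = ∏ i, (t - τ i) := by intro t; simp [ℓ, Polynomial.eval_prod]
  have hQ1 : ∀ t u, Qv Q1 t u = ∏ i, (t - τ i * u) := by
    intro t u
    have : {q : K × K | Qv Q1 q.1 q.2 = ∏ i, (q.1 - τ i * q.2)} = Set.univ := by
      refine eq_univ_of_ne (Cl.eq (by fun_prop) (by fun_prop)) (f := fun q => q.2) (by fun_prop) (p := (1,1)) (by simp) ?_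
      rintro ⟨t, u⟩ hu
      simp only at hu
      have h1 := Qv_smul Q1 u (t / u) 1
      rw [Qv_one ℓ hℓdeg, hℓ, mul_one, mul_div_cancel₀ _ hu] at h1
      simp only [Set.mem_setOf_eq, h1]
      have : u ^ N = ∏ _i : Fin N, u := by simp
      rw [this, ← Finset.prod_mul_distrib]
      refine Finset.prod_congr rfl fun i _ => ?_
      field_simp
    have h3 : (t, u) ∈ {q : K × K | Qv Q1 q.1 q.2 = ∏ i, (q.1 - τ i * q.2)} := by rw [this]; trivial
    exact h3
  obtain ⟨T', T'1, T'2, T'3, T'4⟩ := cut (n := N + 1) (f := fun z : K × (Fin (N+1) → K) × (Fin (N+1) → K × K) => (z.1, z.2.1))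
    (g := fun _ => (0, Q1)) (by fun_prop) (by fun_prop) (yd.mono (by simp [dm_prod, dm_K, dm_pi]; omega)) (hz 0 Q1) rfl
  obtain ⟨c, -, hc⟩ : ∃ c ∈ (Set.univ : Set (Fin (N+1) → Fin N)), T' ⊆ {z | ∀ j, (z.2.2 j).1 = τ (c j) * (z.2.2 j).2} := by
    refine T'1.irr.biUnion Set.finite_univ (fun c _ => Cl.all fun j => Cl.eq (by fun_prop) (by fun_prop)) ?_
    rintro ⟨l, Q, v⟩ hzz
    have h1 := T'4 _ hzz
    simp only [Prod.mk.injEq] at h1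
    obtain ⟨rfl, rfl⟩ := h1
    have h2 := y4 (T'3 hzz)
    have h3 : ∀ j, ∃ i, (v j).1 = τ i * (v j).2 := by
      intro j
      have := h2 j
      simp only [zero_mul, hQ1] at this
      obtain ⟨i, _, hi⟩ := Finset.prod_eq_zero_iff.1 this.symm
      exact ⟨i, sub_eq_zero.1 hi⟩
    choose c hc using h3
    simp only [Set.mem_iUnion]
    exact ⟨c, trivial, hc⟩
  have hrec : ∀ z ∈ T', z = ((0:K), Q1, fun j => (τ (c j) * (z.2.2 j).2, (z.2.2 j).2)) := by
    rintro ⟨l, Q, v⟩ hzz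
    have h1 := T'4 _ hzz
    simp only [Prod.mk.injEq] at h1
    obtain ⟨rfl, rfl⟩ := h1
    simp only [Prod.mk.injEq, true_and]
    funext j
    exact Prod.ext (hc hzz j) rfl
  have hdense2 := eq_univ_of_dge ((fd_inj (f := fun z : K × (Fin (N+1) → K) × (Fin (N+1) → K × K) => (fun j => (z.2.2 j).2)) (by fun_prop) T'1 (by
    intro z hzz z' hzz' hEq
    rw [hrec z hzz, hrec z' hzz']
    simp only [Prod.mk.injEq, true_and]
    funext j
    have := congrFun hEq j
    simp only at this
    rw [this])).mono (by simp [dm_pi, dm_K]))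
  have hpt : ((0:K), Q1, fun j => (τ (c j), (1:K))) ∈ Y1 := by
    have : cl ((fun z : K × (Fin (N+1) → K) × (Fin (N+1) → K × K) => (fun j => (z.2.2 j).2)) '' T') ⊆ {u | ((0:K), Q1, fun j => (τ (c j) * u j, u j)) ∈ Y1} := by
      refine cl_sub (y1.preimage (by fun_prop)) ?_
      rintro _ ⟨z, hzz, rfl⟩
      have := T'3 hzz
      rw [hrec z hzz] at this
      exact this
    rw [hdense2] at this
    have := @this (fun _ => 1) trivial
    simpa using this
  obtain ⟨i, j, hij, hcij⟩ := Fintype.exists_ne_map_eq_of_card_lt c (by simp)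
  -- difference quotients
  have hΦ1 : Y1 ⊆ {z | (((z.2.2 i).2 * (z.2.2 j).2) • a + ((z.2.2 j).1 * (z.2.2 i).2) • e, (z.2.2 i).1 * (z.2.2 j).2 - (z.2.2 j).1 * (z.2.2 i).2,
      z.1, Rv z.2.1 ((z.2.2 i).1 * (z.2.2 j).2) ((z.2.2 j).1 * (z.2.2 i).2) ((z.2.2 i).2 * (z.2.2 j).2)) ∈ Phi s e} := by
    refine y2.dense (F := {z | (z.2.2 i).1 * (z.2.2 j).2 = (z.2.2 j).1 * (z.2.2 i).2}) (Cl.eq (by fun_prop) (by fun_prop)) ?_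
      ((Phi_cl s e).preimage (by fun_prop)) ?_
    · intro h'
      have := h' hp1
      simp only [p0, Set.mem_setOf_eq, mul_one] at this
      exact hij (htt this)
    · rintro ⟨l, Q, v⟩ hz1 hz2
      simp only [Set.mem_setOf_eq] at hz2 ⊢
      refine Phi_gen (sub_ne_zero.2 hz2) ?_
      rw [Rv_mul, add_assoc, ← add_smul]
      have e1 := y4 hz1 i
      have e2 := y4 hz1 j
      simp only at e1 e2
      have e3 := hhom (v j).2 (v i).1 (v i).2
      have e4 := hhom (v i).2 (v j).1 (v j).2
      have e5 := Qv_smul Q (v j).2 (v i).1 (v i).2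
      have e6 := Qv_smul Q (v i).2 (v j).1 (v j).2
      simp only [hh] at e1 e2 e3 e4
      have f1 : (v j).1 * (v i).2 + ((v i).1 * (v j).2 - (v j).1 * (v i).2) = (v j).2 * (v i).1 := by ring
      rw [f1, mul_comm (v i).1, mul_comm (v j).1, mul_comm (v i).2 (v j).2, e3, e5]
      rw [mul_comm (v j).2 (v i).2, e4, e6, ← e1, ← e2]
      ring
  have hlast := hΦ1 hpt
  simp only [Set.mem_setOf_eq, mul_one, one_smul, hcij, sub_self] at hlast
  have hR : ∀ t, Rv Q1 t (τ (c j)) 1 = ∏ k ∈ Finset.univ.erase (c j), (t - τ k) := by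
    intro t
    have : {t : K | Rv Q1 t (τ (c j)) 1 = ∏ k ∈ Finset.univ.erase (c j), (t - τ k)} = Set.univ := by
      refine eq_univ_of_ne (Cl.eq (by fun_prop) (by fun_prop)) (f := fun t => t - τ (c j)) (by fun_prop) (p := τ (c j) + 1) (by simp) ?_
      intro t ht
      have := Rv_mul Q1 t (τ (c j)) 1
      have hz0 : ∏ i, (τ (c j) - τ i * 1) = 0 := Finset.prod_eq_zero (i := c j) (Finset.mem_univ _) (by simp)
      rw [hQ1, hQ1, hz0, sub_zero, ← Finset.mul_prod_erase _ _ (Finset.mem_univ (c j))] at this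
      simp only [mul_one] at this
      rw [mul_comm] at this
      exact mul_left_cancel₀ ht this
    have h3 : t ∈ {t : K | Rv Q1 t (τ (c j)) 1 = ∏ k ∈ Finset.univ.erase (c j), (t - τ k)} := by rw [this]; trivial
    exact h3
  have hR0 : Rv Q1 (τ (c j)) (τ (c j)) 1 ≠ 0 := by
    rw [hR, Finset.prod_ne_zero_iff]
    intro k hk h'
    exact (Finset.mem_erase.1 hk).1 (hτ (sub_eq_zero.1 h')).symm
  have := Phi_cone (Rv Q1 (τ (c j)) (τ (c j)) 1)⁻¹ hlast
  rw [inv_mul_cancel₀ hR0, mul_zero] at this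
  exact hΦ _ (hτB (c j)) this

theorem count {s : (κ → K) → K} (hs : SC s) {N : ℕ} (hom : ∀ (c : K) y, s (c • y) = c ^ N * s y) {e : κ → K}
    {Bad : Set (κ → K)} (hB : Cl Bad) (hB' : Bad ≠ Set.univ) (hΦ : ∀ a ∉ Bad, (a, 0, 0, 1) ∉ Phi s e)
    {tt : Fin (N+1) → K} (htt : Function.Injective tt) (a : κ → K) (t : K) :
    s (a + t • e) = ∑ j, (Lagrange.basis Finset.univ tt j).eval t * s (a + tt j • e) := by
  have : Set.univ ⊆ {a : κ → K | s (a + t • e) = ∑ j, (Lagrange.basis Finset.univ tt j).eval t * s (a + tt j • e)} := by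
    refine irr_univ.dense hB (fun h => hB' (Set.eq_univ_of_univ_subset h)) (Cl.eq (by fun_prop) (by fun_prop)) ?_
    intro a _ ha
    simp only [Set.mem_setOf_eq]
    rw [count_aux hs hom hB hΦ htt ha t, Lagrange.interpolate_apply, Polynomial.eval_finset_sum]
    simp [mul_comm]
  exact this trivial

/-- separately polynomial functions are polynomial -/
theorem poly_of_interp {n : ℕ} (tt : Fin n → K) (f : (κ → K) → K) [DecidableEq κ]
    (h : ∀ i (y : κ → K), f y = ∑ j, (Lagrange.basis Finset.univ tt j).eval (y i) * f (Function.update y i (tt j))) :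
    ∃ P : MvPolynomial κ K, ∀ y, MvPolynomial.eval y P = f y := by
  have key : ∀ A : Finset κ, ∀ f : (κ → K) → K, (∀ i ∈ A, ∀ (y : κ → K), f y = ∑ j, (Lagrange.basis Finset.univ tt j).eval (y i) * f (Function.update y i (tt j))) →
      (∀ i ∉ A, ∀ (y : κ → K) t, f (Function.update y i t) = f y) → ∃ P : MvPolynomial κ K, ∀ y, MvPolynomial.eval y P = f y := by
    intro A
    induction A using Finset.induction_on with
    | empty =>
      intro f _ hf
      refine ⟨MvPolynomial.C (f 0), fun y => ?_⟩
      have : ∀ B : Finset κ, f (fun i => if i ∈ B then y i else 0) = f 0 := by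
        intro B
        induction B using Finset.induction_on with
        | empty => simp; rfl
        | insert b B hb ih =>
          have h3 := hf b (by simp) (fun i => if i ∈ B then y i else 0) (y b)
          rw [← ih, ← h3]
          congr 1
          funext i
          rcases eq_or_ne i b with rfl | hi
          · simp
          · simp [hi]
      have := this Finset.univ
      simpa using this.symm
    | insert a A ha ih =>
      intro f h1 h2
      have : ∀ j, ∃ P : MvPolynomial κ K, ∀ y, MvPolynomial.eval y P = f (Function.update y a (tt j)) := by
        intro j
        apply ih (fun y => f (Function.update y a (tt j)))
        · intro i hi y
          have hia : i ≠ a := fun h => ha (h ▸ hi)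
          rw [h1 i (Finset.mem_insert_of_mem hi), Function.update_of_ne hia]
          refine Finset.sum_congr rfl fun k _ => ?_
          rw [Function.update_comm hia]
        · intro i hi y t
          rcases eq_or_ne i a with rfl | hia
          · simp
          · show f (Function.update (Function.update y i t) a (tt j)) = _
            rw [Function.update_comm hia, h2 i (by simp [hia, hi])]
      choose P hP using this
      refine ⟨∑ j, Polynomial.aeval (MvPolynomial.X a) (Lagrange.basis Finset.univ tt j) * P j, fun y => ?_⟩
      rw [h1 a (by simp) y, map_sum]
      refine Finset.sum_congr rfl fun j _ => ?_
      rw [map_mul, hP]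
      congr 1
      rw [← MvPolynomial.coe_aeval_eq_eval]
      have := Polynomial.aeval_algHom_apply (MvPolynomial.aeval y : MvPolynomial κ K →ₐ[K] K) (MvPolynomial.X a) (Lagrange.basis Finset.univ tt j)
      rw [MvPolynomial.aeval_X] at this
      rw [Polynomial.coe_aeval_eq_eval] at this
      exact this.symm
  exact key Finset.univ f (fun i _ => h i) (fun i hi => absurd (Finset.mem_univ i) hi)
end Count
end ZGeo

open Topology
set_option linter.unusedSectionVars false
set_option linter.deprecated false
set_option linter.style.haveILetI false
namespace ZGeo
universe u
variable {K : Type u} [Field K] [ZG K]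
variable {X Y W V : Type u} [Var K X] [Var K Y] [Var K W] [Var K V]
section Proj
variable {ι : Type} [Fintype ι]

/-- linear map given by a matrix -/
def ev {r : ℕ} (l : Fin r → ι → K) (v : ι → K) : Fin r → K := fun a => ∑ j, l a j * v j

@[fun_prop] theorem SC.ev {r : ℕ} {l : X → Fin r → ι → K} {v : X → ι → K} (hl : SC l) (hv : SC v) :
    SC (fun x => ZGeo.ev (l x) (v x)) := by unfold ZGeo.ev; fun_prop

theorem ev_smul {r : ℕ} (l : Fin r → ι → K) (c : K) (v : ι → K) : ev l (c • v) = c • ev l v := by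
  funext a; simp only [ev, Pi.smul_apply, smul_eq_mul, Finset.mul_sum]
  exact Finset.sum_congr rfl fun j _ => by ring
theorem ev_sub {r : ℕ} (l : Fin r → ι → K) (v w : ι → K) : ev l (v - w) = ev l v - ev l w := by
  funext a; simp only [ev, Pi.sub_apply, mul_sub, Finset.sum_sub_distrib]
theorem ev_zero {r : ℕ} (l : Fin r → ι → K) : ev l (0 : ι → K) = 0 := by
  funext a; simp [ev]

theorem ev_solve {r : ℕ} {l l' : Fin r → ι → K} {v : ι → K} {j : ι} (hj : v j ≠ 0) (h : ev l v = ev l' v)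
    (hl : ∀ a (j' : {j' // j' ≠ j}), l a j' = l' a j') : l = l' := by
  classical
  funext a j'
  rcases eq_or_ne j' j with rfl | hne
  · have h1 := congrFun h a
    simp only [ev] at h1
    rw [← Finset.add_sum_erase _ _ (Finset.mem_univ j'), ← Finset.add_sum_erase _ _ (Finset.mem_univ j')] at h1
    rw [Finset.sum_congr rfl (fun x hx => by rw [hl a ⟨x, Finset.ne_of_mem_erase hx⟩] : ∀ x ∈ Finset.univ.erase j', l a x * v x = l' a x * v x)] at h1
    exact mul_right_cancel₀ hj (add_right_cancel h1)
  · exact hl a ⟨j', hne⟩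

theorem card_ne (j : ι) [DecidableEq ι] : Fintype.card ι = Fintype.card {j' // j' ≠ j} + 1 := by
  rw [Fintype.card_subtype_compl]
  have : 0 < Fintype.card ι := Fintype.card_pos_iff.2 ⟨j⟩
  simp; omega

theorem projA {r : ℕ} {T : Set (ι → K)} (hT : dge r T) (hT' : ¬ dge (r+1) T) (hcone : ∀ (c : K), ∀ q ∈ T, c • q ∈ T) (j : ι) :
    cl (Prod.snd '' {p : (ι → K) × (Fin r → ι → K) | p.1 ∈ T ∧ p.1 j = 1 ∧ ev p.2 p.1 = 0}) ≠ Set.univ := by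
  classical
  intro hu
  have hI : Cl {p : (ι → K) × (Fin r → ι → K) | p.1 ∈ T ∧ p.1 j = 1 ∧ ev p.2 p.1 = 0} :=
    (hT.cl.preimage (f := fun p : (ι → K) × (Fin r → ι → K) => p.1) (by fun_prop)).and
    ((Cl.eq (by fun_prop) (by fun_prop)).and (Cl.eq (by fun_prop) (by fun_prop)))
  obtain ⟨S, s1, s2, s3, s4⟩ := exists_comp_dom hI irr_univ hu.ge
  have hd : dge (dm (Fin r → ι → K)) S := dom s2 s3 SC.snd' (by
    rw [Set.eq_univ_of_univ_subset s4]; exact dge_univ)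
  obtain ⟨p, hp⟩ := s3.1
  have hB : ∀ T' ⊆ T ∩ {v | v j = 1}, ¬ dge r T' := by
    intro T' h1 h2
    have h3 := h2.eq_of_subset (h1.trans Set.inter_subset_left) hT.cl hT.irr hT'
    obtain ⟨q, hq⟩ := hT.irr.1
    have h4 := hcone 0 q hq
    rw [← h3] at h4
    have h5 := (h1 h4).2
    simp at h5
  have hpI := s1 hp
  obtain _ | r := r
  · exact hB {p.1} (by simpa using ⟨hpI.1, hpI.2.1⟩) ⟨Cl.singleton _, Irr.singleton _⟩
  obtain ⟨g, g1, g2, g3⟩ := param (hT.cl.inter (Cl.eq (f := fun v : ι → K => v j) (g := fun _ => (1:K)) (by fun_prop) (by fun_prop))) hB (b := p.1) ⟨hpI.1, hpI.2.1⟩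
  refine dim_bound (U := S) (f := fun q : (ι → K) × (Fin (r+1) → ι → K) => (g q.1, fun (a : Fin (r+1)) (j' : {j' // j' ≠ j}) => q.2 a j')) (by fun_prop) hp ?_ (hd.mono ?_)
  · intro T' t1 t2 t3 t4 t5 q hq
    have c1 := const_of_finite' t3 SC.fst' g3 (fun x hx => ⟨⟨(s1 (t1 hx)).1, (s1 (t1 hx)).2.1⟩, by
      have := congrArg Prod.fst (t5 x hx); simp only at this; rw [this, g2]⟩) t4 q hq
    refine Prod.ext c1 (ev_solve (v := p.1) (j := j) (by rw [hpI.2.1]; exact one_ne_zero) ?_ ?_)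
    · have := (s1 (t1 hq)).2.2
      rw [c1] at this
      rw [this, hpI.2.2]
    · intro a j'
      have := congrArg Prod.snd (t5 q hq)
      exact congrFun (congrFun this a) j'
  · simp only [dm_prod, dm_pi, dm_K, Fintype.card_fin, card_ne j]
    apply le_of_eq; ring

/-- limits of pairs of distinct points of `T` with equal projection -/
def Mset (r : ℕ) (T : Set (ι → K)) : Set ((ι → K) × ((ι → K) × (Fin r → ι → K))) :=
  cl {p | p.1 ≠ p.2.1 ∧ p.1 ∈ T ∧ p.2.1 ∈ T ∧ ev p.2.2 p.1 = ev p.2.2 p.2.1}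

theorem projB {r : ℕ} {T : Set (ι → K)} (hT : dge r T) (hT' : ¬ dge (r+1) T) :
    {l : Fin r → ι → K | ∀ q ∈ T, (q, q, l) ∈ Mset r T} ≠ Set.univ := by
  classical
  intro hu
  let N : Set ((ι → K) × ((ι → K) × (Fin r → ι → K))) := {p | p.1 ∈ T ∧ p.2.1 ∈ T ∧ ev p.2.2 p.1 = ev p.2.2 p.2.1}
  have hN : Cl N := (hT.cl.preimage (f := fun p : (ι → K) × ((ι → K) × (Fin r → ι → K)) => p.1) (by fun_prop)).and
    ((hT.cl.preimage (f := fun p : (ι → K) × ((ι → K) × (Fin r → ι → K)) => p.2.1) (by fun_prop)).and (Cl.eq (by fun_prop) (by fun_prop)))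
  obtain ⟨s, hs, h1, h2⟩ := exists_decomp hN
  let D : Set ((ι → K) × ((ι → K) × (Fin r → ι → K))) := {p | p.1 ∈ T ∧ p.1 = p.2.1}
  have hDcl : Cl D := (hT.cl.preimage (f := fun p : (ι → K) × ((ι → K) × (Fin r → ι → K)) => p.1) (by fun_prop)).and (Cl.eq (by fun_prop) (by fun_prop))
  have hDim : D = (fun q : (ι → K) × (Fin r → ι → K) => (q.1, q.1, q.2)) '' (T ×ˢ Set.univ) := by
    ext ⟨a, b, l⟩
    constructor
    · rintro ⟨h1, h2⟩
      simp only at h1 h2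
      subst h2
      exact ⟨(a, l), ⟨h1, trivial⟩, rfl⟩
    · rintro ⟨⟨a', l'⟩, ⟨h1, -⟩, h2⟩
      simp only [Prod.mk.injEq] at h2
      obtain ⟨rfl, rfl, rfl⟩ := h2
      exact ⟨h1, rfl⟩
  have hDirr : Irr D := by
    rw [hDim]; exact (hT.irr.prod irr_univ).image (by fun_prop)
  have hDd : dge (r + dm (Fin r → ι → K)) D := by
    refine dom hDcl hDirr (f := fun p => (p.1, p.2.2)) (by fun_prop) ?_
    refine (hT.prod dge_univ).mono_set (cl_cl _) (hDirr.image (by fun_prop)).closure ?_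
    rintro ⟨a, l⟩ ⟨h, -⟩
    exact sub_cl _ ⟨(a, a, l), ⟨h, rfl⟩, rfl⟩
  have hDM : D ⊆ Mset r T := by
    rintro ⟨a, b, l⟩ ⟨h, h'⟩
    simp only at h h'
    subst h'
    have : l ∈ {l : Fin r → ι → K | ∀ q ∈ T, (q, q, l) ∈ Mset r T} := by rw [hu]; trivial
    exact this a h
  obtain ⟨Ni, n1, n2⟩ : ∃ Ni ∈ {A ∈ s | ¬ A ⊆ {p | p.1 = p.2.1}}, D ⊆ Ni := by
    have hfin : {A ∈ s | ¬ A ⊆ {p | p.1 = p.2.1}}.Finite := hs.subset (Set.sep_subset _ _)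
    refine hDirr.biUnion (A := fun A => A) hfin (fun A hA => (h1 A hA.1).1) (hDM.trans (cl_sub (Cl.biUnion hfin (fun A hA => (h1 A hA.1).1)) ?_))
    rintro p ⟨hp1, hp2⟩
    have hpN : p ∈ N := hp2
    rw [h2] at hpN
    obtain ⟨A, hA, hpA⟩ := hpN
    simp only [Set.mem_iUnion]
    exact ⟨A, ⟨hA, fun h => hp1 (h hpA)⟩, hpA⟩
  obtain ⟨hNi, hNi'⟩ := h1 Ni n1.1
  have hNiN : Ni ⊆ N := by rw [h2]; exact Set.subset_sUnion_of_mem n1.1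
  obtain ⟨p, hp, hpne⟩ := Set.not_subset.1 n1.2
  have hdNi : dge (r + dm (Fin r → ι → K) + 1) Ni :=
    ⟨hNi, hNi', D, ⟨n2, fun h => hpne (h hp).2⟩, hDd⟩
  obtain ⟨j, hj⟩ := Function.ne_iff.1 (fun h => hpne h : p.1 ≠ p.2.1)
  have hTs : ∀ T0 ⊆ T, ¬ dge (r+1) T0 := fun T0 h h' => hT' (h'.mono_set hT.cl hT.irr h)
  have hpN := hNiN hp
  obtain ⟨g, g1, g2, g3⟩ := param hT.cl hTs (b := p.1) hpN.1
  obtain ⟨g', g1', g2', g3'⟩ := param hT.cl hTs (b := p.2.1) hpN.2.1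
  refine dim_bound (U := Ni) (f := fun q : (ι → K) × ((ι → K) × (Fin r → ι → K)) => (g q.1, g' q.2.1, fun (a : Fin r) (j' : {j' // j' ≠ j}) => q.2.2 a j')) (by fun_prop) hp ?_ (hdNi.mono ?_)
  · intro T' t1 t2 t3 t4 t5 q hq
    have c1 := const_of_finite' t3 (f := fun q : (ι → K) × ((ι → K) × (Fin r → ι → K)) => q.1) (by fun_prop) g3 (fun x hx => ⟨(hNiN (t1 hx)).1, by
      have := congrArg Prod.fst (t5 x hx); simp only at this; rw [this, g2]⟩) t4 q hq
    have c2 := const_of_finite' t3 (f := fun q : (ι → K) × ((ι → K) × (Fin r → ι → K)) => q.2.1) (by fun_prop) g3' (fun x hx => ⟨(hNiN (t1 hx)).2.1, by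
      have := congrArg (fun z => z.2.1) (t5 x hx); simp only at this; rw [this, g2']⟩) t4 q hq
    refine Prod.ext c1 (Prod.ext c2 (ev_solve (v := p.1 - p.2.1) (j := j) (sub_ne_zero.2 hj) ?_ ?_))
    · have h3 := (hNiN (t1 hq)).2.2
      rw [c1, c2] at h3
      rw [ev_sub, ev_sub, h3, hpN.2.2, sub_self, sub_self]
    · intro a j'
      have := congrArg (fun z => z.2.2) (t5 q hq)
      exact congrFun (congrFun this a) j'
  · simp only [dm_prod, dm_pi, dm_K, Fintype.card_fin, card_ne j]
    apply le_of_eq; ring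

theorem exists_proj {r : ℕ} {T : Set (ι → K)} (hT : dge r T) (hT' : ¬ dge (r+1) T) (hcone : ∀ (c : K), ∀ q ∈ T, c • q ∈ T) :
    ∃ l : Fin r → ι → K, (∀ v ∈ T, ev l v = 0 → v = 0) ∧ ∃ q ∈ T, (q, q, l) ∉ Mset r T := by
  obtain ⟨l, hl⟩ := exists_avoid (s := (Set.univ : Set (Option ι))) Set.finite_univ
    (fun o => o.elim {l : Fin r → ι → K | ∀ q ∈ T, (q, q, l) ∈ Mset r T} 
      (fun j => cl (Prod.snd '' {p : (ι → K) × (Fin r → ι → K) | p.1 ∈ T ∧ p.1 j = 1 ∧ ev p.2 p.1 = 0})))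
    (by
      rintro (_ | j) -
      · exact Cl.all fun q => Cl.imp fun _ => (cl_cl _).preimage (f := fun l => (q, q, l)) (by fun_prop)
      · exact cl_cl _)
    (by
      rintro (_ | j) -
      · exact projB hT hT'
      · exact projA hT hT' hcone j)
  refine ⟨l, fun v hv h0 => ?_, ?_⟩
  · by_contra hne
    obtain ⟨j, hj⟩ := Function.ne_iff.1 hne
    refine hl (some j) trivial (sub_cl _ ⟨((v j)⁻¹ • v, l), ⟨hcone _ _ hv, ?_, ?_⟩, rfl⟩)
    · exact inv_mul_cancel₀ hj
    · simp only [ev_smul, h0, smul_zero]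
  · have := hl none trivial
    simp only [Option.elim, Set.mem_setOf_eq, not_forall] at this
    obtain ⟨q, hq, h⟩ := this
    exact ⟨q, hq, h⟩
end Proj
end ZGeo

open Topology
set_option linter.unusedSectionVars false
set_option linter.deprecated false
set_option linter.style.haveILetI false
namespace ZGeo
universe u
variable {K : Type u} [Field K] [ZG K]
variable {X Y W V : Type u} [Var K X] [Var K Y] [Var K W] [Var K V]
theorem union_ne_univ {F G : Set X} (hF : Cl F) (hG : Cl G) (hF' : F ≠ Set.univ) (hG' : G ≠ Set.univ) : F ∪ G ≠ Set.univ := by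
  obtain ⟨x, h1, h2⟩ := avoid2 hF hG hF' hG'
  intro h
  have : x ∈ F ∪ G := by rw [h]; trivial
  exact this.elim h1 h2

theorem exists_of_dense {S : Set X} {f : X → Y} (h : cl (f '' S) = Set.univ) {F : Set Y} (hF : Cl F) (hF' : F ≠ Set.univ) :
    ∃ p ∈ S, f p ∉ F := by
  by_contra hc
  push Not at hc
  refine hF' (Set.eq_univ_of_univ_subset ?_)
  rw [← h]
  exact cl_sub hF (by rintro _ ⟨p, hp, rfl⟩; exact hc p hp)

section Fib
variable {ι : Type} [Fintype ι]

/-- fibred power -/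
def Nset {r : ℕ} (T : Set (ι → K)) (l : Fin r → ι → K) (j : ℕ) : Set ((Fin j → ι → K) × (Fin r → K)) :=
  {p | ∀ c, p.1 c ∈ T ∧ ev l (p.1 c) = p.2}

variable {r : ℕ} {T : Set (ι → K)} {l : Fin r → ι → K}

theorem Nset_cl (hT : Cl T) (l : Fin r → ι → K) (j : ℕ) : Cl (Nset T l j) :=
  Cl.all fun c => (hT.preimage (f := fun p : (Fin j → ι → K) × (Fin r → K) => p.1 c) (by fun_prop)).and
    (Cl.eq (by fun_prop) (by fun_prop))

theorem fib_finite (hT : dge r T) (hcone : ∀ (c : K), ∀ q ∈ T, c • q ∈ T) (hA : ∀ v ∈ T, ev l v = 0 → v = 0) (x : Fin r → K) : {q ∈ T | ev l q = x}.Finite := by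
  refine finite_of_not_dge (hT.cl.and (Cl.eq (by fun_prop) (by fun_prop))) ?_
  intro S hS hd
  by_cases hx : x = 0
  · refine not_dge_one_finite ((Set.finite_singleton (0 : ι → K)).subset fun q hq => hA q (hS hq).1 ?_) hd
    rw [(hS hq).2, hx]
  obtain ⟨a, ha⟩ := Function.ne_iff.1 hx
  let m : K × (ι → K) → (ι → K) := fun q => q.1 • q.2
  have hm : SC m := by fun_prop
  have hirr : Irr (cl (m '' (Set.univ ×ˢ S))) := ((irr_univ.prod hd.irr).image hm).closure
  have hsubT : cl (m '' (Set.univ ×ˢ S)) ⊆ T := cl_sub hT.cl (by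
    rintro _ ⟨⟨c, q⟩, ⟨-, hq⟩, rfl⟩
    exact hcone c q (hS hq).1)
  have hSS : S ⊆ cl (m '' (Set.univ ×ˢ S)) := fun q hq => sub_cl _ ⟨(1, q), ⟨trivial, hq⟩, by simp [m]⟩
  have h0 : (0 : ι → K) ∈ cl (m '' (Set.univ ×ˢ S)) := by
    obtain ⟨q, hq⟩ := hd.irr.1
    exact sub_cl _ ⟨(0, q), ⟨trivial, hq⟩, by simp [m]⟩
  have h0S : (0 : ι → K) ∉ S := fun h => hx (by rw [← (hS h).2, ev_zero])
  have hd2 : dge 2 (cl (m '' (Set.univ ×ˢ S))) := ⟨cl_cl _, hirr, S, ⟨hSS, fun h => h0S (h h0)⟩, hd⟩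
  obtain ⟨T', t1, t2, t3, t4⟩ := cut1 (f := fun q => ev l q a) (g := fun _ => 0) (by fun_prop) (by fun_prop) hd2 h0 (by rw [ev_zero]; rfl)
  have hrel : cl (m '' (Set.univ ×ˢ S)) ⊆ {q | ∀ b, x a * ev l q b = ev l q a * x b} := cl_sub (Cl.all fun b => Cl.eq (by fun_prop) (by fun_prop)) (by
    rintro _ ⟨⟨c, q⟩, ⟨-, hq⟩, rfl⟩ b
    simp only [m, ev_smul, (hS hq).2, Pi.smul_apply, smul_eq_mul]; ring)
  refine not_dge_one_finite ((Set.finite_singleton (0 : ι → K)).subset fun q hq => hA q (hsubT (t3 hq)) ?_) t1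
  funext b
  have h1 := hrel (t3 hq) b
  have h2 := t4 q hq
  rw [h2, zero_mul] at h1
  exact (mul_eq_zero.1 h1).resolve_left ha

theorem ev_dense (hT : dge r T) (hcone : ∀ (c : K), ∀ q ∈ T, c • q ∈ T) (hA : ∀ v ∈ T, ev l v = 0 → v = 0) : cl (ev l '' T) = Set.univ := by
  refine eq_univ_of_dge ((fd_all (f := ev l) (by fun_prop) hT fun p _ => fib_finite hT hcone hA _).mono ?_)
  simp [dm_fin]

theorem moving (hT : dge r T) {j : ℕ} {p : (Fin j → ι → K) × (Fin r → K)} (hp : p ∈ Nset T l j) :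
    ∃ S, dge r S ∧ p ∈ S ∧ S ⊆ Nset T l j := by
  obtain ⟨S, s1, s2, s3, s4⟩ := cut (n := r) (f := fun p : (Fin j → ι → K) × (Fin r → K) => fun c => ev l (p.1 c))
    (g := fun p => fun _ => p.2) (by fun_prop) (by fun_prop)
    (((dge_pow hT j).prod (dge_univ (X := Fin r → K))).mono (by simp [dm_pi, dm_K]; omega)) (p := p) ⟨fun c => (hp c).1, trivial⟩
    (funext fun c => (hp c).2)
  exact ⟨S, s1, s2, fun q hq c => ⟨(s3 hq).1 c, congrFun (s4 q hq) c⟩⟩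

theorem Nset_fib (hT : dge r T) (hcone : ∀ (c : K), ∀ q ∈ T, c • q ∈ T) (hA : ∀ v ∈ T, ev l v = 0 → v = 0) {j : ℕ} (y : Fin r → K) : {p ∈ Nset T l j | p.2 = y}.Finite := by
  refine ((Set.Finite.pi' (fun _ : Fin j => fib_finite hT hcone hA y)).image (fun w => (w, y))).subset ?_
  rintro ⟨w, y'⟩ ⟨h1, rfl⟩
  exact ⟨w, h1, rfl⟩

theorem Nset_push (hT : dge r T) (hcone : ∀ (c : K), ∀ q ∈ T, c • q ∈ T) (hA : ∀ v ∈ T, ev l v = 0 → v = 0) {j n : ℕ} {S : Set ((Fin j → ι → K) × (Fin r → K))} (hS : S ⊆ Nset T l j) (h : dge n S) :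
    dge n (cl (Prod.snd '' S)) :=
  fd_all SC.snd' h fun p _ => (Nset_fib hT hcone hA p.2).subset fun _ hq => ⟨hS hq.1, hq.2⟩

theorem Nset_not (hT : dge r T) (hcone : ∀ (c : K), ∀ q ∈ T, c • q ∈ T) (hA : ∀ v ∈ T, ev l v = 0 → v = 0) {j : ℕ} {S : Set ((Fin j → ι → K) × (Fin r → K))} (hS : S ⊆ Nset T l j) : ¬ dge (r+1) S := by
  intro h
  have := (Nset_push hT hcone hA hS h).le_dm
  rw [dm_fin] at this
  omega

theorem Nset_dense (hT : dge r T) (hcone : ∀ (c : K), ∀ q ∈ T, c • q ∈ T) (hA : ∀ v ∈ T, ev l v = 0 → v = 0) {j : ℕ} {S : Set ((Fin j → ι → K) × (Fin r → K))} (hS : S ⊆ Nset T l j) (h : dge r S) :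
    cl (Prod.snd '' S) = Set.univ :=
  eq_univ_of_dge ((Nset_push hT hcone hA hS h).mono (by rw [dm_fin]))

/-- non-injective tuples -/
def Dset (j r : ℕ) : Set ((Fin j → ι → K) × (Fin r → K)) := {p | ∃ c : {c : Fin j × Fin j // c.1 ≠ c.2}, p.1 c.1.1 = p.1 c.1.2}

theorem Dset_cl (j r : ℕ) : Cl (Dset (K := K) (ι := ι) j r) := Cl.ex fun c => Cl.eq (by fun_prop) (by fun_prop)

theorem inj_of_not_Dset {j r : ℕ} {p : (Fin j → ι → K) × (Fin r → K)} (h : p ∉ Dset j r) : Function.Injective p.1 := by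
  intro a b hab
  by_contra hne
  exact h ⟨⟨(a, b), hne⟩, hab⟩

theorem not_Dset_of_inj {j r : ℕ} {p : (Fin j → ι → K) × (Fin r → K)} (h : Function.Injective p.1) : p ∉ Dset j r := by
  rintro ⟨⟨⟨a, b⟩, hne⟩, hab⟩
  exact hne (h hab)

theorem BadD_ne (hT : dge r T) (hcone : ∀ (c : K), ∀ q ∈ T, c • q ∈ T) (hA : ∀ v ∈ T, ev l v = 0 → v = 0) {j : ℕ} {S : Set ((Fin j → ι → K) × (Fin r → K))} (hS : S ⊆ Nset T l j) (h : dge r S) {p} (hp : p ∈ S) (hinj : Function.Injective p.1) :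
    cl (Prod.snd '' (S ∩ Dset j r)) ≠ Set.univ :=
  image_proper_ne_univ h.cl h.irr (by rw [dm_fin]; exact Nset_not hT hcone hA hS) (h.cl.inter (Dset_cl j r)) Set.inter_subset_left
    (fun h' => not_Dset_of_inj hinj (h' hp).2) SC.snd'

theorem exists_inj_of_ncard {α : Type*} {A : Set α} {n : ℕ} (hA : A.Finite) (h : n ≤ A.ncard) :
    ∃ w : Fin n → α, Function.Injective w ∧ ∀ c, w c ∈ A := by
  rw [Set.ncard_eq_toFinset_card A hA] at h
  obtain ⟨B, hB, hB'⟩ := Finset.exists_subset_card_eq h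
  refine ⟨fun i => (B.equivFinOfCardEq hB').symm i, fun i j h => by simpa using h, fun i => ?_⟩
  have := hB ((B.equivFinOfCardEq hB').symm i).2
  simpa using this

theorem fib_bounded (hT : dge r T) (hT' : ¬ dge (r+1) T) (hcone : ∀ (c : K), ∀ q ∈ T, c • q ∈ T) (hA : ∀ v ∈ T, ev l v = 0 → v = 0) : ∃ B, ∀ x, {q ∈ T | ev l q = x}.ncard ≤ B := by
  classical
  let H : ι → Set ((Fin r → K) × K) := fun c => cl ((fun q => (ev l q, q c)) '' T)
  have hHne : ∀ c, H c ≠ Set.univ := by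
    intro c h
    refine hT' (dom hT.cl hT.irr (f := fun q => (ev l q, q c)) (by fun_prop) ?_)
    show dge _ (H c)
    rw [h]
    exact dge_univ.mono (by simp [dm_prod, dm_fin, dm_K])
  have hb : ∀ c, ∃ m : ℕ, ∀ a, (∀ b, (a, b) ∈ H c) ∨ ({b : K | (a, b) ∈ H c}.Finite ∧ {b : K | (a, b) ∈ H c}.ncard ≤ m) :=
    fun c => Z2_fib (cl_cl _)
  choose m hm using hb
  have hBne : ∀ c, {x | ∀ b, (x, b) ∈ H c} ≠ Set.univ := by
    intro c h
    refine hHne c (Set.eq_univ_of_forall ?_)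
    rintro ⟨x, b⟩
    have : x ∈ {x | ∀ b, (x, b) ∈ H c} := by rw [h]; trivial
    exact this b
  let Bad : Set (Fin r → K) := {x | ∃ c, ∀ b, (x, b) ∈ H c}
  have hBadcl1 : ∀ c, Cl {x : Fin r → K | ∀ b, (x, b) ∈ H c} := fun c => Cl.all fun b => (cl_cl _).preimage (f := fun x => (x, b)) (by fun_prop)
  have hBadcl : Cl Bad := Cl.ex hBadcl1
  have hBadne : Bad ≠ Set.univ := by
    obtain ⟨x, hx⟩ := exists_avoid (s := (Set.univ : Set ι)) Set.finite_univ (fun c => {x | ∀ b, (x, b) ∈ H c}) (fun c _ => hBadcl1 c) (fun c _ => hBne c)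
    intro h
    have : x ∈ Bad := by rw [h]; trivial
    obtain ⟨c, hc⟩ := this
    exact hx c trivial hc
  have hgen : ∀ x ∉ Bad, {q ∈ T | ev l q = x}.ncard ≤ ∏ c, m c := by
    intro x hx
    have h1 : ∀ c, {b : K | (x, b) ∈ H c}.Finite ∧ {b : K | (x, b) ∈ H c}.ncard ≤ m c := fun c =>
      (hm c x).resolve_left fun h => hx ⟨c, h⟩
    let F : ι → Finset K := fun c => (h1 c).1.toFinset
    have h2 : {q ∈ T | ev l q = x} ⊆ ↑(Fintype.piFinset F) := by
      rintro q ⟨hq, hqx⟩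
      simp only [Finset.mem_coe, Fintype.mem_piFinset, F, Set.Finite.mem_toFinset, Set.mem_setOf_eq]
      intro c
      rw [← hqx]
      exact sub_cl _ ⟨q, hq, rfl⟩
    refine (Set.ncard_le_ncard h2 (Finset.finite_toSet _)).trans ?_
    rw [Set.ncard_coe_finset, Fintype.card_piFinset]
    refine Finset.prod_le_prod' fun c _ => ?_
    rw [← Set.ncard_eq_toFinset_card _ (h1 c).1]
    exact (h1 c).2
  refine ⟨∏ c, m c, fun x => ?_⟩
  by_contra hlt
  push Not at hlt
  obtain ⟨w, w1, w2⟩ := exists_inj_of_ncard (fib_finite hT hcone hA x) (Nat.succ_le_of_lt hlt)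
  obtain ⟨S, s1, s2, s3⟩ := moving hT (p := (w, x)) (l := l) w2
  obtain ⟨p, hp, hpB⟩ := exists_of_dense (Nset_dense hT hcone hA s3 s1) (hBadcl.union (cl_cl _)) (union_ne_univ hBadcl (cl_cl _) hBadne (BadD_ne hT hcone hA s3 s1 s2 w1))
  have hpi : Function.Injective p.1 := inj_of_not_Dset fun h => hpB (.inr (sub_cl _ ⟨p, ⟨hp, h⟩, rfl⟩))
  have hc : (Set.range p.1).ncard ≤ {q ∈ T | ev l q = p.2}.ncard := Set.ncard_le_ncard (by
    rintro _ ⟨c, rfl⟩; exact s3 hp c) (fib_finite hT hcone hA _)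
  rw [← Set.image_univ, Set.ncard_image_of_injective _ hpi, Set.ncard_univ, Nat.card_fin] at hc
  have := hgen p.2 fun h => hpB (.inl h)
  omega

theorem exists_W (hT : dge r T) (hT' : ¬ dge (r+1) T) (hcone : ∀ (c : K), ∀ q ∈ T, c • q ∈ T) (hA : ∀ v ∈ T, ev l v = 0 → v = 0) : ∃ (k : ℕ) (W : Set ((Fin k → ι → K) × (Fin r → K))), dge r W ∧ W ⊆ Nset T l k ∧
    (∀ (c : K), ∀ p ∈ W, ((fun j => c • p.1 j, c • p.2) : (Fin k → ι → K) × (Fin r → K)) ∈ W) ∧ (∀ x, ∃ w, (w, x) ∈ W) ∧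
    ∃ Bad : Set (Fin r → K), Cl Bad ∧ Bad ≠ Set.univ ∧ ∀ p ∈ W, p.2 ∉ Bad → Function.Injective p.1 ∧ ∀ q ∈ T, ev l q = p.2 → ∃ c, p.1 c = q := by
  obtain ⟨B, hB⟩ := fib_bounded hT hT' hcone hA
  obtain ⟨k, ⟨x, hx⟩, hk⟩ : ∃ k ∈ Set.range (fun x => {q ∈ T | ev l q = x}.ncard), ∀ k' ∈ Set.range (fun x => {q ∈ T | ev l q = x}.ncard), k' ≤ k := by
    have hbd : BddAbove (Set.range (fun x => {q ∈ T | ev l q = x}.ncard)) := ⟨B, by rintro _ ⟨x, rfl⟩; exact hB x⟩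
    exact ⟨_, Nat.sSup_mem (Set.range_nonempty _) hbd, fun k' hk' => le_csSup hbd hk'⟩
  simp only at hx
  obtain ⟨w, w1, w2⟩ := exists_inj_of_ncard (fib_finite hT hcone hA x) hx.ge
  obtain ⟨S, s1, s2, s3⟩ := moving hT (p := (w, x)) (l := l) w2
  obtain ⟨W, W1, W2, W3, W4, W5⟩ := exists_comp (Nset_cl hT.cl l k) s1.irr s3
  have hd := s1.mono_set W1 W2 W3
  have hW := comp_action W2 W4 W5 (A := fun c p => (fun j => c • p.1 j, c • p.2)) (by fun_prop) (by simp) (by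
    intro c p hp j
    exact ⟨hcone _ _ (hp j).1, by simp only [ev_smul, (hp j).2]⟩)
  refine ⟨k, W, hd, W4, hW, ?_, cl (Prod.snd '' (W ∩ Dset k r)), cl_cl _, BadD_ne hT hcone hA W4 hd (W3 s2) w1, ?_⟩
  · intro x
    have h0 : ((0, 0) : (Fin k → ι → K) × (Fin r → K)) ∈ W := by
      have := hW 0 _ (W3 s2)
      simp only [zero_smul] at this
      exact this
    obtain ⟨T', t1, t2, t3, t4⟩ := cut (n := 1) (f := fun p : ((Fin k → ι → K) × (Fin r → K)) × K => p.1.2) (g := fun p => p.2 • x) (by fun_prop) (by fun_prop)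
      ((hd.prod dge_K).mono (by rw [dm_fin]; omega)) (p := ((0,0),0)) ⟨h0, trivial⟩ (by simp)
    have : ¬ T' ⊆ {((0,0),0)} := fun h => not_dge_one_finite ((Set.finite_singleton _).subset h) t1
    obtain ⟨⟨⟨w', y⟩, c⟩, hp, hpne⟩ := Set.not_subset.1 this
    have hy : y = c • x := t4 _ hp
    have hc : c ≠ 0 := by
      rintro rfl
      rw [zero_smul] at hy
      subst hy
      apply hpne
      have : w' = 0 := by
        funext j
        have := W4 (t3 hp).1 j
        exact hA _ this.1 this.2
      subst this
      rfl
    refine ⟨fun j => c⁻¹ • w' j, ?_⟩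
    have := hW c⁻¹ _ (t3 hp).1
    simp only [hy, smul_smul, inv_mul_cancel₀ hc, one_smul] at this
    exact this
  · intro p hp hpB
    have hpi : Function.Injective p.1 := inj_of_not_Dset fun h => hpB (sub_cl _ ⟨p, ⟨hp, h⟩, rfl⟩)
    refine ⟨hpi, fun q hq hqp => ?_⟩
    have : Set.range p.1 = {q ∈ T | ev l q = p.2} := by
      refine Set.eq_of_subset_of_ncard_le (by rintro _ ⟨c, rfl⟩; exact W4 hp c) ?_ (fib_finite hT hcone hA _)
      rw [← Set.image_univ, Set.ncard_image_of_injective _ hpi, Set.ncard_univ, Nat.card_fin]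
      exact hk _ ⟨p.2, rfl⟩
    have h' : q ∈ Set.range p.1 := by rw [this]; exact ⟨hq, hqp⟩
    exact h'
end Fib
end ZGeo

open Topology
set_option linter.unusedSectionVars false
set_option linter.deprecated false
set_option linter.style.haveILetI false
namespace ZGeo
universe u
variable {K : Type u} [Field K] [ZG K]
variable {X Y W V : Type u} [Var K X] [Var K Y] [Var K W] [Var K V]
section Cone
variable {ι : Type} [Fintype ι]

theorem W_indep {r k : ℕ} {T : Set (ι → K)} (hT : dge r T) (hcone : ∀ (c : K), ∀ q ∈ T, c • q ∈ T)
    {l : Fin r → ι → K} (hA : ∀ v ∈ T, ev l v = 0 → v = 0) {W : Set ((Fin k → ι → K) × (Fin r → K))} (hW : dge r W)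
    (hWN : W ⊆ Nset T l k) {Bad : Set (Fin r → K)} (hB : Cl Bad) (hB' : Bad ≠ Set.univ)
    (hWB : ∀ p ∈ W, p.2 ∉ Bad → Function.Injective p.1 ∧ ∀ q ∈ T, ev l q = p.2 → ∃ c, p.1 c = q)
    {z : (ι → K) → K} (hz : SC z) {p p' : (Fin k → ι → K) × (Fin r → K)} (hp : p ∈ W) (hp' : p' ∈ W) (h : p.2 = p'.2) (t : K) :
    ∏ c, (t - z (p.1 c)) = ∏ c, (t - z (p'.1 c)) := by
  obtain ⟨S, s1, s2, s3, s4⟩ := cut (n := r) (f := fun q : ((Fin k → ι → K) × (Fin r → K)) × ((Fin k → ι → K) × (Fin r → K)) => q.1.2)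
    (g := fun q => q.2.2) (by fun_prop) (by fun_prop) ((hW.prod hW).mono (by rw [dm_fin])) (p := (p, p')) ⟨hp, hp'⟩ h
  have hd : cl ((fun q : ((Fin k → ι → K) × (Fin r → K)) × ((Fin k → ι → K) × (Fin r → K)) => q.1.2) '' S) = Set.univ := by
    refine eq_univ_of_dge ((fd_all (by fun_prop) s1 ?_).mono (by rw [dm_fin]))
    rintro q hq
    refine ((Nset_fib hT hcone hA (j := k) q.1.2).prod (Nset_fib hT hcone hA (j := k) q.1.2)).subset ?_
    rintro ⟨a, b⟩ ⟨h1, h2⟩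
    exact ⟨⟨hWN (s3 h1).1, h2⟩, ⟨hWN (s3 h1).2, by rw [← h2]; exact (s4 _ h1).symm⟩⟩
  refine s1.irr.dense (F := {q | q.1.2 ∈ Bad}) (hB.preimage (by fun_prop)) ?_
    (C := {q | ∏ c, (t - z (q.1.1 c)) = ∏ c, (t - z (q.2.1 c))}) (Cl.eq (by fun_prop) (by fun_prop)) ?_ s2
  · intro hS
    obtain ⟨q, hq, hq'⟩ := exists_of_dense hd hB hB'
    exact hq' (hS hq)
  · rintro ⟨a, b⟩ hq hqB
    have h4 : a.2 = b.2 := s4 _ hq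
    obtain ⟨i1, i2⟩ := hWB a (s3 hq).1 hqB
    obtain ⟨j1, j2⟩ := hWB b (s3 hq).2 (by rw [← h4]; exact hqB)
    have : ∀ c, ∃ c', b.1 c' = a.1 c := fun c => j2 _ (hWN (s3 hq).1 c).1 (by rw [(hWN (s3 hq).1 c).2, h4])
    choose σ hσ using this
    have hi : Function.Injective σ := fun c c' hcc => i1 (by rw [← hσ, ← hσ, hcc])
    exact Fintype.prod_bijective σ (Finite.injective_iff_bijective.1 hi) _ _ fun c => by rw [hσ]

/-- norm function -/
theorem exists_s {r k : ℕ} {T : Set (ι → K)} (hT : dge r T) (hcone : ∀ (c : K), ∀ q ∈ T, c • q ∈ T)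
    {l : Fin r → ι → K} (hA : ∀ v ∈ T, ev l v = 0 → v = 0) {W : Set ((Fin k → ι → K) × (Fin r → K))} (hW : dge r W)
    (hWN : W ⊆ Nset T l k) (hWc : ∀ (c : K), ∀ p ∈ W, ((fun j => c • p.1 j, c • p.2) : (Fin k → ι → K) × (Fin r → K)) ∈ W)
    (hWs : ∀ x, ∃ w, (w, x) ∈ W) {Bad : Set (Fin r → K)} (hB : Cl Bad) (hB' : Bad ≠ Set.univ)
    (hWB : ∀ p ∈ W, p.2 ∉ Bad → Function.Injective p.1 ∧ ∀ q ∈ T, ev l q = p.2 → ∃ c, p.1 c = q)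
    {z : (ι → K) → K} (hz : SC z) (hzc : ∀ (c : K) v, z (c • v) = c * z v) :
    ∃ s : (Option (Fin r) → K) → K, SC s ∧ (∀ y w, (w, fun i => y (some i)) ∈ W → s y = ∏ c, (y none - z (w c))) ∧
      ∀ (c : K) y, s (c • y) = c ^ k * s y := by
  choose w0 hw0 using hWs
  let s : (Option (Fin r) → K) → K := fun y => ∏ c, (y none - z (w0 (fun i => y (some i)) c))
  have hs : ∀ y w, (w, fun i => y (some i)) ∈ W → s y = ∏ c, (y none - z (w c)) := fun y w hw =>
    W_indep hT hcone hA hW hWN hB hB' hWB hz (hw0 _) hw rfl _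
  refine ⟨s, ?_, hs, ?_⟩
  · refine closed_graph (X := ((Fin k → ι → K) × (Fin r → K)) × K) (A := W ×ˢ Set.univ) ((hW.prod dge_K).mono ?_)
      (l := fun q o => o.elim q.2 q.1.2) ?_ ?_ ?_ (E := fun q => ∏ c, (q.2 - z (q.1.1 c))) (by fun_prop) ?_
    · simp [dm_pi, dm_K]
    · refine SC.pi fun o => ?_
      cases o <;> simp only [Option.elim] <;> fun_prop
    · intro y
      refine ⟨((w0 fun i => y (some i), fun i => y (some i)), y none), ⟨hw0 _, trivial⟩, ?_⟩
      funext o; cases o <;> rfl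
    · intro y
      refine ((Nset_fib hT hcone hA (j := k) (fun i => y (some i))).prod (Set.finite_singleton (y none))).subset ?_
      rintro ⟨p, t⟩ ⟨⟨hp, -⟩, rfl⟩
      exact ⟨⟨hWN hp, rfl⟩, rfl⟩
    · rintro ⟨⟨w, x⟩, t⟩ ⟨hq, -⟩
      exact hs (fun o => o.elim t x) w hq
  · intro c y
    rw [hs (c • y) (fun j => c • w0 (fun i => y (some i)) j) (hWc c _ (hw0 _))]
    simp only [s, Pi.smul_apply, smul_eq_mul, hzc, ← mul_sub]
    rw [Finset.prod_mul_distrib, Finset.prod_const, Finset.card_univ, Fintype.card_fin]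
end Cone
end ZGeo

open Topology
set_option linter.unusedSectionVars false
set_option linter.deprecated false
set_option linter.style.haveILetI false
namespace ZGeo
universe u
variable {K : Type u} [Field K] [ZG K]
variable {X Y W V : Type u} [Var K X] [Var K Y] [Var K W] [Var K V]
section Cone
variable {ι : Type} [Fintype ι]

theorem Mset_scale {r : ℕ} {T : Set (ι → K)} {a b : ι → K} {l : Fin r → ι → K} (c : K) (h : (a, b, c • l) ∈ Mset r T) (hc : c ≠ 0) :
    (a, b, l) ∈ Mset r T := by
  have hC : Cl {p : (ι → K) × ((ι → K) × (Fin r → ι → K)) | (p.1, p.2.1, fun i j => c⁻¹ * p.2.2 i j) ∈ Mset r T} :=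
    (cl_cl _ : Cl (Mset r T)).preimage (f := fun p : (ι → K) × ((ι → K) × (Fin r → ι → K)) => (p.1, p.2.1, fun i j => c⁻¹ * p.2.2 i j)) (by fun_prop)
  have h1 : Mset r T ⊆ _ := cl_sub hC (by
    rintro ⟨a, b, l⟩ ⟨h1, h2, h3, h4⟩
    refine sub_cl _ ⟨h1, h2, h3, ?_⟩
    have e1 : ∀ v : ι → K, ev (fun i j => c⁻¹ * l i j) v = c⁻¹ • ev l v := by
      intro v; funext i; simp [ev, Finset.mul_sum, mul_assoc]
    simp only [e1]
    simp only at h4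
    rw [h4])
  have := h1 h
  simp only [Set.mem_setOf_eq, Pi.smul_apply, smul_eq_mul, inv_mul_cancel_left₀ hc] at this
  exact this

theorem tele {k : ℕ} (F G : Fin k → K) : ∏ c, F c - ∏ c, G c =
    ∑ c, (F c - G c) * ((∏ j ∈ Finset.univ.filter (· < c), F j) * ∏ j ∈ Finset.univ.filter (c < ·), G j) := by
  have := Finset.prod_add_ordered Finset.univ G (fun c => F c - G c)
  simp only [add_sub_cancel] at this
  rw [this]
  simp only [add_sub_cancel_left, mul_assoc]

/-- existence of finite difference quotients -/
theorem np_exists {r k : ℕ} {T : Set (ι → K)} (hT : dge r T) (hcone : ∀ (c : K), ∀ q ∈ T, c • q ∈ T)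
    {l : Fin r → ι → K} (hA : ∀ v ∈ T, ev l v = 0 → v = 0) {W : Set ((Fin k → ι → K) × (Fin r → K))} (hW : dge r W)
    (hWN : W ⊆ Nset T l k) (hWs : ∀ x, ∃ w, (w, x) ∈ W)
    {cz : ι → K} {z : (ι → K) → K} (hzdef : z = fun v => ∑ j, cz j * v j)
    {s : (Option (Fin r) → K) → K} (hs : ∀ y w, (w, fun i => y (some i)) ∈ W → s y = ∏ c, (y none - z (w c)))
    {ex : Fin r → K} (hex : ex ≠ 0) {y : Option (Fin r) → K}
    (hy : (fun i => y (some i)) ∉ cl (ev l '' {q | q ∈ T ∧ (q, q, l) ∈ Mset r T})) :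
    ∃ S, (y, 0, 1, S) ∈ Phi s (fun o => o.elim 0 ex) := by
  have hz : SC z := by rw [hzdef]; fun_prop
  have hzsub : ∀ a b, z (a - b) = z a - z b := by
    intro a b; simp only [hzdef, Pi.sub_apply, mul_sub, Finset.sum_sub_distrib]
  set x : Fin r → K := fun i => y (some i) with hx
  obtain ⟨w, hw⟩ := hWs x
  obtain ⟨P, p1, p2, p3, p4⟩ := cut (n := r + 1) 
    (f := fun q : (((Fin k → ι → K) × (Fin r → K)) × ((Fin k → ι → K) × (Fin r → K))) × K => q.1.1.2)
    (g := fun q => q.1.2.2 + q.2 • ex) (by fun_prop) (by fun_prop) (((hW.prod hW).prod dge_K).mono (by rw [dm_fin]; omega))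
    (p := (((w, x), (w, x)), 0)) ⟨⟨hw, hw⟩, trivial⟩ (by simp)
  have hfib : ∀ (x' : Fin r → K) (δ : K), {q ∈ P | q.1.2.2 = x' ∧ q.2 = δ}.Finite := by
    intro x' δ
    refine (((Nset_fib hT hcone hA (j := k) (x' + δ • ex)).prod (Nset_fib hT hcone hA (j := k) x')).prod (Set.finite_singleton δ)).subset ?_
    rintro ⟨⟨a, b⟩, d⟩ ⟨h1, h2, h3⟩
    simp only at h2 h3
    refine ⟨⟨⟨hWN (p3 h1).1.1, ?_⟩, ⟨hWN (p3 h1).1.2, h2⟩⟩, h3⟩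
    rw [← h2, ← h3]; exact p4 _ h1
  have hPd : cl ((fun q : (((Fin k → ι → K) × (Fin r → K)) × ((Fin k → ι → K) × (Fin r → K))) × K => (q.1.2.2, q.2)) '' P) = Set.univ := by
    refine eq_univ_of_dge ((fd_all (by fun_prop) p1 ?_).mono (by simp [dm_prod, dm_K, dm_pi]))
    intro q hq
    refine (hfib q.1.2.2 q.2).subset ?_
    rintro q' ⟨h1, h2⟩
    simp only [Prod.mk.injEq] at h2
    exact ⟨h1, h2⟩
  have hP0 : ¬ P ⊆ {q | q.2 = 0} := by
    intro h
    obtain ⟨q, hq, hq'⟩ := exists_of_dense hPd (F := {q | q.2 = 0}) (Cl.eq (by fun_prop) (by fun_prop)) (by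
      intro h
      have : ((0, 1) : (Fin r → K) × K) ∈ {q : (Fin r → K) × K | q.2 = 0} := by rw [h]; trivial
      exact one_ne_zero this)
    exact hq' (h hq)
  let Θg : ((((Fin k → ι → K) × (Fin r → K)) × ((Fin k → ι → K) × (Fin r → K))) × K) × K →
      ((((Fin k → ι → K) × (Fin r → K)) × ((Fin k → ι → K) × (Fin r → K))) × K) × (K × (Fin k → K)) :=
    fun q => (q.1, q.2 * q.1.2, fun c => q.2 * (z (q.1.1.1.1 c) - z (q.1.1.2.1 c)))
  have hΘg : SC Θg := by fun_prop
  set Θ := cl (Θg '' (P ×ˢ Set.univ)) with hΘdef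
  have hΘirr : Irr Θ := ((p1.irr.prod irr_univ).image hΘg).closure
  have hgen : ∀ {C : Set _}, Cl C → (∀ q ∈ P, q.2 ≠ 0 → ∀ α, Θg (q, α) ∈ C) → Θ ⊆ C := by
    intro C hC h
    refine cl_sub hC ?_
    rintro _ ⟨⟨q, α⟩, ⟨hq, -⟩, rfl⟩
    exact p1.irr.dense (F := {q | q.2 = 0}) (Cl.eq (by fun_prop) (by fun_prop)) hP0 (C := {q | Θg (q, α) ∈ C})
      (hC.preimage (by fun_prop)) (fun q hq h' => h q hq h' α) hq
  have hΘP : ∀ θ ∈ Θ, θ.1 ∈ P := hgen (C := {θ | θ.1 ∈ P}) (p1.cl.preimage SC.fst') (fun q hq _ _ => hq)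
  have hΘd : dge (r + 2) Θ := by
    refine dom (cl_cl _) hΘirr (f := fun θ => (θ.1.1.2.2, θ.1.2, θ.2.1)) (by fun_prop) ?_
    have : cl ((fun θ : ((((Fin k → ι → K) × (Fin r → K)) × ((Fin k → ι → K) × (Fin r → K))) × K) × (K × (Fin k → K)) => (θ.1.1.2.2, θ.1.2, θ.2.1)) '' Θ) = Set.univ := by
      refine Set.eq_univ_of_forall ?_
      rintro ⟨x', δ, μ⟩
      have h1 : P ⊆ {q | (q.1.2.2, q.2, μ) ∈ cl ((fun θ : ((((Fin k → ι → K) × (Fin r → K)) × ((Fin k → ι → K) × (Fin r → K))) × K) × (K × (Fin k → K)) => (θ.1.1.2.2, θ.1.2, θ.2.1)) '' Θ)} := by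
        refine p1.irr.dense (F := {q | q.2 = 0}) (Cl.eq (by fun_prop) (by fun_prop)) hP0 ((cl_cl _).preimage (by fun_prop)) ?_
        intro q hq hq0
        refine sub_cl _ ⟨Θg (q, μ / q.2), sub_cl _ ⟨_, ⟨hq, trivial⟩, rfl⟩, ?_⟩
        simp only [Θg, Prod.mk.injEq, true_and]
        exact div_mul_cancel₀ _ hq0
      have h2 : Set.univ ⊆ {q : (Fin r → K) × K | (q.1, q.2, μ) ∈ cl ((fun θ : ((((Fin k → ι → K) × (Fin r → K)) × ((Fin k → ι → K) × (Fin r → K))) × K) × (K × (Fin k → K)) => (θ.1.1.2.2, θ.1.2, θ.2.1)) '' Θ)} := by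
        rw [← hPd]
        refine cl_sub ((cl_cl _).preimage (f := fun q : (Fin r → K) × K => (q.1, q.2, μ)) (by fun_prop)) ?_
        rintro _ ⟨q, hq, rfl⟩
        exact h1 hq
      exact h2 (Set.mem_univ (x', δ))
    rw [this]
    exact dge_univ.mono (by simp [dm_prod, dm_K, dm_pi])
  have ho : ((((w, x), (w, x)), 0), 0, 0) ∈ Θ := sub_cl _ ⟨(_, 0), ⟨p2, trivial⟩, by simp [Θg]; rfl⟩
  obtain ⟨T1, t1, t2, t3, t4⟩ := cut (n := 1) (f := fun θ : ((((Fin k → ι → K) × (Fin r → K)) × ((Fin k → ι → K) × (Fin r → K))) × K) × (K × (Fin k → K)) => (θ.1.1.2.2, θ.1.2))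
    (g := fun _ => (x, (0:K))) (by fun_prop) (by fun_prop) (hΘd.mono (by simp [dm_prod, dm_K, dm_pi]; omega)) ho rfl
  have hc1 : ∀ θ ∈ T1, θ.1 = (((w, x), (w, x)), 0) := const_of_finite' t1.irr (f := fun θ => θ.1) (by fun_prop) (hfib x 0)
    (fun θ hθ => ⟨hΘP _ (t3 hθ), by
      have := t4 _ hθ
      simp only [Prod.mk.injEq] at this
      exact this⟩) t2
  obtain ⟨θ, hθ, hθne⟩ := Set.not_subset.1 (fun h : T1 ⊆ {((((w, x), (w, x)), 0), 0, 0)} => not_dge_one_finite ((Set.finite_singleton _).subset h) t1)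
  obtain ⟨π, μ, κ⟩ := θ
  have hπ : π = (((w, x), (w, x)), 0) := hc1 _ hθ
  subst hπ
  have hΘM : ∀ c, ∀ θ ∈ Θ, (θ.1.1.1.1 c, θ.1.1.2.1 c, fun i j => θ.2.2 c * l i j - θ.2.1 * (ex i * cz j)) ∈ Mset r T := by
    intro c
    refine hgen (C := {θ | (θ.1.1.1.1 c, θ.1.1.2.1 c, fun i j => θ.2.2 c * l i j - θ.2.1 * (ex i * cz j)) ∈ Mset r T})
      ((cl_cl _ : Cl (Mset r T)).preimage (by fun_prop)) ?_
    rintro ⟨⟨a, b⟩, δ⟩ hq hδ α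
    simp only at hδ
    have ha := hWN (p3 hq).1.1 c
    have hb := hWN (p3 hq).1.2 c
    have hab : a.2 = b.2 + δ • ex := p4 _ hq
    simp only at ha hb
    refine sub_cl _ ⟨?_, ha.1, hb.1, ?_⟩
    · intro h
      simp only [Θg] at h
      rw [h, hb.2] at ha
      rw [← ha.2] at hab
      have : δ • ex = 0 := by simpa using hab.symm
      exact (smul_ne_zero hδ hex) this
    · have e1 : ∀ v : ι → K, ∀ κ μ : K, ev (fun i j => κ * l i j - μ * (ex i * cz j)) v = fun i => κ * ev l v i - μ * ex i * z v := by
        intro v κ μ; funext i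
        simp only [ev, hzdef, sub_mul, Finset.sum_sub_distrib, Finset.mul_sum]
        congr 1 <;> exact Finset.sum_congr rfl fun j _ => by ring
      simp only [Θg, e1, ha.2, hb.2, hab]
      funext i
      simp only [Pi.add_apply, Pi.smul_apply, smul_eq_mul]
      ring
  have hμ : μ ≠ 0 := by
    rintro rfl
    have hκ : κ ≠ 0 := by
      rintro rfl; exact hθne rfl
    obtain ⟨c, hc⟩ := Function.ne_iff.1 hκ
    have := hΘM c _ (t3 hθ)
    simp only [zero_mul, sub_zero] at this
    have h2 := Mset_scale (κ c) (l := l) this hc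
    exact hy (sub_cl _ ⟨w c, ⟨(hWN hw c).1, h2⟩, (hWN hw c).2⟩)
  let t := y none
  let R : ((((Fin k → ι → K) × (Fin r → K)) × ((Fin k → ι → K) × (Fin r → K))) × K) → Fin k → K := fun q c =>
    (∏ j ∈ Finset.univ.filter (· < c), (t - z (q.1.1.1 j))) * ∏ j ∈ Finset.univ.filter (c < ·), (t - z (q.1.2.1 j))
  have hR : SC R := by fun_prop
  let yy : (Fin r → K) → Option (Fin r) → K := fun x o => o.elim t x
  have hyy : SC yy := by
    refine SC.pi fun o => ?_
    cases o <;> simp only [yy, Option.elim] <;> fun_prop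
  have hphi : ∀ θ ∈ Θ, (yy θ.1.1.2.2, θ.1.2, θ.2.1, - ∑ c, θ.2.2 c * R θ.1 c) ∈ Phi s (fun o => o.elim 0 ex) := by
    refine hgen (C := {θ | (yy θ.1.1.2.2, θ.1.2, θ.2.1, - ∑ c, θ.2.2 c * R θ.1 c) ∈ Phi s (fun o => o.elim 0 ex)})
      ((Phi_cl _ _).preimage (by fun_prop)) ?_
    rintro ⟨⟨a, b⟩, δ⟩ hq hδ α
    have hab : a.2 = b.2 + δ • ex := p4 _ hq
    refine Phi_gen hδ ?_
    have e0 : (yy b.2 + δ • fun o : Option (Fin r) => (o.elim 0 ex : K)) = yy a.2 := by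
      funext o; cases o
      · simp [yy]
      · simp [yy, hab]
    simp only [Θg] at e0 ⊢
    rw [e0, hs (yy a.2) a.1 (p3 hq).1.1, hs (yy b.2) b.1 (p3 hq).1.2, tele, ← Finset.sum_neg_distrib, Finset.sum_mul, Finset.mul_sum]
    refine Finset.sum_congr rfl fun c _ => ?_
    simp only [R, yy, Option.elim]
    ring
  have h3 := Phi_cone μ⁻¹ (hphi _ (t3 hθ))
  simp only [inv_mul_cancel₀ hμ] at h3
  have e2 : yy x = y := by funext o; cases o <;> rfl
  rw [e2] at h3
  exact ⟨_, h3⟩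
end Cone
end ZGeo

open Topology
set_option linter.unusedSectionVars false
set_option linter.deprecated false
set_option linter.style.haveILetI false
namespace ZGeo
universe u
variable {K : Type u} [Field K] [ZG K]
variable {X Y W V : Type u} [Var K X] [Var K Y] [Var K W] [Var K V]
section Cone
variable {ι : Type} [Fintype ι]

theorem exists_functional {J : Type*} [Finite J] (v : J → (ι → K)) (hv : ∀ i, v i ≠ 0) :
    ∃ c : ι → K, ∀ i, ∑ j, c j * v i j ≠ 0 := by
  classical
  haveI : Infinite K := ZG.hinf
  obtain ⟨f, hf⟩ := Module.exists_dual_forall_apply_ne_zero (K := K) v hv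
  refine ⟨fun j => f (fun j' => if j = j' then 1 else 0), fun i => ?_⟩
  have := hf i
  rw [LinearMap.pi_apply_eq_sum_univ f] at this
  simpa [mul_comm] using this

theorem eval_aeval {κ κ' : Type} (f : κ → MvPolynomial κ' K) (q : κ' → K) (P : MvPolynomial κ K) :
    MvPolynomial.eval q (MvPolynomial.aeval f P) = MvPolynomial.eval (fun o => MvPolynomial.eval q (f o)) P := by
  induction P using MvPolynomial.induction_on with
  | C a => simp
  | add p q hp hq => simp only [map_add, hp, hq]
  | mul_X p i hp => simp only [map_mul, hp, MvPolynomial.aeval_X, MvPolynomial.eval_X]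

theorem s_poly {r k : ℕ} {T : Set (ι → K)} (hT : dge r T) (hT' : ¬ dge (r+1) T) (hcone : ∀ (c : K), ∀ q ∈ T, c • q ∈ T)
    {l : Fin r → ι → K} (hA : ∀ v ∈ T, ev l v = 0 → v = 0) (hM : ∃ q ∈ T, (q, q, l) ∉ Mset r T)
    {W : Set ((Fin k → ι → K) × (Fin r → K))} (hW : dge r W)
    (hWN : W ⊆ Nset T l k) (hWs : ∀ x, ∃ w, (w, x) ∈ W)
    {cz : ι → K} {z : (ι → K) → K} (hzdef : z = fun v => ∑ j, cz j * v j)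
    {s : (Option (Fin r) → K) → K} (hsc : SC s) (hs : ∀ y w, (w, fun i => y (some i)) ∈ W → s y = ∏ c, (y none - z (w c)))
    (hom : ∀ (c : K) y, s (c • y) = c ^ k * s y) : ∃ P : MvPolynomial (Option (Fin r)) K, ∀ y, MvPolynomial.eval y P = s y := by
  haveI : Infinite K := ZG.hinf
  let tt : Fin (k+1) → K := fun i => Infinite.natEmbedding K i
  have htt : Function.Injective tt := fun i j h => Fin.ext ((Infinite.natEmbedding K).injective h)
  refine poly_of_interp tt s ?_
  rintro (_ | i) y
  · obtain ⟨w, hw⟩ := hWs (fun i => y (some i))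
    have hu : ∀ t, s (Function.update y none t) = ∏ c, (t - z (w c)) := by
      intro t
      rw [hs (Function.update y none t) w (by simpa using hw)]
      simp
    let Q : Polynomial K := ∏ c, (Polynomial.X - Polynomial.C (z (w c)))
    have hQ : ∀ t, Q.eval t = s (Function.update y none t) := by
      intro t; rw [hu]; simp [Q, Polynomial.eval_prod]
    have hdeg : Q.degree < (Finset.univ : Finset (Fin (k+1))).card := by
      simp only [Q, Polynomial.degree_prod, Polynomial.degree_X_sub_C]
      simp
      exact_mod_cast Nat.lt_succ_self k
    have := Lagrange.eq_interpolate (s := Finset.univ) (v := tt) htt.injOn hdeg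
    have h2 := hQ (y none)
    rw [Function.update_eq_self] at h2
    rw [← h2, this, Lagrange.interpolate_apply, Polynomial.eval_finset_sum]
    refine Finset.sum_congr rfl fun j _ => ?_
    rw [Polynomial.eval_mul, Polynomial.eval_C, hQ, mul_comm]
  · let ex : Fin r → K := Pi.single i 1
    have hex : ex ≠ 0 := by
      intro h
      have := congrFun h i
      simp [ex] at this
    let e : Option (Fin r) → K := fun o => o.elim 0 ex
    have hF : Cl {q | q ∈ T ∧ (q, q, l) ∈ Mset r T} := hT.cl.and ((cl_cl _ : Cl (Mset r T)).preimage (f := fun q : ι → K => (q, q, l)) (by fun_prop))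
    have hFne : cl (ev l '' {q | q ∈ T ∧ (q, q, l) ∈ Mset r T}) ≠ Set.univ :=
      image_proper_ne_univ hT.cl hT.irr (by rw [dm_fin]; exact hT') hF (fun q hq => hq.1) (by
        obtain ⟨q, h1, h2⟩ := hM
        exact fun h => h2 (h h1).2) (by fun_prop)
    let B2 : Set (Option (Fin r) → K) := {y | (fun i => y (some i)) ∈ cl (ev l '' {q | q ∈ T ∧ (q, q, l) ∈ Mset r T})}
    have hB2 : Cl B2 := (cl_cl _).preimage (f := fun y : Option (Fin r) → K => fun i => y (some i)) (by fun_prop)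
    have hB2' : B2 ≠ Set.univ := by
      intro h
      refine hFne (Set.eq_univ_of_forall fun x => ?_)
      have : (fun o => o.elim 0 x : Option (Fin r) → K) ∈ B2 := by rw [h]; trivial
      exact this
    have hc := count hsc hom (e := e) (Bad := Bad1 s e ∪ B2) ((Bad1_cl s e).union hB2) (union_ne_univ (Bad1_cl s e) hB2 (Bad1_ne hsc e) hB2') (by
      intro a ha
      obtain ⟨S, hS⟩ := np_exists hT hcone hA hW hWN hWs hzdef hs hex (y := a) (fun h => ha (.inr h))
      exact Phi_unique hsc (fun h => ha (.inl h)) hS) htt (Function.update y (some i) 0) (y (some i))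
    have hup : ∀ t, Function.update y (some i) 0 + t • e = Function.update y (some i) t := by
      intro t
      funext o
      rcases o with _ | j
      · simp [e]
      · by_cases hj : j = i
        · subst hj; simp [e, ex]
        · simp [e, ex, hj]
    simp only [hup, Function.update_eq_self] at hc
    exact hc

theorem cone {T : Set (ι → K)} (hTc : Cl T) (hTi : Irr T) (hcone : ∀ (c : K), ∀ q ∈ T, c • q ∈ T) {p : ι → K} (hp : p ∉ T) :
    ∃ P : MvPolynomial ι K, (∀ q ∈ T, MvPolynomial.eval q P = 0) ∧ MvPolynomial.eval p P ≠ 0 := by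
  obtain ⟨r, hT, hT'⟩ := exists_dim hTc hTi
  obtain ⟨l, hA, hM⟩ := exists_proj hT hT' hcone
  obtain ⟨k, W, hW, hWN, hWc, hWs, Bad, hB, hB', hWB⟩ := exists_W hT hT' hcone hA
  haveI := (fib_finite hT hcone hA (ev l p)).to_subtype
  obtain ⟨cz, hcz⟩ := exists_functional (fun q : {q ∈ T | ev l q = ev l p} => p - q.1) (fun q h => hp (by
    rw [sub_eq_zero.1 h]; exact q.2.1))
  obtain ⟨z, hzdef⟩ : ∃ z : (ι → K) → K, z = fun v => ∑ j, cz j * v j := ⟨_, rfl⟩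
  have hz : SC z := by rw [hzdef]; fun_prop
  obtain ⟨s, hsc, hs, hom⟩ := exists_s hT hcone hA hW hWN hWc hWs hB hB' hWB hz (by
    intro c v; simp only [hzdef, Pi.smul_apply, smul_eq_mul, Finset.mul_sum]
    exact Finset.sum_congr rfl fun j _ => by ring)
  obtain ⟨P, hP⟩ := s_poly hT hT' hcone hA hM hW hWN hWs hzdef hsc hs hom
  let f : Option (Fin r) → MvPolynomial ι K := fun o => o.elim (∑ j, MvPolynomial.C (cz j) * MvPolynomial.X j)
    (fun a => ∑ j, MvPolynomial.C (l a j) * MvPolynomial.X j)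
  let yy : (ι → K) → Option (Fin r) → K := fun q o => o.elim (z q) (ev l q)
  have hyy : SC yy := by
    refine SC.pi fun o => ?_
    cases o <;> simp only [yy, Option.elim] <;> fun_prop
  have hev : ∀ q, MvPolynomial.eval q (MvPolynomial.aeval f P) = s (yy q) := by
    intro q
    rw [← hP]
    have : yy q = fun o => MvPolynomial.eval q (f o) := by
      funext o; cases o <;> simp [yy, f, ev, hzdef]
    rw [this]
    exact eval_aeval f q P
  refine ⟨MvPolynomial.aeval f P, ?_, ?_⟩
  · intro q hq
    rw [hev]
    refine hTi.dense (F := {q | ev l q ∈ Bad}) (hB.preimage (by fun_prop)) ?_ (C := {q | s (yy q) = 0}) (Cl.eq (by fun_prop) (by fun_prop)) ?_ hq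
    · intro h
      obtain ⟨q, h1, h2⟩ := exists_of_dense (ev_dense hT hcone hA) hB hB'
      exact h2 (h h1)
    · intro q hq hqB
      obtain ⟨w, hw⟩ := hWs (ev l q)
      obtain ⟨c, hc⟩ := (hWB _ hw hqB).2 q hq rfl
      simp only [Set.mem_setOf_eq]
      rw [hs (yy q) w hw]
      refine Finset.prod_eq_zero (Finset.mem_univ c) ?_
      simp only at hc
      rw [hc]; simp [yy]
  · rw [hev]
    obtain ⟨w, hw⟩ := hWs (ev l p)
    rw [hs (yy p) w hw]
    refine Finset.prod_ne_zero_iff.2 fun c _ => ?_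
    have := hcz ⟨w c, (hWN hw c)⟩
    simp only [Pi.sub_apply, mul_sub, Finset.sum_sub_distrib] at this
    simpa [yy, hzdef] using this
end Cone
end ZGeo

open Topology
set_option linter.unusedSectionVars false
set_option linter.deprecated false
set_option linter.style.haveILetI false
namespace ZGeo
universe u
variable {K : Type u} [Field K] [ZG K]
variable {X Y W V : Type u} [Var K X] [Var K Y] [Var K W] [Var K V]
section Fin
theorem affine {n : ℕ} {T : Set (Fin n → K)} (hT : Cl T) (hTi : Irr T) {p : Fin n → K} (hp : p ∉ T) :
    ∃ P : MvPolynomial (Fin n) K, (∀ q ∈ T, MvPolynomial.eval q P = 0) ∧ MvPolynomial.eval p P ≠ 0 := by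
  let h : (Fin n → K) × K → Option (Fin n) → K := fun q o => o.elim q.2 (fun i => q.2 * q.1 i)
  have hh : SC h := by
    refine SC.pi fun o => ?_
    cases o <;> simp only [h, Option.elim] <;> fun_prop
  have hdom : Cl (T ×ˢ (Set.univ : Set K)) := hT.prod Cl.univ
  have hdomi : Irr (T ×ˢ (Set.univ : Set K)) := hTi.prod irr_univ
  let H := cl (h '' (T ×ˢ Set.univ))
  have hHi : Irr H := (hdomi.image hh).closure
  have hcone : ∀ (c : K), ∀ q ∈ H, c • q ∈ H := by
    intro c
    refine cl_sub (C := {q | c • q ∈ H}) ((cl_cl _).preimage (by fun_prop)) ?_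
    rintro _ ⟨⟨q, t⟩, ⟨hq, -⟩, rfl⟩
    refine sub_cl _ ⟨(q, c * t), ⟨hq, trivial⟩, ?_⟩
    funext o; cases o <;> simp [h, mul_assoc]
  have hpH : h (p, 1) ∉ H := by
    intro hpH
    obtain ⟨F, f1, f2, f3⟩ := Z1 hdom hdomi.1 hh
    obtain ⟨d, d1, d2⟩ := exists_dim (cl_cl _) hHi
    obtain ⟨S, s1, s2, s3, s4⟩ := cut1 (n := d) (f := fun q : (Option (Fin n) → K) × K => q.1 none * q.2) (g := fun _ => 1)
      (by fun_prop) (by fun_prop) (U := H ×ˢ Set.univ) (d1.prod dge_K) (p := (h (p, 1), 1)) ⟨hpH, trivial⟩ (by simp [h])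
    have hi : Set.InjOn Prod.fst S := by
      rintro ⟨v, u⟩ h1 ⟨v', u'⟩ h2 (rfl : v = v')
      have e1 : v none * u = 1 := s4 _ h1
      have e2 : v none * u' = 1 := s4 _ h2
      have h0 : v none ≠ 0 := by intro h0; rw [h0] at e1; simp at e1
      rw [mul_left_cancel₀ h0 (e1.trans e2.symm)]
    have hd := fd_inj SC.fst' s1 hi
    have hsub : cl (Prod.fst '' S) ⊆ H := cl_sub (cl_cl _) (by rintro _ ⟨q, hq, rfl⟩; exact (s3 hq).1)
    have heq := hd.eq_of_subset hsub (cl_cl _) hHi d2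
    have := s1.irr.dense (F := {q | q.1 ∈ F}) (f1.preimage SC.fst') (by
      intro hS
      refine f2 ?_
      show H ⊆ F
      rw [← heq]
      exact cl_sub f1 (by rintro _ ⟨q, hq, rfl⟩; exact hS hq)) (C := {q | (fun i => q.2 * q.1 (some i)) ∈ T})
      (hT.preimage (f := fun q : (Option (Fin n) → K) × K => fun i => q.2 * q.1 (some i)) (by fun_prop)) (by
        rintro ⟨v, u⟩ hq hF
        obtain ⟨⟨q, t⟩, ⟨hqT, -⟩, rfl⟩ := f3 _ (s3 hq).1 hF
        have e1 : t * u = 1 := s4 _ hq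
        have : (fun i => u * h (q, t) (some i)) = q := by
          funext i
          simp only [h, Option.elim]
          rw [← mul_assoc, mul_comm u, e1, one_mul]
        simp only [Set.mem_setOf_eq]
        rw [this]; exact hqT) s2
    simp only [Set.mem_setOf_eq, h, Option.elim, one_mul] at this
    exact hp this
  obtain ⟨P, P1, P2⟩ := cone (cl_cl _) hHi hcone hpH
  refine ⟨MvPolynomial.aeval (fun o : Option (Fin n) => (o.elim 1 MvPolynomial.X : MvPolynomial (Fin n) K)) P, ?_, ?_⟩
  · intro q hq
    rw [eval_aeval]
    have : (fun o : Option (Fin n) => MvPolynomial.eval q (o.elim 1 MvPolynomial.X : MvPolynomial (Fin n) K)) = h (q, 1) := by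
      funext o; cases o <;> simp [h]
    rw [this]
    exact P1 _ (sub_cl _ ⟨(q, 1), ⟨hq, trivial⟩, rfl⟩)
  · rw [eval_aeval]
    have : (fun o : Option (Fin n) => MvPolynomial.eval p (o.elim 1 MvPolynomial.X : MvPolynomial (Fin n) K)) = h (p, 1) := by
      funext o; cases o <;> simp [h]
    rw [this]
    exact P2

theorem zar_closed {n : ℕ} {C : Set (Fin n → K)} (hC : Cl C) : ZariskiClosedSet K C := by
  refine ⟨{f | ∀ x ∈ C, MvPolynomial.eval x f = 0}, ?_⟩
  refine Set.Subset.antisymm (fun x hx f hf => hf x hx) ?_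
  intro p hp
  by_contra hpC
  obtain ⟨S, s1, s2, rfl⟩ := exists_decomp hC
  have : ∀ T : S, ∃ P : MvPolynomial (Fin n) K, (∀ q ∈ T.1, MvPolynomial.eval q P = 0) ∧ MvPolynomial.eval p P ≠ 0 :=
    fun T => affine (s2 T T.2).1 (s2 T T.2).2 fun h => hpC ⟨T, T.2, h⟩
  choose P hP1 hP2 using this
  haveI := s1.fintype
  have h1 := hp (∏ T, P T) (by
    rintro x ⟨T, hT, hx⟩
    rw [map_prod]
    exact Finset.prod_eq_zero (Finset.mem_univ ⟨T, hT⟩) (hP1 ⟨T, hT⟩ x hx))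
  rw [map_prod] at h1
  exact Finset.prod_ne_zero_iff.2 (fun T _ => hP2 T) h1

theorem cl_of_closed {n : ℕ} {C : Set (Fin n → K)} (hC : IsClosed[(ZG.Z : ZariskiGeometry K).τ n] C) : Cl C := by
  letI := (ZG.Z : ZariskiGeometry K).τ n
  letI := (ZG.Z : ZariskiGeometry K).τ (Var.n (Fin n → K))
  have h := (ZG.Z : ZariskiGeometry K).Z0_cont (Var.n (Fin n → K)) n
    (fun i => .inl (finProdFinEquiv (Fintype.equivFin (Fin n) i, (0 : Fin 1))))
  exact hC.preimage h

end Fin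
end ZGeo

/-- **Theorem 3** (affine rendering): if `K` is an algebraically closed field and `(τ_n)`
is a Zariski geometry on `K` refining the Zariski topology (every Zariski-closed subset
of `K^n` is `τ_n`-closed), then every `τ_n`-closed set is Zariski-closed; the two
topologies coincide on every power `K^n`. -/
theorem zariski_geometry_refining_zariski_topology_coincides
    {K : Type*} [Field K] [IsAlgClosed K] (Z : ZariskiGeometry K)
    (hrefine : ∀ (n : ℕ) (C : Set (Fin n → K)), ZariskiClosedSet K C → IsClosed[Z.τ n] C) :
    ∀ (n : ℕ), (∀ C : Set (Fin n → K), IsClosed[Z.τ n] C → ZariskiClosedSet K C) ∧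
      Z.τ n = zariskiTopology K n := by
  intro n
  letI : ZGeo.ZG K := ⟨Z, hrefine, IsAlgClosed.instInfinite⟩
  have h1 : ∀ C : Set (Fin n → K), IsClosed[Z.τ n] C → ZariskiClosedSet K C :=
    fun C hC => ZGeo.zar_closed (ZGeo.cl_of_closed hC)
  refine ⟨h1, le_antisymm ?_ ?_⟩
  · refine le_generateFrom fun U hU => ?_
    exact (@isClosed_compl_iff _ (Z.τ n) U).1 (hrefine n _ hU)
  · intro U hU
    refine TopologicalSpace.isOpen_generateFrom_of_mem ?_
    exact h1 _ ((@isClosed_compl_iff _ (Z.τ n) U).2 hU)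
end

section
/- Let K be an algebraically closed field, let C ⊆ K^n be Zariski-closed, and let π : K^n → K^k be a coordinate projection. Then there exists a Zariski-closed set F, properly contained in the Zariski closure of π(C), such that cl(π(C)) \ F ⊆ π(C); that is, the image π(C) contains the complement in its closure of a proper closed subset. -/
open Topology

theorem aux_zariskiClosed_of_isOpen {K : Type*} [Field K] {n : ℕ} {U : Set (Fin n → K)}
    (hU : IsOpen[zariskiTopology K n] U) : ZariskiClosedSet K Uᶜ := by
  have hU' : TopologicalSpace.GenerateOpen {U : Set (Fin n → K) | ZariskiClosedSet K Uᶜ} U := hU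
  clear hU
  induction hU' with
  | basic s hs => exact hs
  | univ => exact ⟨{1}, by ext; simp⟩
  | inter s t _ _ hs ht =>
    obtain ⟨S, hS⟩ := hs
    obtain ⟨T, hT⟩ := ht
    refine ⟨{p | ∃ f ∈ S, ∃ g ∈ T, p = f * g}, ?_⟩
    rw [Set.compl_inter, hS, hT]
    ext x
    simp only [Set.mem_union, Set.mem_setOf_eq]
    constructor
    · rintro (h | h) _ ⟨f, hf, g, hg, rfl⟩
      · simp [h f hf]
      · simp [h g hg]
    · intro h
      by_contra hcon
      push Not at hcon
      obtain ⟨⟨f, hf, hf0⟩, g, hg, hg0⟩ := hcon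
      have := h _ ⟨f, hf, g, hg, rfl⟩
      rw [map_mul] at this
      exact mul_ne_zero hf0 hg0 this
  | sUnion 𝒰 _ ih =>
    choose! S hS using ih
    refine ⟨⋃ s ∈ 𝒰, S s, ?_⟩
    ext x
    have key : ∀ s ∈ 𝒰, (x ∉ s ↔ ∀ f ∈ S s, MvPolynomial.eval x f = 0) := by
      intro s hs
      rw [← Set.mem_compl_iff, hS s hs]
      rfl
    simp only [Set.mem_compl_iff, Set.mem_sUnion, Set.mem_setOf_eq, Set.mem_iUnion]
    constructor
    · rintro h f ⟨s, hs, hf⟩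
      exact (key s hs).1 (fun hx => h ⟨s, hs, hx⟩) f hf
    · rintro h ⟨s, hs, hx⟩
      exact (key s hs).2 (fun f hf => h f ⟨s, hs, hf⟩) hx

theorem aux_isClosed {K : Type*} [Field K] {n : ℕ} {C : Set (Fin n → K)}
    (hC : ZariskiClosedSet K C) : IsClosed[zariskiTopology K n] C := by
  letI := zariskiTopology K n
  rw [← isOpen_compl_iff]
  exact TopologicalSpace.isOpen_generateFrom_of_mem (by simpa using hC)

theorem aux_constructible {X ι : Type*} [TopologicalSpace X] (s : Finset ι) (O Z : ι → Set X)
    (hO : ∀ i, IsOpen (O i)) (hZ : ∀ i, IsClosed (Z i)) :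
    ∀ U : Set X, IsOpen U → (U ∩ ⋃ i ∈ s, Z i ∩ O i).Nonempty →
      ∃ V, IsOpen V ∧ (V ∩ ⋃ i ∈ s, Z i ∩ O i).Nonempty ∧
        V ∩ closure (⋃ i ∈ s, Z i ∩ O i) ⊆ (⋃ i ∈ s, Z i ∩ O i) ∩ U := by
  classical
  induction s using Finset.induction_on with
  | empty => intro U _ h; simp at h
  | insert i s _ ih =>
    intro U hU hne
    rw [Finset.set_biUnion_insert] at hne ⊢
    set T := ⋃ i ∈ s, Z i ∩ O i
    set L := Z i ∩ O i with hL
    have hLZ : closure L ⊆ Z i := closure_minimal Set.inter_subset_left (hZ i)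
    by_cases h : ((U \ closure L) ∩ T).Nonempty
    · obtain ⟨V, hV, hVne, hVs⟩ := ih _ (hU.sdiff isClosed_closure) h
      refine ⟨V \ closure L, hV.sdiff isClosed_closure, ?_, ?_⟩
      · obtain ⟨x, hxV, hxT⟩ := hVne
        exact ⟨x, ⟨hxV, (hVs ⟨hxV, subset_closure hxT⟩).2.2⟩, Or.inr hxT⟩
      · rintro x ⟨⟨hxV, hxL⟩, hx⟩
        rw [closure_union] at hx
        have := hVs ⟨hxV, hx.resolve_left hxL⟩
        exact ⟨Or.inr this.1, this.2.1⟩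
    · have hsub : U ∩ T ⊆ closure L := by
        rintro x ⟨hxU, hxT⟩
        by_contra hx
        exact h ⟨x, ⟨hxU, hx⟩, hxT⟩
      have hsub' : U ∩ closure T ⊆ closure L :=
        hU.inter_closure.trans (closure_minimal hsub isClosed_closure)
      have hUL : (U ∩ L).Nonempty := by
        obtain ⟨x, hxU, hx⟩ := hne
        have hx' : x ∈ closure L := hx.elim (fun h => subset_closure h) (fun h => hsub ⟨hxU, h⟩)
        exact mem_closure_iff.1 hx' U hU hxU
      refine ⟨U ∩ O i, hU.inter (hO i), ?_, ?_⟩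
      · obtain ⟨x, hxU, hx⟩ := hUL
        exact ⟨x, ⟨hxU, hx.2⟩, Or.inl hx⟩
      · rintro x ⟨⟨hxU, hxO⟩, hx⟩
        rw [closure_union] at hx
        have hx' : x ∈ closure L := hx.elim id (fun h => hsub' ⟨hxU, h⟩)
        exact ⟨Or.inl ⟨hLZ hx', hxO⟩, hxU⟩

open MvPolynomial in
theorem aux_image {K : Type*} [Field K] [IsAlgClosed K] {n k : ℕ} (e : Fin k → Fin n)
    (I : Ideal (MvPolynomial (Fin n) K)) (y : Fin k → K) :
    y ∈ (fun x : Fin n → K => x ∘ e) '' MvPolynomial.zeroLocus K I ↔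
      (pointToPoint y : PrimeSpectrum (MvPolynomial (Fin k) K)) ∈
        PrimeSpectrum.comap (rename e : MvPolynomial (Fin k) K →ₐ[K] _).toRingHom ''
          PrimeSpectrum.zeroLocus (I : Set (MvPolynomial (Fin n) K)) := by
  constructor
  · rintro ⟨x, hx, rfl⟩
    refine ⟨pointToPoint x, pointToPoint_zeroLocus_le I ⟨x, hx, rfl⟩, ?_⟩
    ext p
    simp [pointToPoint, aeval_rename]
  · rintro ⟨Q, hQ, hQy⟩
    obtain ⟨M, hM, hQM⟩ := Ideal.exists_le_maximal Q.asIdeal Q.2.ne_top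
    obtain ⟨x, rfl⟩ := eq_vanishingIdeal_singleton_of_isMaximal K hM
    refine ⟨x, fun p hp => hQM (hQ hp) x rfl, ?_⟩
    ext i
    have h1 : (X i - C (y i) : MvPolynomial (Fin k) K) ∈
        (pointToPoint y : PrimeSpectrum (MvPolynomial (Fin k) K)).asIdeal := by
      simp [pointToPoint]
    rw [← hQy] at h1
    have h2 := hQM h1 x rfl
    simpa [sub_eq_zero] using h2

theorem aux_chevalley {K : Type*} [Field K] {n k : ℕ} (e : Fin k → Fin n)
    (I : Ideal (MvPolynomial (Fin n) K)) :
    Topology.IsConstructible (PrimeSpectrum.comap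
      (MvPolynomial.rename e : MvPolynomial (Fin k) K →ₐ[K] _).toRingHom ''
          PrimeSpectrum.zeroLocus (I : Set (MvPolynomial (Fin n) K))) := by
  apply PrimeSpectrum.isConstructible_comap_image
  · apply RingHom.FinitePresentation.of_finiteType.mp
    have : ((MvPolynomial.rename e : MvPolynomial (Fin k) K →ₐ[K] MvPolynomial (Fin n) K).toRingHom.comp
        (algebraMap K _)).FiniteType := by
      rw [AlgHom.toRingHom_eq_coe, AlgHom.comp_algebraMap]
      exact RingHom.finiteType_algebraMap.mpr inferInstance
    exact this.of_comp_finiteType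
  · rw [← Topology.isConstructible_compl]
    exact (PrimeSpectrum.isRetrocompact_zeroLocus_compl_of_fg
      (IsNoetherian.noetherian I)).isConstructible
      (PrimeSpectrum.isClosed_zeroLocus _).isOpen_compl

/-- Axiom (Z1) for affine space over an algebraically closed field: if `C ⊆ K^n` is a
(nonempty) Zariski-closed set and `π : K^n → K^k` is a coordinate projection, then there
is a Zariski-closed set `F`, properly contained in the Zariski closure of `π(C)`, with
`cl(π C) \ F ⊆ π(C)`. -/
theorem affine_Z1 {K : Type*} [Field K] [IsAlgClosed K] {n k : ℕ} (h : k ≤ n)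
    (C : Set (Fin n → K)) (hC : ZariskiClosedSet K C) (hne : C.Nonempty)
    (π : (Fin n → K) → (Fin k → K)) (hπ : π = fun x => x ∘ Fin.castLE h) :
    ∃ F : Set (Fin k → K), ZariskiClosedSet K F ∧
      F ⊂ closure[zariskiTopology K k] (π '' C) ∧
      closure[zariskiTopology K k] (π '' C) \ F ⊆ π '' C := by
  obtain ⟨S, hS⟩ := hC
  have hCI : C = MvPolynomial.zeroLocus K (Ideal.span S) := by
    rw [hS, MvPolynomial.zeroLocus_span]
    rfl
  obtain ⟨D, hD⟩ := PrimeSpectrum.exists_constructibleSetData_iff.mpr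
    (aux_chevalley (Fin.castLE h) (Ideal.span S))
  letI := zariskiTopology K k
  let Z : PrimeSpectrum.BasicConstructibleSetData (MvPolynomial (Fin k) K) → Set (Fin k → K) :=
    fun c => {x | ∀ f ∈ Set.range c.g, MvPolynomial.eval x f = 0}
  let O : PrimeSpectrum.BasicConstructibleSetData (MvPolynomial (Fin k) K) → Set (Fin k → K) :=
    fun c => {x | ∀ f ∈ ({c.f} : Set (MvPolynomial (Fin k) K)), MvPolynomial.eval x f = 0}ᶜ
  have hT : π '' C = ⋃ c ∈ D, Z c ∩ O c := by
    ext y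
    rw [hπ, hCI, aux_image, ← hD]
    simp only [PrimeSpectrum.ConstructibleSetData.toSet,
      PrimeSpectrum.BasicConstructibleSetData.toSet, Set.mem_iUnion, exists_prop]
    refine exists_congr fun c => and_congr_right fun _ => ?_
    have key : ∀ A : Set (MvPolynomial (Fin k) K),
        (MvPolynomial.pointToPoint y : PrimeSpectrum (MvPolynomial (Fin k) K)) ∈
          PrimeSpectrum.zeroLocus A ↔ ∀ f ∈ A, MvPolynomial.eval y f = 0 := by
      intro A
      simp [PrimeSpectrum.mem_zeroLocus, MvPolynomial.pointToPoint, Set.subset_def,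
        MvPolynomial.aeval_eq_eval]
    rw [Set.mem_sdiff, key, key]
    rfl
  obtain ⟨V, hV, hVne, hVs⟩ := aux_constructible D O Z
    (fun c => (aux_isClosed ⟨_, rfl⟩).isOpen_compl) (fun c => aux_isClosed ⟨_, rfl⟩)
    Set.univ isOpen_univ (by rw [← hT, Set.univ_inter]; exact hne.image π)
  rw [← hT] at hVne hVs
  refine ⟨closure (π '' C) \ V, ?_, ?_, ?_⟩
  · have hcl : IsClosed (closure (π '' C) \ V) := isClosed_closure.sdiff hV
    have := aux_zariskiClosed_of_isOpen hcl.isOpen_compl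
    rwa [compl_compl] at this
  · refine ⟨Set.sdiff_subset, fun hcon => ?_⟩
    obtain ⟨x, hxV, hx⟩ := hVne
    exact (hcon (subset_closure hx)).2 hxV
  · rintro x ⟨hx, hxF⟩
    have hxV : x ∈ V := by
      by_contra hxV
      exact hxF ⟨hx, hxV⟩
    exact (hVs ⟨hxV, hx⟩).1
end
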